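/- arXiv:0908.3274 — 2 statements merged into one kernel-verified Lean document; each statement's English description precedes it below -/
import Mathlib

section
/- (Solution of the Björling problem: uniqueness.) Let J ⊆ ℝ be an open interval, f₀ : J → su(2) a regular real analytic curve, v : J → su(2) a nonvanishing real analytic vector field with ⟨v, f₀′⟩ = 0, and H ≠ 0 real. Suppose f : Σ → su(2) and f̃ : Σ̃ → su(2) are two smooth conformal immersions of constant mean curvature H, defined on open sets Σ, Σ̃ ⊆ ℂ containing J × {0}, such that f(x,0) = f̃(x,0) = f₀(x) for all x ∈ J and both ∂_y f(x,0) and ∂_y f̃(x,0) are positive scalar multiples of v(x) for each x ∈ J. Then for every x₀ ∈ J there exist ε, δ > 0 such that f = f̃ on the neighbourhood (x₀-ε, x₀+ε) × (-δ, δ) of (x₀,0). -/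
open Matrix Complex

noncomputable section

attribute [local instance] Matrix.linftyOpNormedAddCommGroup Matrix.linftyOpNormedSpace
  Matrix.linftyOpNormedRing Matrix.linftyOpNormedAlgebra

/-- The space of 2×2 complex matrices. -/
abbrev M2 : Type := Matrix (Fin 2) (Fin 2) ℂ

/-- Basis vector `e₁` of su(2). -/
def e1 : M2 := !![0, -Complex.I; -Complex.I, 0]

/-- Basis vector `e₂` of su(2). -/
def e2 : M2 := !![0, 1; -1, 0]

/-- Basis vector `e₃` of su(2). -/
def e3 : M2 := !![Complex.I, 0; 0, -Complex.I]

/-- The inner product `⟨X,Y⟩ = -(1/2) tr (XY)` identifying su(2) with E³. -/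
def ip (X Y : M2) : ℂ := -(1/2 : ℂ) * (X * Y).trace

/-- Partial derivative in the `x`-direction. -/
def px (f : ℂ → M2) (z : ℂ) : M2 := fderiv ℝ f z 1

/-- Partial derivative in the `y`-direction. -/
def py (f : ℂ → M2) (z : ℂ) : M2 := fderiv ℝ f z Complex.I

/-- Wirtinger derivative `∂_z = (1/2)(∂_x - i ∂_y)`. -/
def dz (f : ℂ → M2) (z : ℂ) : M2 := (2:ℂ)⁻¹ • (px f z - Complex.I • py f z)

/-- Wirtinger derivative `∂_z̄ = (1/2)(∂_x + i ∂_y)`. -/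
def dzb (f : ℂ → M2) (z : ℂ) : M2 := (2:ℂ)⁻¹ • (px f z + Complex.I • py f z)

/-- `x`-derivative of a real-valued function on ℂ. -/
def pxR (u : ℂ → ℝ) (z : ℂ) : ℝ := fderiv ℝ u z 1

/-- `y`-derivative of a real-valued function on ℂ. -/
def pyR (u : ℂ → ℝ) (z : ℂ) : ℝ := fderiv ℝ u z Complex.I

/-- Wirtinger derivative `u_z` of a real-valued function. -/
def dzR (u : ℂ → ℝ) (z : ℂ) : ℂ := (2:ℂ)⁻¹ * ((pxR u z : ℂ) - Complex.I * (pyR u z : ℂ))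

/-- Wirtinger derivative `u_z̄` of a real-valued function. -/
def dzbR (u : ℂ → ℝ) (z : ℂ) : ℂ := (2:ℂ)⁻¹ * ((pxR u z : ℂ) + Complex.I * (pyR u z : ℂ))

/-- `x`-derivative of a complex-valued function on ℂ. -/
def pxC (q : ℂ → ℂ) (z : ℂ) : ℂ := fderiv ℝ q z 1

/-- `y`-derivative of a complex-valued function on ℂ. -/
def pyC (q : ℂ → ℂ) (z : ℂ) : ℂ := fderiv ℝ q z Complex.I

/-- Wirtinger derivative `∂_z` of a complex-valued function. -/
def dzC (q : ℂ → ℂ) (z : ℂ) : ℂ := (2:ℂ)⁻¹ * (pxC q z - Complex.I * pyC q z)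

/-- Wirtinger derivative `∂_z̄` of a complex-valued function. -/
def dzbC (q : ℂ → ℂ) (z : ℂ) : ℂ := (2:ℂ)⁻¹ * (pxC q z + Complex.I * pyC q z)

/-- `IsCMCImmersion S H f` says that `f` is a smooth su(2)-valued conformal immersion on
`S` which has constant mean curvature `H`: there are a smooth conformal factor `u` and a
smooth `SU(2)` coordinate frame `F` (so that `N = F e₃ F⁻¹` is the unit normal) with
`(1/8) e^{-2u} ⟨f_xx + f_yy, N⟩ = H`. -/
def IsCMCImmersion (S : Set ℂ) (H : ℝ) (f : ℂ → M2) : Prop :=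
  ContDiffOn ℝ (⊤ : ℕ∞) f S ∧
  (∀ z ∈ S, (f z)ᴴ = -(f z) ∧ (f z).trace = 0) ∧
  ∃ u : ℂ → ℝ, ContDiffOn ℝ (⊤ : ℕ∞) u S ∧
    (∀ z ∈ S,
      ip (px f z) (px f z) = ((4 * Real.exp (2 * u z) : ℝ) : ℂ) ∧
      ip (py f z) (py f z) = ((4 * Real.exp (2 * u z) : ℝ) : ℂ) ∧
      ip (px f z) (py f z) = 0) ∧
    ∃ F : ℂ → M2, ContDiffOn ℝ (⊤ : ℕ∞) F S ∧
      ∀ z ∈ S, (F z)ᴴ * F z = 1 ∧ (F z).det = 1 ∧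
        F z * e1 * (F z)⁻¹ = (((2 * Real.exp (u z))⁻¹ : ℝ) : ℂ) • px f z ∧
        F z * e2 * (F z)⁻¹ = (((2 * Real.exp (u z))⁻¹ : ℝ) : ℂ) • py f z ∧
        ip (px (px f) z + py (py f) z) (F z * e3 * (F z)⁻¹)
          = ((8 * Real.exp (2 * u z) * H : ℝ) : ℂ)

/-!
Conformality and constant mean curvature give the equation `Δf = 2 H f_x f_y` (matrix product), so
the difference `w` of two solutions satisfies `‖Δw‖ ≤ C (‖w_x‖ + ‖w_y‖)` locally. Along the real
line `f_x` is determined by `f₀`, and conformality fixes the length of `f_y`, whose direction is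
that of `v`; hence `w`, `w_x` and `w_y` vanish there. Uniqueness for this Cauchy problem follows
from a Carleman inequality for the curl-free pair `(w_x, w_y)`,
`τ ∫ e^{2τψ} Δψ (‖w_x‖² + ‖w_y‖²) ≤ ∫ e^{2τψ} ‖Δw‖² + O(1 + τ)`,
on a box having the real line as one side: `ψ` is subharmonic, positive near the centre of that side
and nonpositive on the other three sides. For large `τ` the left-hand side absorbs `‖Δw‖²`, and
letting `τ → ∞` forces the gradient of `w` to vanish where `ψ > 0`.
-/

section DirectionalDerivatives

variable {F E : Type*} [NormedAddCommGroup F] [NormedSpace ℝ F]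
  [NormedAddCommGroup E] [NormedSpace ℝ E] {g : F → E} {z : F}

theorem contDiffAt_fderiv_apply {m n : WithTop ℕ∞} (hg : ContDiffAt ℝ n g z) (hmn : m + 1 ≤ n)
    (u : F) : ContDiffAt ℝ m (fun z ↦ fderiv ℝ g z u) z :=
  (hg.fderiv_right hmn).clm_apply contDiffAt_const

/-- The Laplacian of `g` in the plane spanned by `u` and `v`, with `u, v` regarded as orthonormal;
the domain needs no inner product, so that it can be `ℝ × ℝ`, where the divergence theorem is
available, as well as `ℂ`. -/
def planarLaplacian (u v : F) (g : F → E) (z : F) : E :=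
  fderiv ℝ (fun z ↦ fderiv ℝ g z u) z u + fderiv ℝ (fun z ↦ fderiv ℝ g z v) z v

theorem continuousOn_fderiv_apply {s : Set F} (hg : ∀ z ∈ s, ContDiffAt ℝ 1 g z) (u : F) :
    ContinuousOn (fun z ↦ fderiv ℝ g z u) s := fun z hz ↦
  (contDiffAt_fderiv_apply (m := 0) (hg z hz) (by simp) u).continuousAt.continuousWithinAt

theorem continuousOn_planarLaplacian {s : Set F} (hg : ∀ z ∈ s, ContDiffAt ℝ 2 g z) (u v : F) :
    ContinuousOn (planarLaplacian u v g) s :=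
  have hgg (u : F) := continuousOn_fderiv_apply
    (fun z hz ↦ contDiffAt_fderiv_apply (m := 1) (hg z hz) (by norm_num) u) u
  (hgg u).add (hgg v)

theorem planarLaplacian_const_mul {ψ : F → ℝ} (hψ : ContDiff ℝ 2 ψ) (c : ℝ) (u v z : F) :
    planarLaplacian u v (fun z ↦ c * ψ z) z = c * planarLaplacian u v ψ z := by
  have hd (u z : F) : fderiv ℝ (fun z ↦ c * ψ z) z u = c * fderiv ℝ ψ z u := by
    rw [fderiv_const_mul (hψ.differentiable two_ne_zero z), _root_.smul_apply, smul_eq_mul]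
  have hdd (u : F) : fderiv ℝ (fun z ↦ c * fderiv ℝ ψ z u) z u
      = c * fderiv ℝ (fun z ↦ fderiv ℝ ψ z u) z u := by
    rw [fderiv_const_mul ((contDiffAt_fderiv_apply (m := 1) hψ.contDiffAt
      (by norm_num) u).differentiableAt one_ne_zero), _root_.smul_apply, smul_eq_mul]
  simp only [planarLaplacian, hd, hdd, mul_add]

theorem fderiv_fderiv_apply_comm (hg : ContDiffAt ℝ 2 g z) (u v : F) :
    fderiv ℝ (fun z ↦ fderiv ℝ g z u) z v = fderiv ℝ (fun z ↦ fderiv ℝ g z v) z u := by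
  have hd : DifferentiableAt ℝ (fderiv ℝ g) z :=
    (hg.fderiv_right (m := 1) (by norm_num)).differentiableAt one_ne_zero
  rw [fderiv_clm_apply hd (by fun_prop), fderiv_clm_apply hd (by fun_prop)]
  simpa using hg.isSymmSndFDerivAt (by simp) v u

end DirectionalDerivatives

section CarlemanIdentity

open scoped InnerProductSpace

variable {F E : Type*} [NormedAddCommGroup F] [NormedSpace ℝ F]
  [NormedAddCommGroup E] [InnerProductSpace ℝ E] {φ : F → ℝ} {p q : F → E} {z : F}

/-- The `u`-component of the Carleman flux of the pair `(p, q)` in the plane spanned by `u, v`, for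
the weight `exp (2 φ)`. The `v`-component is `carlemanFlux φ (-p) q v u`. -/
def carlemanFlux (φ : F → ℝ) (p q : F → E) (u v z : F) : ℝ :=
  Real.exp (2 * φ z) * (2 * ⟪p z, fderiv ℝ q z v + fderiv ℝ φ z v • q z⟫_ℝ
    - fderiv ℝ φ z u * (‖p z‖ ^ 2 + ‖q z‖ ^ 2))

theorem contDiffAt_carlemanFlux (hφ : ContDiffAt ℝ 2 φ z) (hp : ContDiffAt ℝ 2 p z)
    (hq : ContDiffAt ℝ 2 q z) (u v : F) : ContDiffAt ℝ 1 (carlemanFlux φ p q u v) z := by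
  have hφu := contDiffAt_fderiv_apply (m := 1) hφ (by norm_num) u
  have hφv := contDiffAt_fderiv_apply (m := 1) hφ (by norm_num) v
  have hqv := contDiffAt_fderiv_apply (m := 1) hq (by norm_num) v
  replace hφ : ContDiffAt ℝ 1 φ z := hφ.of_le (by norm_num)
  replace hp : ContDiffAt ℝ 1 p z := hp.of_le (by norm_num)
  replace hq : ContDiffAt ℝ 1 q z := hq.of_le (by norm_num)
  exact (contDiffAt_const.mul hφ).exp.mul ((contDiffAt_const.mul
    (hp.inner ℝ (hqv.add (hφv.smul hq)))).sub (hφu.mul ((hp.norm_sq ℝ).add (hq.norm_sq ℝ))))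

theorem fderiv_carlemanFlux_apply (hφ : ContDiffAt ℝ 2 φ z) (hp : DifferentiableAt ℝ p z)
    (hq : ContDiffAt ℝ 2 q z) (u v : F) :
    fderiv ℝ (carlemanFlux φ p q u v) z u = Real.exp (2 * φ z) *
      (2 * fderiv ℝ φ z u * (2 * ⟪p z, fderiv ℝ q z v + fderiv ℝ φ z v • q z⟫_ℝ
          - fderiv ℝ φ z u * (‖p z‖ ^ 2 + ‖q z‖ ^ 2))
        + 2 * ⟪fderiv ℝ p z u, fderiv ℝ q z v + fderiv ℝ φ z v • q z⟫_ℝ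
        + 2 * ⟪p z, fderiv ℝ (fun z ↦ fderiv ℝ q z v) z u
          + fderiv ℝ (fun z ↦ fderiv ℝ φ z v) z u • q z + fderiv ℝ φ z v • fderiv ℝ q z u⟫_ℝ
        - fderiv ℝ (fun z ↦ fderiv ℝ φ z u) z u * (‖p z‖ ^ 2 + ‖q z‖ ^ 2)
        - 2 * fderiv ℝ φ z u * (⟪p z, fderiv ℝ p z u⟫_ℝ + ⟪q z, fderiv ℝ q z u⟫_ℝ)) := by
  have hφu := ((contDiffAt_fderiv_apply (m := 1) hφ (by norm_num) u).differentiableAt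
    one_ne_zero).hasFDerivAt
  have hφv := ((contDiffAt_fderiv_apply (m := 1) hφ (by norm_num) v).differentiableAt
    one_ne_zero).hasFDerivAt
  have hqv := ((contDiffAt_fderiv_apply (m := 1) hq (by norm_num) v).differentiableAt
    one_ne_zero).hasFDerivAt
  have hφ' := (hφ.differentiableAt two_ne_zero).hasFDerivAt
  have hp' := hp.hasFDerivAt
  have hq' := (hq.differentiableAt two_ne_zero).hasFDerivAt
  have hflux : HasFDerivAt (carlemanFlux φ p q u v) _ z := (hφ'.const_mul 2).exp.mul
    (((hp'.inner ℝ (hqv.add (hφv.smul hq'))).const_mul 2).sub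
      (hφu.mul (hp'.norm_sq.add hq'.norm_sq)))
  rw [hflux.fderiv]
  simp only [Pi.add_apply, Pi.smul_apply', smul_add, inner_add_right, inner_smul_right,
    _root_.add_apply, _root_.smul_apply, _root_.sub_apply, ContinuousLinearMap.comp_apply,
    ContinuousLinearMap.prod_apply, ContinuousLinearMap.smulRight_apply, fderivInnerCLM_apply,
    smul_eq_mul, coe_innerSL_apply, nsmul_eq_mul, Nat.cast_ofNat]
  ring

/- With `x = pu + a p - b q`, `y = qv + b q - a p` and `s = qu + b p + a q` one has
`x + y = pu + qv`, and everything on the left except the squares adds up to `2 (⟪x, y⟫ - ‖s‖²)`,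
twice the determinant of the symmetric matrix with rows `(x, s)` and `(s, y)`. For the first
derivatives of a gradient field, weighted by `exp (2 φ)`, this is a divergence plus `Δφ` times the
weighted square of the field. -/
theorem carleman_sum_of_squares (p q pu qu qv : E) (a b : ℝ) :
    2 * a * (2 * ⟪p, qv + b • q⟫_ℝ - a * (‖p‖ ^ 2 + ‖q‖ ^ 2)) + 2 * ⟪pu, qv + b • q⟫_ℝ
      + 2 * b * ⟪p, qu⟫_ℝ - 2 * a * (⟪p, pu⟫_ℝ + ⟪q, qu⟫_ℝ)
      - 2 * b * (2 * ⟪p, qu + a • q⟫_ℝ + b * (‖p‖ ^ 2 + ‖q‖ ^ 2)) - 2 * ⟪qu, qu + a • q⟫_ℝ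
      - 2 * a * ⟪p, qv⟫_ℝ - 2 * b * (⟪p, qu⟫_ℝ + ⟪q, qv⟫_ℝ)
      + (‖pu + a • p - b • q‖ ^ 2 + ‖qv + b • q - a • p‖ ^ 2 + 2 * ‖qu + b • p + a • q‖ ^ 2)
      = ‖pu + qv‖ ^ 2 := by
  simp only [← real_inner_self_eq_norm_sq, inner_add_left, inner_add_right, inner_sub_left,
    inner_sub_right, inner_smul_left, inner_smul_right, conj_trivial]
  simp only [real_inner_comm p, real_inner_comm q qu, real_inner_comm q qv, real_inner_comm q pu,
    real_inner_comm pu qv]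
  ring

theorem carleman_pointwise (hφ : ContDiffAt ℝ 2 φ z) (hp : DifferentiableAt ℝ p z)
    (hq : ContDiffAt ℝ 2 q z) {u v : F} (hcurl : fderiv ℝ p z v = fderiv ℝ q z u) :
    fderiv ℝ (carlemanFlux φ p q u v) z u + fderiv ℝ (carlemanFlux φ (-p) q v u) z v
      + Real.exp (2 * φ z) * planarLaplacian u v φ z * (‖p z‖ ^ 2 + ‖q z‖ ^ 2)
      ≤ Real.exp (2 * φ z) * ‖fderiv ℝ p z u + fderiv ℝ q z v‖ ^ 2 := by
  rw [fderiv_carlemanFlux_apply hφ hp hq, fderiv_carlemanFlux_apply hφ hp.neg hq,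
    fderiv_fderiv_apply_comm hφ u v, fderiv_fderiv_apply_comm hq u v,
    ← carleman_sum_of_squares (p z) (q z) _ (fderiv ℝ q z u) _ (fderiv ℝ φ z u) (fderiv ℝ φ z v)]
  have hsq : 0 ≤ Real.exp (2 * φ z) * (‖fderiv ℝ p z u + fderiv ℝ φ z u • p z
      - fderiv ℝ φ z v • q z‖ ^ 2 + ‖fderiv ℝ q z v + fderiv ℝ φ z v • q z
      - fderiv ℝ φ z u • p z‖ ^ 2 + 2 * ‖fderiv ℝ q z u + fderiv ℝ φ z v • p z
      + fderiv ℝ φ z u • q z‖ ^ 2) := by positivity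
  simp only [fderiv_neg, Pi.neg_apply, _root_.neg_apply, norm_neg, inner_neg_left,
    inner_neg_right, neg_neg, hcurl, inner_add_right, inner_smul_right, planarLaplacian] at hsq ⊢
  linarith

end CarlemanIdentity

section LaplaceMethod

open Filter MeasureTheory Set Topology

variable {X : Type*} [TopologicalSpace X] [T2Space X] [MeasurableSpace X] [OpensMeasurableSpace X]
  {μ : Measure X} [IsFiniteMeasureOnCompacts μ] {R : Set X}

theorem setIntegral_exp_mul_mono (hR : IsCompact R) {φ g h : X → ℝ} (hφ : ContinuousOn φ R)
    (hg : ContinuousOn g R) (hh : ContinuousOn h R) (hgh : ∀ z ∈ R, g z ≤ h z) :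
    ∫ z in R, Real.exp (2 * φ z) * g z ∂μ ≤ ∫ z in R, Real.exp (2 * φ z) * h z ∂μ :=
  setIntegral_mono_on (ContinuousOn.integrableOn_compact hR (by fun_prop))
    (ContinuousOn.integrableOn_compact hR (by fun_prop)) hR.measurableSet fun z hz ↦
      mul_le_mul_of_nonneg_left (hgh z hz) (Real.exp_pos _).le

theorem eq_zero_of_eventually_integral_exp_mul_le [μ.IsOpenPosMeasure] (hR : IsCompact R)
    {ψ N : X → ℝ} (hψ : ContinuousOn ψ R) (hN : ContinuousOn N R) (hN0 : ∀ z ∈ R, 0 ≤ N z) {K : ℝ}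
    (hK : ∀ᶠ τ : ℝ in atTop, ∫ z in R, Real.exp (2 * (τ * ψ z)) * N z ∂μ ≤ K)
    {z : X} (hz : z ∈ interior R) (hψz : 0 < ψ z) : N z = 0 := by
  set O : Set X := interior R ∩ ψ ⁻¹' Ioi (ψ z / 2)
  have hO : IsOpen O := (hψ.mono interior_subset).isOpen_inter_preimage isOpen_interior isOpen_Ioi
  have hOR : O ⊆ R := inter_subset_left.trans interior_subset
  have hNO : IntegrableOn N O μ := (hN.integrableOn_compact hR).mono_set hOR
  have hdecay : ∀ᶠ τ : ℝ in atTop, ∫ z in O, N z ∂μ ≤ K * Real.exp (-(τ * ψ z)) := by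
    filter_upwards [hK, eventually_ge_atTop 0] with τ hτK hτ
    have hint : IntegrableOn (fun z ↦ Real.exp (2 * (τ * ψ z)) * N z) R μ :=
      ContinuousOn.integrableOn_compact hR (by fun_prop)
    rw [Real.exp_neg, ← div_eq_mul_inv, le_div_iff₀' (Real.exp_pos _), ← integral_const_mul]
    calc ∫ ζ in O, Real.exp (τ * ψ z) * N ζ ∂μ
        ≤ ∫ ζ in O, Real.exp (2 * (τ * ψ ζ)) * N ζ ∂μ := by
          refine setIntegral_mono_on (hNO.const_mul _) (hint.mono_set hOR) hO.measurableSet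
            fun ζ hζ ↦ mul_le_mul_of_nonneg_right (Real.exp_le_exp.2 ?_) (hN0 ζ (hOR hζ))
          have hψζ : ψ z / 2 < ψ ζ := hζ.2
          nlinarith
      _ ≤ ∫ ζ in R, Real.exp (2 * (τ * ψ ζ)) * N ζ ∂μ :=
          setIntegral_mono_set hint
            ((ae_restrict_iff' hR.measurableSet).2 <| ae_of_all _ fun ζ hζ ↦
              mul_nonneg (Real.exp_pos _).le (hN0 ζ hζ)) hOR.eventuallyLE
      _ ≤ K := hτK
  have hlim : Tendsto (fun τ : ℝ ↦ K * Real.exp (-(τ * ψ z))) atTop (𝓝 0) := by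
    simpa using (Real.tendsto_exp_neg_atTop_nhds_zero.comp
      (tendsto_id.atTop_mul_const hψz)).const_mul K
  have hN0O : 0 ≤ᵐ[μ.restrict O] N :=
    (ae_restrict_iff' hO.measurableSet).2 <| ae_of_all _ fun ζ hζ ↦ hN0 ζ (hOR hζ)
  have hzero : ∫ z in O, N z ∂μ = 0 :=
    (ge_of_tendsto hlim hdecay).antisymm (integral_nonneg_of_ae hN0O)
  exact Measure.eqOn_open_of_ae_eq ((setIntegral_eq_zero_iff_of_nonneg_ae hN0O hNO).1 hzero) hO
    (hN.mono hOR) continuousOn_const ⟨hz, half_lt_self hψz⟩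

end LaplaceMethod

section CarlemanEstimate

open Filter MeasureTheory Set Topology
open scoped InnerProductSpace

variable {E : Type*} [NormedAddCommGroup E] [InnerProductSpace ℝ E] {p q : ℝ × ℝ → E}

theorem carleman_integral_le {φ : ℝ × ℝ → ℝ} {a b : ℝ × ℝ} (hab : a ≤ b)
    (hφ : ∀ z ∈ Icc a b, ContDiffAt ℝ 2 φ z) (hp : ∀ z ∈ Icc a b, ContDiffAt ℝ 2 p z)
    (hq : ∀ z ∈ Icc a b, ContDiffAt ℝ 2 q z)
    (hcurl : ∀ z ∈ Icc a b, fderiv ℝ p z (0, 1) = fderiv ℝ q z (1, 0)) :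
    ∫ z in Icc a b, Real.exp (2 * φ z) * planarLaplacian (1, 0) (0, 1) φ z
        * (‖p z‖ ^ 2 + ‖q z‖ ^ 2)
      ≤ (∫ z in Icc a b, Real.exp (2 * φ z) * ‖fderiv ℝ p z (1, 0) + fderiv ℝ q z (0, 1)‖ ^ 2)
        - ((((∫ x in a.1..b.1, carlemanFlux φ (-p) q (0, 1) (1, 0) (x, b.2))
            - ∫ x in a.1..b.1, carlemanFlux φ (-p) q (0, 1) (1, 0) (x, a.2))
          + ∫ y in a.2..b.2, carlemanFlux φ p q (1, 0) (0, 1) (b.1, y))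
          - ∫ y in a.2..b.2, carlemanFlux φ p q (1, 0) (0, 1) (a.1, y)) := by
  set R := Icc a b
  have hR : IsCompact R := isCompact_Icc
  set G₁ := carlemanFlux φ p q (1, 0) (0, 1)
  set G₂ := carlemanFlux φ (-p) q (0, 1) (1, 0)
  have hG₁ : ∀ z ∈ R, ContDiffAt ℝ 1 G₁ z := fun z hz ↦
    contDiffAt_carlemanFlux (hφ z hz) (hp z hz) (hq z hz) _ _
  have hG₂ : ∀ z ∈ R, ContDiffAt ℝ 1 G₂ z := fun z hz ↦
    contDiffAt_carlemanFlux (hφ z hz) (hp z hz).neg (hq z hz) _ _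
  have hsub : Ioo a.1 b.1 ×ˢ Ioo a.2 b.2 ⊆ R := fun z hz ↦
    ⟨⟨hz.1.1.le, hz.2.1.le⟩, ⟨hz.1.2.le, hz.2.2.le⟩⟩
  have hdiv_int : IntegrableOn (fun z ↦ fderiv ℝ G₁ z (1, 0) + fderiv ℝ G₂ z (0, 1)) R :=
    ContinuousOn.integrableOn_compact hR
      ((continuousOn_fderiv_apply hG₁ _).add (continuousOn_fderiv_apply hG₂ _))
  have hφc : ContinuousOn φ R := fun z hz ↦ (hφ z hz).continuousAt.continuousWithinAt
  have hpc : ContinuousOn p R := fun z hz ↦ (hp z hz).continuousAt.continuousWithinAt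
  have hqc : ContinuousOn q R := fun z hz ↦ (hq z hz).continuousAt.continuousWithinAt
  have hpu := continuousOn_fderiv_apply (fun z hz ↦ (hp z hz).of_le one_le_two) (1, 0)
  have hqv := continuousOn_fderiv_apply (fun z hz ↦ (hq z hz).of_le one_le_two) (0, 1)
  have hweight_int : IntegrableOn (fun z ↦ Real.exp (2 * φ z)
      * planarLaplacian (1, 0) (0, 1) φ z * (‖p z‖ ^ 2 + ‖q z‖ ^ 2)) R :=
    ContinuousOn.integrableOn_compact hR
      (((by fun_prop : ContinuousOn (fun z ↦ Real.exp (2 * φ z)) R).mul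
        (continuousOn_planarLaplacian hφ _ _)).mul (by fun_prop))
  rw [← integral_divergence_prod_Icc_of_hasFDerivAt_of_le G₁ G₂ (fderiv ℝ G₁) (fderiv ℝ G₂) a b hab
    (fun z hz ↦ (hG₁ z hz).continuousAt.continuousWithinAt)
    (fun z hz ↦ (hG₂ z hz).continuousAt.continuousWithinAt)
    (fun z hz ↦ ((hG₁ z (hsub hz)).differentiableAt one_ne_zero).hasFDerivAt)
    (fun z hz ↦ ((hG₂ z (hsub hz)).differentiableAt one_ne_zero).hasFDerivAt) hdiv_int,
    le_sub_iff_add_le', ← integral_add hdiv_int hweight_int]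
  exact setIntegral_mono_on (hdiv_int.add hweight_int)
    (ContinuousOn.integrableOn_compact hR (by fun_prop)) measurableSet_Icc fun z hz ↦
      carleman_pointwise (hφ z hz) ((hp z hz).differentiableAt two_ne_zero) (hq z hz) (hcurl z hz)

theorem exists_abs_carlemanFlux_le {F : Type*} [NormedAddCommGroup F] [NormedSpace ℝ F]
    {R : Set F} (hR : IsCompact R) {ψ : F → ℝ} {p q : F → E} (hψ : ∀ z ∈ R, ContDiffAt ℝ 1 ψ z)
    (hp : ContinuousOn p R) (hq : ∀ z ∈ R, ContDiffAt ℝ 1 q z) (u v : F) :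
    ∃ K, 0 ≤ K ∧ ∀ τ, 0 ≤ τ → ∀ z ∈ R, |carlemanFlux (fun z ↦ τ * ψ z) p q u v z|
      ≤ Real.exp (2 * (τ * ψ z)) * (K * (1 + τ)) := by
  have hψu := continuousOn_fderiv_apply hψ u
  have hψv := continuousOn_fderiv_apply hψ v
  have hqv := continuousOn_fderiv_apply hq v
  have hqc : ContinuousOn q R := fun z hz ↦ (hq z hz).continuousAt.continuousWithinAt
  obtain ⟨A, hA⟩ := hR.exists_bound_of_continuousOn
    (f := fun z ↦ 2 * ⟪p z, fderiv ℝ q z v⟫_ℝ) (continuousOn_const.mul (hp.inner hqv))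
  obtain ⟨B, hB⟩ := hR.exists_bound_of_continuousOn
    (f := fun z ↦ fderiv ℝ ψ z v * (2 * ⟪p z, q z⟫_ℝ)
      - fderiv ℝ ψ z u * (‖p z‖ ^ 2 + ‖q z‖ ^ 2))
    ((hψv.mul (continuousOn_const.mul (hp.inner hqc))).sub (hψu.mul (by fun_prop)))
  refine ⟨max 0 (max A B), le_max_left _ _, fun τ hτ z hz ↦ ?_⟩
  have hdψ : fderiv ℝ (fun z ↦ τ * ψ z) z = τ • fderiv ℝ ψ z :=
    fderiv_const_mul ((hψ z hz).differentiableAt one_ne_zero) τ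
  have hflux : carlemanFlux (fun z ↦ τ * ψ z) p q u v z = Real.exp (2 * (τ * ψ z))
      * (2 * ⟪p z, fderiv ℝ q z v⟫_ℝ + τ * (fderiv ℝ ψ z v * (2 * ⟪p z, q z⟫_ℝ)
        - fderiv ℝ ψ z u * (‖p z‖ ^ 2 + ‖q z‖ ^ 2))) := by
    simp only [carlemanFlux, hdψ, _root_.smul_apply, smul_eq_mul, inner_add_right,
      inner_smul_right]
    ring
  rw [hflux, abs_mul, Real.abs_exp]
  gcongr
  refine (abs_add_le _ _).trans ?_
  rw [abs_mul τ, abs_of_nonneg hτ]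
  calc _ ≤ max 0 (max A B) + τ * max 0 (max A B) := by
        gcongr
        · exact (hA z hz).trans ((le_max_left _ _).trans (le_max_right _ _))
        · exact (hB z hz).trans ((le_max_right _ _).trans (le_max_right _ _))
    _ = max 0 (max A B) * (1 + τ) := by ring

theorem exists_abs_carlemanFlux_le_of_weight_nonpos {F : Type*} [NormedAddCommGroup F]
    [NormedSpace ℝ F] {R : Set F} (hR : IsCompact R) {ψ : F → ℝ} {p q : F → E}
    (hψ : ∀ z ∈ R, ContDiffAt ℝ 1 ψ z) (hp : ContinuousOn p R)
    (hq : ∀ z ∈ R, ContDiffAt ℝ 1 q z) (u v : F) :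
    ∃ K, ∀ τ, 0 ≤ τ → ∀ z ∈ R, (p z = 0 ∧ q z = 0) ∨ ψ z ≤ 0 →
      |carlemanFlux (fun z ↦ τ * ψ z) p q u v z| ≤ K * (1 + τ) := by
  obtain ⟨K, hK0, hK⟩ := exists_abs_carlemanFlux_le hR hψ hp hq u v
  refine ⟨K, fun τ hτ z hz hvanish ↦ ?_⟩
  rcases hvanish with ⟨hpz, hqz⟩ | hψz
  · have hflux : carlemanFlux (fun z ↦ τ * ψ z) p q u v z = 0 := by simp [carlemanFlux, hpz, hqz]
    rw [hflux, abs_zero]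
    positivity
  · exact (hK τ hτ z hz).trans (mul_le_of_le_one_left (by positivity)
      (Real.exp_le_one_iff.2 (by nlinarith)))

theorem exists_carleman_estimate {ψ : ℝ × ℝ → ℝ} {a b : ℝ × ℝ} (hab : a ≤ b)
    (hψ : ContDiff ℝ 2 ψ) (hp : ∀ z ∈ Icc a b, ContDiffAt ℝ 2 p z)
    (hq : ∀ z ∈ Icc a b, ContDiffAt ℝ 2 q z)
    (hcurl : ∀ z ∈ Icc a b, fderiv ℝ p z (0, 1) = fderiv ℝ q z (1, 0))
    (hbd : ∀ z ∈ Icc a b, z ∉ Ioo a.1 b.1 ×ˢ Ioo a.2 b.2 → (p z = 0 ∧ q z = 0) ∨ ψ z ≤ 0) :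
    ∃ K, ∀ τ, 0 ≤ τ →
      τ * ∫ z in Icc a b, Real.exp (2 * (τ * ψ z)) * planarLaplacian (1, 0) (0, 1) ψ z
          * (‖p z‖ ^ 2 + ‖q z‖ ^ 2)
        ≤ (∫ z in Icc a b, Real.exp (2 * (τ * ψ z))
          * ‖fderiv ℝ p z (1, 0) + fderiv ℝ q z (0, 1)‖ ^ 2) + K * (1 + τ) := by
  have hψ1 : ∀ z ∈ Icc a b, ContDiffAt ℝ 1 ψ z := fun z _ ↦ hψ.contDiffAt.of_le one_le_two
  have hq1 : ∀ z ∈ Icc a b, ContDiffAt ℝ 1 q z := fun z hz ↦ (hq z hz).of_le one_le_two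
  have hpc : ContinuousOn p (Icc a b) := fun z hz ↦ (hp z hz).continuousAt.continuousWithinAt
  obtain ⟨K₁, hK₁⟩ :=
    exists_abs_carlemanFlux_le_of_weight_nonpos isCompact_Icc hψ1 hpc hq1 (1, 0) (0, 1)
  obtain ⟨K₂, hK₂⟩ :=
    exists_abs_carlemanFlux_le_of_weight_nonpos isCompact_Icc hψ1 hpc.neg hq1 (0, 1) (1, 0)
  refine ⟨2 * (K₂ * |b.1 - a.1| + K₁ * |b.2 - a.2|), fun τ hτ ↦ ?_⟩
  have hhor (y : ℝ) (hy : y = a.2 ∨ y = b.2) : _ ≤ K₂ * (1 + τ) * |b.1 - a.1| :=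
    intervalIntegral.norm_integral_le_of_norm_le_const
      (f := fun x ↦ carlemanFlux (fun z ↦ τ * ψ z) (-p) q (0, 1) (1, 0) (x, y)) fun x hx ↦ by
        rw [uIoc_of_le hab.1] at hx
        have hmem : (x, y) ∈ Icc a b := by
          rcases hy with rfl | rfl
          exacts [⟨⟨hx.1.le, le_rfl⟩, ⟨hx.2, hab.2⟩⟩, ⟨⟨hx.1.le, hab.2⟩, ⟨hx.2, le_rfl⟩⟩]
        refine hK₂ τ hτ _ hmem ((hbd _ hmem ?_).imp_left (.imp_left neg_eq_zero.2))
        rcases hy with rfl | rfl <;> simp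
  have hver (x : ℝ) (hx : x = a.1 ∨ x = b.1) : _ ≤ K₁ * (1 + τ) * |b.2 - a.2| :=
    intervalIntegral.norm_integral_le_of_norm_le_const
      (f := fun y ↦ carlemanFlux (fun z ↦ τ * ψ z) p q (1, 0) (0, 1) (x, y)) fun y hy ↦ by
        rw [uIoc_of_le hab.2] at hy
        have hmem : (x, y) ∈ Icc a b := by
          rcases hx with rfl | rfl
          exacts [⟨⟨le_rfl, hy.1.le⟩, ⟨hab.1, hy.2⟩⟩, ⟨⟨hab.1, hy.1.le⟩, ⟨le_rfl, hy.2⟩⟩]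
        refine hK₁ τ hτ _ hmem (hbd _ hmem ?_)
        rcases hx with rfl | rfl <;> simp
  have hcarleman :=
    carleman_integral_le (φ := fun z ↦ τ * ψ z) hab (fun z _ ↦ by fun_prop) hp hq hcurl
  simp only [planarLaplacian_const_mul hψ] at hcarleman
  rw [← integral_const_mul]
  simp only [mul_assoc, mul_left_comm τ] at hcarleman ⊢
  linarith [(abs_le.1 (hhor a.2 (.inl rfl))).2, (abs_le.1 (hhor b.2 (.inr rfl))).1,
    (abs_le.1 (hver a.1 (.inl rfl))).2, (abs_le.1 (hver b.1 (.inr rfl))).1]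

theorem exists_eventually_carleman_integral_le {ψ : ℝ × ℝ → ℝ} {a b : ℝ × ℝ} (hab : a ≤ b)
    (hψ : ContDiff ℝ 2 ψ) (hp : ∀ z ∈ Icc a b, ContDiffAt ℝ 2 p z)
    (hq : ∀ z ∈ Icc a b, ContDiffAt ℝ 2 q z)
    (hcurl : ∀ z ∈ Icc a b, fderiv ℝ p z (0, 1) = fderiv ℝ q z (1, 0))
    {C : ℝ} (hdiv : ∀ z ∈ Icc a b, ‖fderiv ℝ p z (1, 0) + fderiv ℝ q z (0, 1)‖ ^ 2
      ≤ C * (‖p z‖ ^ 2 + ‖q z‖ ^ 2))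
    (hbd : ∀ z ∈ Icc a b, z ∉ Ioo a.1 b.1 ×ˢ Ioo a.2 b.2 → (p z = 0 ∧ q z = 0) ∨ ψ z ≤ 0)
    {c : ℝ} (hc : 0 < c) (hΔ : ∀ z ∈ Icc a b, c ≤ planarLaplacian (1, 0) (0, 1) ψ z) :
    ∃ K, ∀ᶠ τ : ℝ in atTop,
      ∫ z in Icc a b, Real.exp (2 * (τ * ψ z)) * (‖p z‖ ^ 2 + ‖q z‖ ^ 2) ≤ K := by
  have hpc : ContinuousOn p (Icc a b) := fun z hz ↦ (hp z hz).continuousAt.continuousWithinAt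
  have hqc : ContinuousOn q (Icc a b) := fun z hz ↦ (hq z hz).continuousAt.continuousWithinAt
  have hψc := hψ.continuous.continuousOn (s := Icc a b)
  obtain ⟨K, hK⟩ := exists_carleman_estimate hab hψ hp hq hcurl hbd
  refine ⟨4 * |K| / c, ?_⟩
  filter_upwards [eventually_ge_atTop (1 : ℝ), eventually_ge_atTop (2 * C / c)] with τ hτ hτC
  set I := ∫ z in Icc a b, Real.exp (2 * (τ * ψ z)) * (‖p z‖ ^ 2 + ‖q z‖ ^ 2) with hI
  have hlower : c * I ≤ ∫ z in Icc a b, Real.exp (2 * (τ * ψ z))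
      * (planarLaplacian (1, 0) (0, 1) ψ z * (‖p z‖ ^ 2 + ‖q z‖ ^ 2)) := by
    have hΔc := continuousOn_planarLaplacian (s := Icc a b) (fun z _ ↦ hψ.contDiffAt) (1, 0) (0, 1)
    rw [hI, ← integral_const_mul]
    simp only [mul_left_comm c]
    exact setIntegral_exp_mul_mono isCompact_Icc (by fun_prop) (by fun_prop)
      (hΔc.mul (by fun_prop)) fun z hz ↦ mul_le_mul_of_nonneg_right (hΔ z hz) (by positivity)
  have hupper : ∫ z in Icc a b, Real.exp (2 * (τ * ψ z))
      * ‖fderiv ℝ p z (1, 0) + fderiv ℝ q z (0, 1)‖ ^ 2 ≤ C * I := by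
    have hpu := continuousOn_fderiv_apply (fun z hz ↦ (hp z hz).of_le one_le_two) (1, 0)
    have hqv := continuousOn_fderiv_apply (fun z hz ↦ (hq z hz).of_le one_le_two) (0, 1)
    rw [hI, ← integral_const_mul]
    simp only [mul_left_comm C]
    exact setIntegral_exp_mul_mono isCompact_Icc (by fun_prop) (by fun_prop) (by fun_prop) hdiv
  have hI0 : 0 ≤ I := integral_nonneg fun z ↦ by positivity
  have hτ0 : 0 < τ := by linarith
  have hcarleman := hK τ hτ0.le
  simp only [mul_assoc] at hcarleman
  have habsorb : C * I ≤ τ * (c * I) / 2 := by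
    nlinarith [(div_le_iff₀ hc).1 hτC]
  have hboundary : K * (1 + τ) ≤ |K| * (2 * τ) :=
    mul_le_mul (le_abs_self K) (by linarith) (by linarith) (abs_nonneg K)
  rw [le_div_iff₀' hc]
  refine le_of_mul_le_mul_left ?_ hτ0
  linarith [mul_le_mul_of_nonneg_left hlower hτ0.le]

theorem eq_zero_of_carleman_weight {ψ : ℝ × ℝ → ℝ} {a b : ℝ × ℝ} (hψ : ContDiff ℝ 2 ψ)
    (hp : ∀ z ∈ Icc a b, ContDiffAt ℝ 2 p z) (hq : ∀ z ∈ Icc a b, ContDiffAt ℝ 2 q z)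
    (hcurl : ∀ z ∈ Icc a b, fderiv ℝ p z (0, 1) = fderiv ℝ q z (1, 0))
    {C : ℝ} (hdiv : ∀ z ∈ Icc a b, ‖fderiv ℝ p z (1, 0) + fderiv ℝ q z (0, 1)‖ ^ 2
      ≤ C * (‖p z‖ ^ 2 + ‖q z‖ ^ 2))
    (hbd : ∀ z ∈ Icc a b, z ∉ Ioo a.1 b.1 ×ˢ Ioo a.2 b.2 → (p z = 0 ∧ q z = 0) ∨ ψ z ≤ 0)
    {c : ℝ} (hc : 0 < c) (hΔ : ∀ z ∈ Icc a b, c ≤ planarLaplacian (1, 0) (0, 1) ψ z)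
    {z : ℝ × ℝ} (hz : z ∈ Ioo a.1 b.1 ×ˢ Ioo a.2 b.2) (hψz : 0 < ψ z) : p z = 0 ∧ q z = 0 := by
  have hpc : ContinuousOn p (Icc a b) := fun z hz ↦ (hp z hz).continuousAt.continuousWithinAt
  have hqc : ContinuousOn q (Icc a b) := fun z hz ↦ (hq z hz).continuousAt.continuousWithinAt
  have hsub : Ioo a.1 b.1 ×ˢ Ioo a.2 b.2 ⊆ Icc a b := fun z hz ↦
    ⟨⟨hz.1.1.le, hz.2.1.le⟩, ⟨hz.1.2.le, hz.2.2.le⟩⟩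
  obtain ⟨K, hK⟩ := exists_eventually_carleman_integral_le ((hsub hz).1.trans (hsub hz).2) hψ hp hq
    hcurl hdiv hbd hc hΔ
  have hN : ‖p z‖ ^ 2 + ‖q z‖ ^ 2 = 0 :=
    eq_zero_of_eventually_integral_exp_mul_le (N := fun z ↦ ‖p z‖ ^ 2 + ‖q z‖ ^ 2) isCompact_Icc
      hψ.continuous.continuousOn (by fun_prop) (fun z _ ↦ by positivity) hK
      (interior_maximal hsub (isOpen_Ioo.prod isOpen_Ioo) hz) hψz
  rw [add_eq_zero_iff_of_nonneg (sq_nonneg _) (sq_nonneg _)] at hN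
  simpa using hN

end CarlemanEstimate

section CauchyUniqueness

open Filter Set Topology

/-- The Carleman weight on the box `[-r, r] × [0, r]`: it is positive near the origin, and for
`r ≤ 1 / 3` nonpositive on the three sides of the box that do not carry the Cauchy data. -/
def carlemanWeight (r : ℝ) (z : ℝ × ℝ) : ℝ := r ^ 2 - z.1 ^ 2 - z.2 + 2 * z.2 ^ 2

theorem contDiff_carlemanWeight (r : ℝ) {n : WithTop ℕ∞} : ContDiff ℝ n (carlemanWeight r) := by
  unfold carlemanWeight
  fun_prop

theorem fderiv_carlemanWeight_apply (r : ℝ) (z u : ℝ × ℝ) :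
    fderiv ℝ (carlemanWeight r) z u = -2 * z.1 * u.1 + (4 * z.2 - 1) * u.2 := by
  have h₁ : HasFDerivAt (fun z : ℝ × ℝ ↦ z.1) (.fst ℝ ℝ ℝ) z := hasFDerivAt_fst
  have h₂ : HasFDerivAt (fun z : ℝ × ℝ ↦ z.2) (.snd ℝ ℝ ℝ) z := hasFDerivAt_snd
  have h : HasFDerivAt (carlemanWeight r) _ z :=
    (((h₁.pow 2).const_sub (r ^ 2)).sub h₂).add ((h₂.pow 2).const_mul 2)
  rw [h.fderiv]
  simp only [Nat.add_one_sub_one, pow_one, nsmul_eq_mul, Nat.cast_ofNat, _root_.add_apply,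
    _root_.sub_apply, _root_.neg_apply, _root_.smul_apply, ContinuousLinearMap.coe_fst',
    smul_eq_mul, ContinuousLinearMap.coe_snd', neg_mul]
  ring

theorem planarLaplacian_carlemanWeight (r : ℝ) (z : ℝ × ℝ) :
    planarLaplacian (1, 0) (0, 1) (carlemanWeight r) z = 2 := by
  have h₁ : HasFDerivAt (fun z : ℝ × ℝ ↦ z.1) (.fst ℝ ℝ ℝ) z := hasFDerivAt_fst
  have h₂ : HasFDerivAt (fun z : ℝ × ℝ ↦ z.2) (.snd ℝ ℝ ℝ) z := hasFDerivAt_snd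
  simp only [planarLaplacian, fderiv_carlemanWeight_apply, mul_one, mul_zero, add_zero, zero_add]
  rw [(h₁.const_mul (-2)).fderiv, ((h₂.const_mul 4).sub_const 1).fderiv]
  norm_num

theorem carlemanWeight_nonpos {r : ℝ} (hr : 0 < r) (hr3 : r ≤ 1 / 3) {z : ℝ × ℝ}
    (hz : z ∈ Icc ((-r, 0) : ℝ × ℝ) (r, r)) (hbd : z.1 = -r ∨ z.1 = r ∨ z.2 = r) :
    carlemanWeight r z ≤ 0 := by
  obtain ⟨⟨-, hy0 : 0 ≤ z.2⟩, ⟨-, hyr : z.2 ≤ r⟩⟩ := hz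
  rcases hbd with h | h | h <;> simp only [carlemanWeight, h] <;> nlinarith [sq_nonneg z.1]

theorem exists_box_forall_of_eventually {P : ℝ × ℝ → Prop} (hP : ∀ᶠ z in 𝓝 0, P z) {c : ℝ}
    (hc : 0 < c) : ∃ r, 0 < r ∧ r ≤ c ∧ ∀ z ∈ Icc ((-r, 0) : ℝ × ℝ) (r, r), P z := by
  obtain ⟨ε, hε, hball⟩ := Metric.nhds_basis_closedBall.eventually_iff.1 hP
  refine ⟨min ε c, lt_min hε hc, min_le_right _ _, fun z hz ↦ hball ?_⟩
  obtain ⟨⟨hx : -_ ≤ z.1, hy : 0 ≤ z.2⟩, ⟨hx' : z.1 ≤ _, hy' : z.2 ≤ _⟩⟩ := hz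
  rw [mem_closedBall_zero_iff, Prod.norm_def, max_le_iff, Real.norm_eq_abs, Real.norm_eq_abs,
    abs_le, abs_le]
  have := min_le_left ε c
  exact ⟨⟨by linarith, by linarith⟩, ⟨by linarith, by linarith⟩⟩

variable {F E : Type*} [NormedAddCommGroup F] [NormedSpace ℝ F]
  [NormedAddCommGroup E] [InnerProductSpace ℝ E]

theorem eventually_eq_zero_of_cauchy_data {p q : ℝ × ℝ → E} {C : ℝ}
    (hp : ContDiffAt ℝ 2 p 0) (hq : ContDiffAt ℝ 2 q 0)
    (hcurl : ∀ᶠ z in 𝓝 0, fderiv ℝ p z (0, 1) = fderiv ℝ q z (1, 0))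
    (hdiv : ∀ᶠ z in 𝓝 0, ‖fderiv ℝ p z (1, 0) + fderiv ℝ q z (0, 1)‖ ≤ C * (‖p z‖ + ‖q z‖))
    (hdata : ∀ᶠ x : ℝ in 𝓝 0, p (x, 0) = 0 ∧ q (x, 0) = 0) :
    ∀ᶠ z in 𝓝 (0 : ℝ × ℝ), 0 < z.2 → p z = 0 ∧ q z = 0 := by
  have hdata' : ∀ᶠ z : ℝ × ℝ in 𝓝 0, p (z.1, 0) = 0 ∧ q (z.1, 0) = 0 :=
    (continuous_fst.tendsto (0 : ℝ × ℝ)).eventually hdata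
  obtain ⟨r, hr, hr3, hbox⟩ := exists_box_forall_of_eventually (((hp.eventually (by simp)).and
    (hq.eventually (by simp))).and (hcurl.and (hdiv.and hdata'))) (c := 1 / 3) (by norm_num)
  have hpos : ∀ᶠ z in 𝓝 0, 0 < carlemanWeight r z :=
    (contDiff_carlemanWeight r (n := 0)).continuous.continuousAt.eventually_const_lt
      (by simpa [carlemanWeight] using pow_pos hr 2)
  have hnear : ∀ᶠ z in 𝓝 (0 : ℝ × ℝ), z ∈ Ioo (-r) r ×ˢ Iio r :=
    (isOpen_Ioo.prod isOpen_Iio).mem_nhds (by simp [hr])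
  filter_upwards [hpos, hnear] with z hψz hz hz0
  refine eq_zero_of_carleman_weight (contDiff_carlemanWeight r) (fun z hz ↦ (hbox z hz).1.1)
    (fun z hz ↦ (hbox z hz).1.2) (fun z hz ↦ (hbox z hz).2.1) (C := 2 * C ^ 2) (fun z hz ↦ ?_)
    (fun z hz hzbd ↦ ?_) two_pos (fun z _ ↦ (planarLaplacian_carlemanWeight r z).ge)
    ⟨hz.1, hz0, hz.2⟩ hψz
  · calc ‖fderiv ℝ p z (1, 0) + fderiv ℝ q z (0, 1)‖ ^ 2
        ≤ (C * (‖p z‖ + ‖q z‖)) ^ 2 := pow_le_pow_left₀ (norm_nonneg _) (hbox z hz).2.2.1 2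
      _ ≤ 2 * C ^ 2 * (‖p z‖ ^ 2 + ‖q z‖ ^ 2) := by
          nlinarith [mul_nonneg (sq_nonneg C) (sq_nonneg (‖p z‖ - ‖q z‖))]
  · by_cases hz2 : z.2 = 0
    · left
      simpa [← hz2] using (hbox z hz).2.2.2
    · right
      refine carlemanWeight_nonpos hr hr3 hz ?_
      obtain ⟨⟨hx : -r ≤ z.1, hy : 0 ≤ z.2⟩, ⟨hx' : z.1 ≤ r, hy' : z.2 ≤ r⟩⟩ := hz
      by_contra! hne
      exact hzbd ⟨⟨hx.lt_of_ne' hne.1, hx'.lt_of_ne hne.2.1⟩,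
        ⟨hy.lt_of_ne' hz2, hy'.lt_of_ne hne.2.2⟩⟩

theorem eventually_eq_zero_of_cauchy_data_half_plane {p q : F → E} {z₀ u v : F} {C : ℝ}
    (hp : ContDiffAt ℝ 2 p z₀) (hq : ContDiffAt ℝ 2 q z₀)
    (hcurl : ∀ᶠ z in 𝓝 z₀, fderiv ℝ p z v = fderiv ℝ q z u)
    (hdiv : ∀ᶠ z in 𝓝 z₀, ‖fderiv ℝ p z u + fderiv ℝ q z v‖ ≤ C * (‖p z‖ + ‖q z‖))
    (hdata : ∀ᶠ x : ℝ in 𝓝 0, p (z₀ + x • u) = 0 ∧ q (z₀ + x • u) = 0) :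
    ∀ᶠ t in 𝓝 (0 : ℝ × ℝ), 0 < t.2 →
      p (z₀ + t.1 • u + t.2 • v) = 0 ∧ q (z₀ + t.1 • u + t.2 • v) = 0 := by
  set L : ℝ × ℝ →L[ℝ] F := (ContinuousLinearMap.fst ℝ ℝ ℝ).smulRight u
    + (ContinuousLinearMap.snd ℝ ℝ ℝ).smulRight v
  set ℓ : ℝ × ℝ → F := fun t ↦ z₀ + L t
  have hℓ (t : ℝ × ℝ) : z₀ + t.1 • u + t.2 • v = ℓ t := add_assoc _ _ _
  have hℓ0 : ℓ 0 = z₀ := by simp [ℓ]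
  have hℓd : ContDiff ℝ 2 ℓ := by fun_prop
  have hℓt : Tendsto ℓ (𝓝 0) (𝓝 z₀) := hℓ0 ▸ hℓd.continuous.tendsto 0
  have hchain {g : F → E} (hg : ContDiffAt ℝ 2 g z₀) : ∀ᶠ t in 𝓝 0, ∀ s : ℝ × ℝ,
      fderiv ℝ (g ∘ ℓ) t s = fderiv ℝ g (ℓ t) (L s) := by
    filter_upwards [hℓt.eventually (hg.eventually (by simp))] with t ht s
    rw [((ht.differentiableAt two_ne_zero).hasFDerivAt.comp t
      (L.hasFDerivAt.const_add z₀)).fderiv, ContinuousLinearMap.comp_apply]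
  simp only [hℓ]
  refine eventually_eq_zero_of_cauchy_data (p := p ∘ ℓ) (q := q ∘ ℓ) (C := C)
    ((hℓ0.symm ▸ hp).comp 0 hℓd.contDiffAt) ((hℓ0.symm ▸ hq).comp 0 hℓd.contDiffAt) ?_ ?_
    (by simpa [ℓ, L] using hdata)
  · filter_upwards [hchain hp, hchain hq, hℓt.eventually hcurl] with t hpt hqt ht
    simpa [hpt, hqt, L] using ht
  · filter_upwards [hchain hp, hchain hq, hℓt.eventually hdiv] with t hpt hqt ht
    simpa [hpt, hqt, L] using ht

theorem eventually_eq_zero_of_cauchy_data_plane {p q : F → E} {z₀ u v : F} {C : ℝ}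
    (hp : ContDiffAt ℝ 2 p z₀) (hq : ContDiffAt ℝ 2 q z₀)
    (hcurl : ∀ᶠ z in 𝓝 z₀, fderiv ℝ p z v = fderiv ℝ q z u)
    (hdiv : ∀ᶠ z in 𝓝 z₀, ‖fderiv ℝ p z u + fderiv ℝ q z v‖ ≤ C * (‖p z‖ + ‖q z‖))
    (hdata : ∀ᶠ x : ℝ in 𝓝 0, p (z₀ + x • u) = 0 ∧ q (z₀ + x • u) = 0) :
    ∀ᶠ t in 𝓝 (0 : ℝ × ℝ),
      p (z₀ + t.1 • u + t.2 • v) = 0 ∧ q (z₀ + t.1 • u + t.2 • v) = 0 := by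
  have hupper := eventually_eq_zero_of_cauchy_data_half_plane hp hq hcurl hdiv hdata
  have hlower := eventually_eq_zero_of_cauchy_data_half_plane (v := -v) hp hq.neg
    (by simpa using hcurl) (by simpa using hdiv) (by simpa using hdata)
  have hline : ∀ᶠ t : ℝ × ℝ in 𝓝 0, p (z₀ + t.1 • u) = 0 ∧ q (z₀ + t.1 • u) = 0 :=
    (continuous_fst.tendsto (0 : ℝ × ℝ)).eventually hdata
  have hrefl : Tendsto (fun t : ℝ × ℝ ↦ (t.1, -t.2)) (𝓝 0) (𝓝 0) :=
    Continuous.tendsto' (by fun_prop) _ _ (by simp)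
  filter_upwards [hupper, hrefl.eventually hlower, hline] with t ht_upper ht_lower ht_line
  rcases lt_trichotomy t.2 0 with ht | ht | ht
  · simpa using ht_lower (neg_pos.2 ht)
  · simpa [ht] using ht_line
  · exact ht_upper ht

end CauchyUniqueness

section UniqueContinuation

open Filter Set Topology

variable {F E : Type*} [NormedAddCommGroup F] [NormedSpace ℝ F]
  [NormedAddCommGroup E] [NormedSpace ℝ E]

theorem eventually_fderiv_apply_eq_zero_of_norm_planarLaplacian_le [FiniteDimensional ℝ E]
    {w : F → E} {z₀ u v : F} {C : ℝ} (hw : ContDiffAt ℝ 3 w z₀)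
    (hΔ : ∀ᶠ z in 𝓝 z₀,
      ‖planarLaplacian u v w z‖ ≤ C * (‖fderiv ℝ w z u‖ + ‖fderiv ℝ w z v‖))
    (hdata : ∀ᶠ x : ℝ in 𝓝 0,
      fderiv ℝ w (z₀ + x • u) u = 0 ∧ fderiv ℝ w (z₀ + x • u) v = 0) :
    ∀ᶠ t in 𝓝 (0 : ℝ × ℝ), fderiv ℝ w (z₀ + t.1 • u + t.2 • v) u = 0
      ∧ fderiv ℝ w (z₀ + t.1 • u + t.2 • v) v = 0 := by
  let A : E ≃L[ℝ] EuclideanSpace ℝ (Fin (Module.finrank ℝ E)) := toEuclidean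
  let A' : E →L[ℝ] EuclideanSpace ℝ (Fin (Module.finrank ℝ E)) := A
  let B : EuclideanSpace ℝ (Fin (Module.finrank ℝ E)) →L[ℝ] E := A.symm
  let D : F → F → EuclideanSpace ℝ (Fin (Module.finrank ℝ E)) := fun s z ↦ A (fderiv ℝ w z s)
  have hD (s : F) : ContDiffAt ℝ 2 (D s) z₀ :=
    A.contDiff.contDiffAt.comp z₀ (contDiffAt_fderiv_apply hw (by norm_num) s)
  have hD' (s : F) (z : F) (s' : F) :
      fderiv ℝ (D s) z s' = A (fderiv ℝ (fun z ↦ fderiv ℝ w z s) z s') :=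
    DFunLike.congr_fun A.comp_fderiv s'
  have hinv (y : E) : ‖y‖ ≤ ‖B‖ * ‖A y‖ := by
    simpa [B] using B.le_opNorm (A y)
  have hDuv := eventually_eq_zero_of_cauchy_data_plane (p := D u) (q := D v) (u := u) (v := v)
    (C := ‖A'‖ * (|C| * ‖B‖)) (hD u) (hD v) ?_ ?_
    (by simpa [D] using hdata)
  · simpa [D] using hDuv
  · filter_upwards [hw.eventually (by simp)] with z hz
    rw [hD', hD', fderiv_fderiv_apply_comm (hz.of_le (by norm_num))]
  · filter_upwards [hΔ] with z hz
    rw [hD', hD', ← map_add]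
    calc ‖A (planarLaplacian u v w z)‖
        ≤ ‖A'‖ * ‖planarLaplacian u v w z‖ := A'.le_opNorm _
      _ ≤ ‖A'‖ * (|C| * (‖fderiv ℝ w z u‖ + ‖fderiv ℝ w z v‖)) := by
          gcongr
          exact hz.trans (by gcongr; exact le_abs_self C)
      _ ≤ ‖A'‖ * (|C| * (‖B‖ * ‖D u z‖ + ‖B‖ * ‖D v z‖)) := by
          gcongr <;> exact hinv _
      _ = ‖A'‖ * (|C| * ‖B‖) * (‖D u z‖ + ‖D v z‖) := by ring

theorem fderiv_apply_one_eq_zero_of_eventually_ofReal {w : ℂ → E} {x : ℝ}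
    (hw : DifferentiableAt ℝ w x) (hw0 : ∀ᶠ t : ℝ in 𝓝 x, w t = 0) : fderiv ℝ w x 1 = 0 := by
  have hcurve : HasDerivAt (fun t : ℝ ↦ w t) (fderiv ℝ w x 1) x :=
    hw.hasFDerivAt.comp_hasDerivAt x Complex.ofRealCLM.hasDerivAt
  rw [← hcurve.deriv, EventuallyEq.deriv_eq hw0, deriv_const]

theorem eq_zero_of_apply_one_of_apply_I {L : ℂ →L[ℝ] E} (h1 : L 1 = 0) (hI : L I = 0) : L = 0 := by
  refine ContinuousLinearMap.ext fun z ↦ ?_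
  rw [show z = z.re • (1 : ℂ) + z.im • I by simp [Complex.re_add_im], map_add, map_smul, map_smul,
    h1, hI]
  simp

theorem eventually_eq_of_eventually_fderiv_eq_zero {w : F → E} {z₀ : F}
    (hw : ∀ᶠ z in 𝓝 z₀, DifferentiableAt ℝ w z) (hw' : ∀ᶠ z in 𝓝 z₀, fderiv ℝ w z = 0) :
    ∀ᶠ z in 𝓝 z₀, w z = w z₀ := by
  obtain ⟨ε, hε, hball⟩ := Metric.eventually_nhds_iff_ball.1 (hw.and hw')
  filter_upwards [Metric.ball_mem_nhds z₀ hε] with z hz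
  exact Metric.isOpen_ball.is_const_of_fderiv_eq_zero (convex_ball z₀ ε).isPreconnected
    (fun z hz ↦ (hball z hz).1.differentiableWithinAt) (fun z hz ↦ (hball z hz).2) hz
    (Metric.mem_ball_self hε)

theorem eventually_eq_zero_of_norm_planarLaplacian_le [FiniteDimensional ℝ E] {w : ℂ → E} {x₀ : ℝ}
    {C : ℝ} (hw : ContDiffAt ℝ 3 w x₀)
    (hΔ : ∀ᶠ z in 𝓝 (x₀ : ℂ),
      ‖planarLaplacian 1 I w z‖ ≤ C * (‖fderiv ℝ w z 1‖ + ‖fderiv ℝ w z I‖))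
    (hw0 : ∀ᶠ x : ℝ in 𝓝 x₀, w x = 0) (hwI : ∀ᶠ x : ℝ in 𝓝 x₀, fderiv ℝ w x I = 0) :
    ∀ᶠ z in 𝓝 (x₀ : ℂ), w z = 0 := by
  have hdiff : ∀ᶠ z in 𝓝 (x₀ : ℂ), DifferentiableAt ℝ w z :=
    (hw.eventually (by simp)).mono fun z hz ↦ hz.differentiableAt three_ne_zero
  have hdata : ∀ᶠ x : ℝ in 𝓝 x₀, fderiv ℝ w x 1 = 0 ∧ fderiv ℝ w x I = 0 := by
    filter_upwards [Complex.continuous_ofReal.continuousAt.eventually hdiff,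
      hw0.eventually_nhds, hwI] with x hwx hw0x hwIx
    exact ⟨fderiv_apply_one_eq_zero_of_eventually_ofReal hwx hw0x, hwIx⟩
  have hshift : Tendsto (fun t : ℝ ↦ x₀ + t) (𝓝 0) (𝓝 x₀) :=
    Continuous.tendsto' (by fun_prop) _ _ (add_zero x₀)
  have hplane := eventually_fderiv_apply_eq_zero_of_norm_planarLaplacian_le hw hΔ
    (by simpa using hshift.eventually hdata)
  have hcoord : Tendsto (fun z : ℂ ↦ ((z - x₀).re, (z - x₀).im)) (𝓝 x₀) (𝓝 0) :=
    Continuous.tendsto' (by fun_prop) _ _ (by simp)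
  have hfderiv : ∀ᶠ z in 𝓝 (x₀ : ℂ), fderiv ℝ w z = 0 := by
    filter_upwards [hcoord.eventually hplane] with z hz
    have hz_eq : (x₀ : ℂ) + (z - x₀).re • (1 : ℂ) + (z - x₀).im • I = z := by
      simp
    rw [hz_eq] at hz
    exact eq_zero_of_apply_one_of_apply_I hz.1 hz.2
  rw [← hw0.self_of_nhds]
  exact eventually_eq_of_eventually_fderiv_eq_zero hdiff hfderiv

end UniqueContinuation

section ConformalMaps

open Filter Topology

variable {F E G : Type*} [NormedAddCommGroup F] [NormedSpace ℝ F] [NormedAddCommGroup E]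
  [NormedSpace ℝ E] [NormedAddCommGroup G] [NormedSpace ℝ G] {f : F → E} {z u v : F}

theorem map_fderiv_apply_eq_zero (ℓ : E →L[ℝ] G) (hf : DifferentiableAt ℝ f z)
    (hℓ : ∀ᶠ ζ in 𝓝 z, ℓ (f ζ) = 0) (u : F) : ℓ (fderiv ℝ f z u) = 0 := by
  have hcomp : fderiv ℝ (fun ζ ↦ ℓ (f ζ)) z = ℓ ∘L fderiv ℝ f z :=
    (ℓ.hasFDerivAt.comp z hf.hasFDerivAt).fderiv
  rw [← ContinuousLinearMap.comp_apply, ← hcomp, EventuallyEq.fderiv_eq hℓ, fderiv_fun_const,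
    Pi.zero_apply, _root_.zero_apply]

theorem map_planarLaplacian_eq_zero (ℓ : E →L[ℝ] G) (hf : ContDiffAt ℝ 2 f z)
    (hℓ : ∀ᶠ ζ in 𝓝 z, ℓ (f ζ) = 0) : ℓ (planarLaplacian u v f z) = 0 := by
  have hfirst (s : F) : ∀ᶠ ζ in 𝓝 z, ℓ (fderiv ℝ f ζ s) = 0 := by
    filter_upwards [hf.eventually (by simp), hℓ.eventually_nhds] with ζ hfζ hℓζ
    exact map_fderiv_apply_eq_zero ℓ (hfζ.differentiableAt two_ne_zero) hℓζ s
  have hsecond (s : F) : ℓ (fderiv ℝ (fun ζ ↦ fderiv ℝ f ζ s) z s) = 0 :=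
    map_fderiv_apply_eq_zero ℓ ((contDiffAt_fderiv_apply (m := 1) hf
      (by norm_num) s).differentiableAt one_ne_zero) (hfirst s) s
  rw [planarLaplacian, map_add, hsecond, hsecond, add_zero]

theorem bilin_planarLaplacian_fderiv_apply_eq_zero (B : E →L[ℝ] E →L[ℝ] G)
    (hB : ∀ a b, B a b = B b a) (hf : ContDiffAt ℝ 2 f z)
    (hnorm : ∀ᶠ ζ in 𝓝 z,
      B (fderiv ℝ f ζ u) (fderiv ℝ f ζ u) = B (fderiv ℝ f ζ v) (fderiv ℝ f ζ v))
    (horth : ∀ᶠ ζ in 𝓝 z, B (fderiv ℝ f ζ u) (fderiv ℝ f ζ v) = 0) :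
    B (planarLaplacian u v f z) (fderiv ℝ f z u) = 0 := by
  have hdiff (s : F) : DifferentiableAt ℝ (fun ζ ↦ fderiv ℝ f ζ s) z :=
    (contDiffAt_fderiv_apply (m := 1) hf (by norm_num) s).differentiableAt one_ne_zero
  have hprod (s t r : F) : fderiv ℝ (fun ζ ↦ B (fderiv ℝ f ζ s) (fderiv ℝ f ζ t)) z r
      = B (fderiv ℝ f z s) (fderiv ℝ (fun ζ ↦ fderiv ℝ f ζ t) z r)
        + B (fderiv ℝ (fun ζ ↦ fderiv ℝ f ζ s) z r) (fderiv ℝ f z t) := by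
    rw [B.fderiv_of_bilinear (hdiff s) (hdiff t)]
    rfl
  have hnorm_u : B (fderiv ℝ (fun ζ ↦ fderiv ℝ f ζ u) z u) (fderiv ℝ f z u)
      = B (fderiv ℝ (fun ζ ↦ fderiv ℝ f ζ v) z u) (fderiv ℝ f z v) := by
    have h := DFunLike.congr_fun (EventuallyEq.fderiv_eq (𝕜 := ℝ) hnorm) u
    rw [hprod, hprod, hB (fderiv ℝ f z u), hB (fderiv ℝ f z v)] at h
    rwa [← two_smul ℝ, ← two_smul ℝ, smul_right_inj two_ne_zero] at h
  have horth_v : B (fderiv ℝ (fun ζ ↦ fderiv ℝ f ζ v) z v) (fderiv ℝ f z u)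
      + B (fderiv ℝ (fun ζ ↦ fderiv ℝ f ζ u) z v) (fderiv ℝ f z v) = 0 := by
    rw [hB _ (fderiv ℝ f z u), ← hprod, EventuallyEq.fderiv_eq horth, fderiv_fun_const,
      Pi.zero_apply, _root_.zero_apply]
  rw [planarLaplacian, map_add, _root_.add_apply, hnorm_u, add_comm,
    ← fderiv_fderiv_apply_comm hf u v, horth_v]

end ConformalMaps

section BilinearSystem

open Filter Topology

variable {F E : Type*} [NormedAddCommGroup F] [NormedSpace ℝ F] [NormedAddCommGroup E]
  [NormedSpace ℝ E] {f g : F → E} {z u v : F}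

theorem planarLaplacian_sub (hf : ContDiffAt ℝ 2 f z) (hg : ContDiffAt ℝ 2 g z) (u v : F) :
    planarLaplacian u v (f - g) z = planarLaplacian u v f z - planarLaplacian u v g z := by
  have hfirst (s : F) : (fun ζ ↦ fderiv ℝ (f - g) ζ s)
      =ᶠ[𝓝 z] (fun ζ ↦ fderiv ℝ f ζ s) - fun ζ ↦ fderiv ℝ g ζ s := by
    filter_upwards [hf.eventually (by simp), hg.eventually (by simp)] with ζ hfζ hgζ
    rw [fderiv_sub (hfζ.differentiableAt two_ne_zero) (hgζ.differentiableAt two_ne_zero)]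
    rfl
  have hsecond (s : F) : fderiv ℝ (fun ζ ↦ fderiv ℝ (f - g) ζ s) z s
      = fderiv ℝ (fun ζ ↦ fderiv ℝ f ζ s) z s - fderiv ℝ (fun ζ ↦ fderiv ℝ g ζ s) z s := by
    rw [(hfirst s).fderiv_eq, fderiv_sub
      ((contDiffAt_fderiv_apply (m := 1) hf (by norm_num) s).differentiableAt one_ne_zero)
      ((contDiffAt_fderiv_apply (m := 1) hg (by norm_num) s).differentiableAt one_ne_zero)]
    rfl
  rw [planarLaplacian, hsecond, hsecond, sub_add_sub_comm]
  rfl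

theorem norm_bilin_sub_bilin_le (B : E →L[ℝ] E →L[ℝ] E) (a b a' b' : E) :
    ‖B a b - B a' b'‖ ≤ ‖B‖ * (‖a‖ + ‖b'‖) * (‖a - a'‖ + ‖b - b'‖) := by
  have hsplit : B a b - B a' b' = B (a - a') b' + B a (b - b') := by
    simp only [map_sub, _root_.sub_apply]
    abel
  calc ‖B a b - B a' b'‖ ≤ ‖B (a - a') b'‖ + ‖B a (b - b')‖ := by
        rw [hsplit]
        exact norm_add_le _ _
    _ ≤ ‖B‖ * ‖a - a'‖ * ‖b'‖ + ‖B‖ * ‖a‖ * ‖b - b'‖ :=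
        add_le_add (B.le_opNorm₂ _ _) (B.le_opNorm₂ _ _)
    _ ≤ ‖B‖ * ‖a - a'‖ * ‖b'‖ + ‖B‖ * ‖a‖ * ‖b - b'‖
        + (‖B‖ * ‖a‖ * ‖a - a'‖ + ‖B‖ * ‖b'‖ * ‖b - b'‖) :=
        le_add_of_nonneg_right (by positivity)
    _ = ‖B‖ * (‖a‖ + ‖b'‖) * (‖a - a'‖ + ‖b - b'‖) := by ring

theorem exists_eventually_norm_planarLaplacian_sub_le (B : E →L[ℝ] E →L[ℝ] E)
    (hf : ContDiffAt ℝ 2 f z) (hg : ContDiffAt ℝ 2 g z)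
    (hfB : ∀ᶠ ζ in 𝓝 z, planarLaplacian u v f ζ = B (fderiv ℝ f ζ u) (fderiv ℝ f ζ v))
    (hgB : ∀ᶠ ζ in 𝓝 z, planarLaplacian u v g ζ = B (fderiv ℝ g ζ u) (fderiv ℝ g ζ v)) :
    ∃ C, ∀ᶠ ζ in 𝓝 z, ‖planarLaplacian u v (f - g) ζ‖
      ≤ C * (‖fderiv ℝ (f - g) ζ u‖ + ‖fderiv ℝ (f - g) ζ v‖) := by
  have hcont : ContinuousAt (fun ζ ↦ ‖fderiv ℝ f ζ u‖ + ‖fderiv ℝ g ζ v‖) z :=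
    (contDiffAt_fderiv_apply (m := 1) hf (by norm_num) u).continuousAt.norm.add
      (contDiffAt_fderiv_apply (m := 1) hg (by norm_num) v).continuousAt.norm
  refine ⟨‖B‖ * (‖fderiv ℝ f z u‖ + ‖fderiv ℝ g z v‖ + 1), ?_⟩
  filter_upwards [hf.eventually (by simp), hg.eventually (by simp), hfB, hgB,
    hcont.eventually_lt_const (lt_add_one _)] with ζ hfζ hgζ hfBζ hgBζ hbound
  rw [planarLaplacian_sub hfζ hgζ, hfBζ, hgBζ,
    fderiv_sub (hfζ.differentiableAt two_ne_zero) (hgζ.differentiableAt two_ne_zero)]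
  refine (norm_bilin_sub_bilin_le B _ _ _ _).trans ?_
  simp only [_root_.sub_apply]
  gcongr

theorem eventually_eq_of_planarLaplacian_eq_bilin [FiniteDimensional ℝ E]
    (B : E →L[ℝ] E →L[ℝ] E) {f g : ℂ → E} {x₀ : ℝ}
    (hf : ContDiffAt ℝ 3 f x₀) (hg : ContDiffAt ℝ 3 g x₀)
    (hfB : ∀ᶠ z in 𝓝 (x₀ : ℂ), planarLaplacian 1 I f z = B (fderiv ℝ f z 1) (fderiv ℝ f z I))
    (hgB : ∀ᶠ z in 𝓝 (x₀ : ℂ), planarLaplacian 1 I g z = B (fderiv ℝ g z 1) (fderiv ℝ g z I))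
    (hfg : ∀ᶠ x : ℝ in 𝓝 x₀, f x = g x)
    (hfgI : ∀ᶠ x : ℝ in 𝓝 x₀, fderiv ℝ f x I = fderiv ℝ g x I) :
    ∀ᶠ z in 𝓝 (x₀ : ℂ), f z = g z := by
  obtain ⟨C, hΔ⟩ := exists_eventually_norm_planarLaplacian_sub_le B (hf.of_le (by norm_num))
    (hg.of_le (by norm_num)) hfB hgB
  have hdiff {h : ℂ → E} (hh : ContDiffAt ℝ 3 h x₀) :
      ∀ᶠ x : ℝ in 𝓝 x₀, DifferentiableAt ℝ h x :=
    Complex.continuous_ofReal.continuousAt.eventually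
      ((hh.eventually (by simp)).mono fun z hz ↦ hz.differentiableAt three_ne_zero)
  have hzero := eventually_eq_zero_of_norm_planarLaplacian_le (w := f - g) (hf.sub hg) hΔ
    (hfg.mono fun x hx ↦ sub_eq_zero.2 hx) (by
      filter_upwards [hdiff hf, hdiff hg, hfgI] with x hfx hgx hx
      rw [fderiv_sub hfx hgx, _root_.sub_apply, hx, sub_self])
  exact hzero.mono fun z hz ↦ sub_eq_zero.1 hz

end BilinearSystem

section MatrixModel

theorem e1_mul_e2 : e1 * e2 = e3 := by
  simp [e1, e2, e3]

theorem eq_ip_smul_e3 {Y : M2} (htr : Y.trace = 0) (h1 : ip Y e1 = 0) (h2 : ip Y e2 = 0) :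
    Y = ip Y e3 • e3 := by
  have h11 : Y 1 1 = -Y 0 0 := by
    rw [trace_fin_two] at htr
    linear_combination htr
  have hsum : Y 0 1 + Y 1 0 = 0 := by
    simpa [ip, e1, trace_fin_two, mul_apply, ← neg_add, ← add_mul] using h1
  have hdiff : Y 0 1 = Y 1 0 := by
    simpa [ip, e2, trace_fin_two, mul_apply, neg_add_eq_zero] using h2
  have h01 : Y 0 1 = 0 := by linear_combination (1 / 2) * hsum + (1 / 2) * hdiff
  have h10 : Y 1 0 = 0 := by rw [← hdiff, h01]
  have h3 : ip Y e3 * I = Y 0 0 := by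
    simp [ip, e3, trace_fin_two, mul_apply, h11, ← two_mul, mul_assoc]
  generalize ip Y e3 = c at h3 ⊢
  ext i j
  fin_cases i <;> fin_cases j <;> simp [e3, h01, h10, h11, h3]

theorem ip_comm (X Y : M2) : ip X Y = ip Y X := by
  rw [ip, ip, trace_mul_comm]

theorem ip_add_left (X X' Y : M2) : ip (X + X') Y = ip X Y + ip X' Y := by
  rw [ip, ip, ip, Matrix.add_mul, trace_add, mul_add]

theorem ip_smul_right (X Y : M2) (c : ℂ) : ip X (c • Y) = c * ip X Y := by
  rw [ip, ip, Matrix.mul_smul, trace_smul, smul_eq_mul, mul_left_comm]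

theorem ip_conj (X Y F G : M2) : ip (G * X * F) Y = ip X (F * Y * G) := by
  rw [ip, ip, Matrix.mul_assoc, Matrix.mul_assoc, trace_mul_comm]
  simp only [Matrix.mul_assoc]

theorem conj_e1_mul_conj_e2 {F : M2} (hF : IsUnit F.det) :
    F * e1 * F⁻¹ * (F * e2 * F⁻¹) = F * e3 * F⁻¹ := by
  rw [← e1_mul_e2]
  simp only [Matrix.mul_assoc, nonsing_inv_mul_cancel_left _ _ hF]

theorem eq_ip_smul_conj_e3 {X F : M2} (hF : IsUnit F.det) (htr : X.trace = 0)
    (h1 : ip X (F * e1 * F⁻¹) = 0) (h2 : ip X (F * e2 * F⁻¹) = 0) :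
    X = ip X (F * e3 * F⁻¹) • (F * e3 * F⁻¹) := by
  have hconj : F⁻¹ * X * F = ip X (F * e3 * F⁻¹) • e3 := by
    rw [← ip_conj] at h1 h2 ⊢
    refine eq_ip_smul_e3 ?_ h1 h2
    rw [Matrix.mul_assoc, trace_mul_comm, mul_nonsing_inv_cancel_right _ _ hF, htr]
  calc X = F * (F⁻¹ * X * F) * F⁻¹ := by
        simp only [Matrix.mul_assoc, mul_nonsing_inv _ hF, Matrix.mul_one,
          mul_nonsing_inv_cancel_left _ _ hF]
    _ = ip X (F * e3 * F⁻¹) • (F * e3 * F⁻¹) := by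
        rw [hconj, Matrix.mul_smul, Matrix.smul_mul]

theorem eq_of_pos_smul_of_ip_self_eq {v a b : M2} {c c' : ℝ} (hc : 0 < c) (hc' : 0 < c')
    (ha : a = (c : ℂ) • v) (hb : b = (c' : ℂ) • v) (hab : ip a a = ip b b) (ha0 : ip a a ≠ 0) :
    a = b := by
  have hip (t : ℂ) : ip (t • v) (t • v) = t ^ 2 * ip v v := by
    rw [ip_smul_right, ip_comm, ip_smul_right, sq, mul_assoc]
  rw [ha, hip] at ha0
  rw [ha, hb, hip, hip] at hab
  have hsq : c ^ 2 = c' ^ 2 := by exact_mod_cast mul_right_cancel₀ (right_ne_zero_of_mul ha0) hab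
  rw [ha, hb, (pow_left_inj₀ hc.le hc'.le two_ne_zero).1 hsq]

end MatrixModel

section MeanCurvature

open Filter Topology

theorem isBilinearMap_ip : IsBilinearMap ℝ ip where
  add_left := ip_add_left
  smul_left c X Y := by simp [ip, mul_left_comm]
  add_right X Y Y' := by rw [ip_comm, ip_add_left, ip_comm Y, ip_comm Y']
  smul_right c X Y := by simp [ip, mul_left_comm]

theorem trace_planarLaplacian_eq_zero {f : ℂ → M2} {z : ℂ} (hf : ContDiffAt ℝ 2 f z)
    (htr : ∀ᶠ ζ in 𝓝 z, (f ζ).trace = 0) : (planarLaplacian 1 I f z).trace = 0 :=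
  map_planarLaplacian_eq_zero (traceLinearMap (Fin 2) ℝ ℂ).toContinuousLinearMap hf htr

theorem ip_planarLaplacian_eq_zero {f : ℂ → M2} {z : ℂ} (hf : ContDiffAt ℝ 2 f z)
    (hnorm : ∀ᶠ ζ in 𝓝 z, ip (px f ζ) (px f ζ) = ip (py f ζ) (py f ζ))
    (horth : ∀ᶠ ζ in 𝓝 z, ip (px f ζ) (py f ζ) = 0) :
    ip (planarLaplacian 1 I f z) (px f z) = 0 ∧ ip (planarLaplacian 1 I f z) (py f z) = 0 := by
  have hB {s t : ℂ} := bilin_planarLaplacian_fderiv_apply_eq_zero (u := s) (v := t)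
    isBilinearMap_ip.toContinuousBilinearMap ip_comm hf
  refine ⟨hB hnorm horth, ?_⟩
  rw [planarLaplacian, add_comm]
  exact hB (hnorm.mono fun ζ hζ ↦ hζ.symm) (horth.mono fun ζ hζ ↦ (ip_comm _ _).trans hζ)

theorem IsCMCImmersion.contDiffAt {S : Set ℂ} {H : ℝ} {f : ℂ → M2} (hf : IsCMCImmersion S H f)
    (hS : IsOpen S) {z : ℂ} (hz : z ∈ S) (n : ℕ) : ContDiffAt ℝ n f z :=
  (hf.1.contDiffAt (hS.mem_nhds hz)).of_le (mod_cast le_top)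

theorem IsCMCImmersion.ip_px_eq_ip_py {S : Set ℂ} {H : ℝ} {f : ℂ → M2}
    (hf : IsCMCImmersion S H f) {z : ℂ} (hz : z ∈ S) :
    ip (px f z) (px f z) = ip (py f z) (py f z) := by
  obtain ⟨-, -, u, -, hconf, -⟩ := hf
  rw [(hconf z hz).1, (hconf z hz).2.1]

theorem IsCMCImmersion.ip_py_ne_zero {S : Set ℂ} {H : ℝ} {f : ℂ → M2}
    (hf : IsCMCImmersion S H f) {z : ℂ} (hz : z ∈ S) : ip (py f z) (py f z) ≠ 0 := by
  obtain ⟨-, -, u, -, hconf, -⟩ := hf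
  rw [(hconf z hz).2.1]
  exact_mod_cast (by positivity : 4 * Real.exp (2 * u z) ≠ 0)

theorem IsCMCImmersion.planarLaplacian_eq {S : Set ℂ} {H : ℝ} {f : ℂ → M2}
    (hf : IsCMCImmersion S H f) (hS : IsOpen S) {z : ℂ} (hz : z ∈ S) :
    planarLaplacian 1 I f z = (2 * H) • (px f z * py f z) := by
  have hSz : ∀ᶠ ζ in 𝓝 z, ζ ∈ S := hS.mem_nhds hz
  have hf2 : ContDiffAt ℝ 2 f z := hf.contDiffAt hS hz 2
  have hnorm : ∀ᶠ ζ in 𝓝 z, ip (px f ζ) (px f ζ) = ip (py f ζ) (py f ζ) :=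
    hSz.mono fun ζ hζ ↦ hf.ip_px_eq_ip_py hζ
  obtain ⟨-, hsu, u, -, hconf, Φ, -, hframe⟩ := hf
  obtain ⟨-, hdet, h1, h2, h3⟩ := hframe z hz
  obtain ⟨hΔx, hΔy⟩ := ip_planarLaplacian_eq_zero hf2 hnorm (hSz.mono fun ζ hζ ↦ (hconf ζ hζ).2.2)
  have hunit : IsUnit (Φ z).det := hdet ▸ isUnit_one
  have hnormal : planarLaplacian 1 I f z
      = ip (planarLaplacian 1 I f z) (Φ z * e3 * (Φ z)⁻¹) • (Φ z * e3 * (Φ z)⁻¹) :=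
    eq_ip_smul_conj_e3 hunit
      (trace_planarLaplacian_eq_zero hf2 (hSz.mono fun ζ hζ ↦ (hsu ζ hζ).2))
      (by rw [h1, ip_smul_right, hΔx, mul_zero]) (by rw [h2, ip_smul_right, hΔy, mul_zero])
  have hcurv : ip (planarLaplacian 1 I f z) (Φ z * e3 * (Φ z)⁻¹)
      = ((8 * Real.exp (2 * u z) * H : ℝ) : ℂ) := h3
  have hscale : 8 * Real.exp (2 * u z) * H * ((2 * Real.exp (u z))⁻¹ * (2 * Real.exp (u z))⁻¹)
      = 2 * H := by
    rw [two_mul (u z), Real.exp_add]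
    field_simp
    ring
  rw [hnormal, hcurv, ← conj_e1_mul_conj_e2 hunit, h1, h2, Matrix.smul_mul, Matrix.mul_smul,
    smul_smul, smul_smul, mul_assoc, ← ofReal_mul, ← ofReal_mul, hscale, coe_smul]

end MeanCurvature

section Bjorling

open Filter Topology

theorem exists_rectangle_of_eventually {P : ℂ → Prop} {x₀ : ℝ} (hP : ∀ᶠ z in 𝓝 (x₀ : ℂ), P z) :
    ∃ ε : ℝ, 0 < ε ∧ ∃ δ : ℝ, 0 < δ ∧ ∀ z : ℂ, |z.re - x₀| < ε → |z.im| < δ → P z := by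
  obtain ⟨r, hr, hball⟩ := Metric.eventually_nhds_iff.1 hP
  refine ⟨r / 2, half_pos hr, r / 2, half_pos hr, fun z hre him ↦ hball ?_⟩
  calc dist z x₀ ≤ |(z - x₀).re| + |(z - x₀).im| := by
        rw [dist_eq_norm]
        exact norm_le_abs_re_add_abs_im _
    _ < r / 2 + r / 2 := add_lt_add (by simpa using hre) (by simpa using him)
    _ = r := add_halves r

theorem px_eq_px_of_eventually_ofReal {f g : ℂ → M2} {x : ℝ} (hf : DifferentiableAt ℝ f x)
    (hg : DifferentiableAt ℝ g x) (hfg : ∀ᶠ t : ℝ in 𝓝 x, f t = g t) : px f x = px g x := by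
  have hsub := fderiv_apply_one_eq_zero_of_eventually_ofReal (w := f - g) (hf.sub hg)
    (hfg.mono fun t ht ↦ sub_eq_zero.2 ht)
  rw [fderiv_sub hf hg] at hsub
  exact sub_eq_zero.1 hsub

theorem IsCMCImmersion.py_eq_py {S S' : Set ℂ} {H H' : ℝ} {f f' : ℂ → M2}
    (hf : IsCMCImmersion S H f) (hf' : IsCMCImmersion S' H' f') {z : ℂ} (hz : z ∈ S) (hz' : z ∈ S')
    (hpx : px f z = px f' z) {v : M2} (hv : ∃ c : ℝ, 0 < c ∧ py f z = (c : ℂ) • v)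
    (hv' : ∃ c : ℝ, 0 < c ∧ py f' z = (c : ℂ) • v) : py f z = py f' z := by
  obtain ⟨c, hc, hcv⟩ := hv
  obtain ⟨c', hc', hcv'⟩ := hv'
  refine eq_of_pos_smul_of_ip_self_eq hc hc' hcv hcv' ?_ (hf.ip_py_ne_zero hz)
  rw [← hf.ip_px_eq_ip_py hz, hpx, hf'.ip_px_eq_ip_py hz']

theorem IsCMCImmersion.eventually_eq_of_cauchy_data {S S' : Set ℂ} {H : ℝ} {f f' : ℂ → M2} {x₀ : ℝ}
    (hf : IsCMCImmersion S H f) (hf' : IsCMCImmersion S' H f') (hS : IsOpen S) (hS' : IsOpen S')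
    (hx₀ : (x₀ : ℂ) ∈ S) (hx₀' : (x₀ : ℂ) ∈ S') (hff' : ∀ᶠ x : ℝ in 𝓝 x₀, f x = f' x)
    (hpy : ∀ᶠ x : ℝ in 𝓝 x₀, py f x = py f' x) : ∀ᶠ z in 𝓝 (x₀ : ℂ), f z = f' z :=
  eventually_eq_of_planarLaplacian_eq_bilin ((2 * H) • ContinuousLinearMap.mul ℝ M2)
    (hf.contDiffAt hS hx₀ 3) (hf'.contDiffAt hS' hx₀' 3)
    ((hS.eventually_mem hx₀).mono fun _ hz ↦ hf.planarLaplacian_eq hS hz)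
    ((hS'.eventually_mem hx₀').mono fun _ hz ↦ hf'.planarLaplacian_eq hS' hz) hff' hpy

theorem bjorling_uniqueness_general
    (J : Set ℝ) (hJo : IsOpen J)
    (f₀ v : ℝ → M2)
    (H : ℝ)
    (S S' : Set ℂ) (hS : IsOpen S) (hS' : IsOpen S')
    (hJS : ∀ x ∈ J, (x : ℂ) ∈ S) (hJS' : ∀ x ∈ J, (x : ℂ) ∈ S')
    (f f' : ℂ → M2)
    (hf : IsCMCImmersion S H f) (hf' : IsCMCImmersion S' H f')
    (hfc : ∀ x ∈ J, f (x : ℂ) = f₀ x) (hfc' : ∀ x ∈ J, f' (x : ℂ) = f₀ x)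
    (hfv : ∀ x ∈ J, ∃ c : ℝ, 0 < c ∧ py f (x : ℂ) = (c : ℂ) • v x)
    (hfv' : ∀ x ∈ J, ∃ c : ℝ, 0 < c ∧ py f' (x : ℂ) = (c : ℂ) • v x) :
    ∀ x₀ ∈ J, ∃ ε : ℝ, 0 < ε ∧ ∃ δ : ℝ, 0 < δ ∧
      ∀ z : ℂ, |z.re - x₀| < ε → |z.im| < δ → z ∈ S ∧ z ∈ S' ∧ f z = f' z := by
  intro x₀ hx₀
  have hff' : ∀ x ∈ J, ∀ᶠ t : ℝ in 𝓝 x, f t = f' t := fun x hx ↦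
    (hJo.eventually_mem hx).mono fun t ht ↦ (hfc t ht).trans (hfc' t ht).symm
  have hpx : ∀ x ∈ J, px f x = px f' x := fun x hx ↦ px_eq_px_of_eventually_ofReal
    ((hf.contDiffAt hS (hJS x hx) 1).differentiableAt one_ne_zero)
    ((hf'.contDiffAt hS' (hJS' x hx) 1).differentiableAt one_ne_zero) (hff' x hx)
  have hpy : ∀ x ∈ J, py f x = py f' x := fun x hx ↦
    hf.py_eq_py hf' (hJS x hx) (hJS' x hx) (hpx x hx) (hfv x hx) (hfv' x hx)
  exact exists_rectangle_of_eventually ((hS.eventually_mem (hJS x₀ hx₀)).and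
    ((hS'.eventually_mem (hJS' x₀ hx₀)).and (hf.eventually_eq_of_cauchy_data hf' hS hS'
      (hJS x₀ hx₀) (hJS' x₀ hx₀) (hff' x₀ hx₀) ((hJo.eventually_mem hx₀).mono hpy))))

end Bjorling

/-- solution of the Björling problem (uniqueness): two conformal CMC `H`
immersions with the same Björling data `(f₀, v)` along `J` agree on a rectangular
neighbourhood of every point `(x₀, 0)` of the curve. -/
theorem bjorling_uniqueness
    (J : Set ℝ) (hJo : IsOpen J) (hJc : J.OrdConnected)
    (f₀ v : ℝ → M2)
    (hf₀ : AnalyticOnNhd ℝ f₀ J) (hv : AnalyticOnNhd ℝ v J)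
    (hf₀su : ∀ x ∈ J, (f₀ x)ᴴ = -(f₀ x) ∧ (f₀ x).trace = 0)
    (hvsu : ∀ x ∈ J, (v x)ᴴ = -(v x) ∧ (v x).trace = 0)
    (hreg : ∀ x ∈ J, deriv f₀ x ≠ 0)
    (hvnz : ∀ x ∈ J, v x ≠ 0)
    (horth : ∀ x ∈ J, ip (v x) (deriv f₀ x) = 0)
    (H : ℝ) (hH : H ≠ 0)
    (S S' : Set ℂ) (hS : IsOpen S) (hS' : IsOpen S')
    (hJS : ∀ x ∈ J, (x : ℂ) ∈ S) (hJS' : ∀ x ∈ J, (x : ℂ) ∈ S')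
    (f f' : ℂ → M2)
    (hf : IsCMCImmersion S H f) (hf' : IsCMCImmersion S' H f')
    (hfc : ∀ x ∈ J, f (x : ℂ) = f₀ x) (hfc' : ∀ x ∈ J, f' (x : ℂ) = f₀ x)
    (hfv : ∀ x ∈ J, ∃ c : ℝ, 0 < c ∧ py f (x : ℂ) = (c : ℂ) • v x)
    (hfv' : ∀ x ∈ J, ∃ c : ℝ, 0 < c ∧ py f' (x : ℂ) = (c : ℂ) • v x) :
    ∀ x₀ ∈ J, ∃ ε : ℝ, 0 < ε ∧ ∃ δ : ℝ, 0 < δ ∧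
      ∀ z : ℂ, |z.re - x₀| < ε → |z.im| < δ → z ∈ S ∧ z ∈ S' ∧ f z = f' z :=
  bjorling_uniqueness_general J hJo f₀ v H S S' hS hS' hJS hJS' f f' hf hf' hfc hfc' hfv hfv'
end
end

section
/- (CMC surfaces containing a line segment: existence.) Let J = (α,β) ⊆ ℝ be an open interval (possibly unbounded), θ₀ : J → ℝ a real analytic function with θ₀(x₀) = 0 for some x₀ ∈ J, and H ≠ 0 a real number. Then there exist an open set Σ ⊆ ℂ containing J × {0}, to which θ₀′ extends holomorphically with extension θ̌_x, and a smooth conformal immersion f : Σ → su(2) with constant mean curvature H such that: f(x,0) = 2x·e₁ for all x ∈ J (so f maps J × {0} onto the line segment {(2x,0,0) : x ∈ J} by (x,0) ↦ (2x,0,0)); ∂_y f(x,0)/|∂_y f(x,0)| = cos θ₀(x)·e₂ + sin θ₀(x)·e₃ for all x ∈ J; and the Hopf differential coefficient of f is Q = -i θ̌_x - 2H on Σ. -/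
open Matrix Complex

noncomputable section

attribute [local instance] Matrix.linftyOpNormedAddCommGroup Matrix.linftyOpNormedSpace
  Matrix.linftyOpNormedRing Matrix.linftyOpNormedAlgebra

/-!
Polarize: replace `conj z` by an independent variable `w`. A conformal immersion `f` is given by a
spinor `u` with `∂f/∂z = spinorProd u u`, and it has mean curvature `H` exactly when
`∂u/∂w = H ⟨u, u⋆⟩ J u⋆`, where `u⋆` is the polarization of `star u`, `J` is the rotation by a right
angle, and `⟨u, u⋆⟩` extends `|u|²`. This is a holomorphic ordinary differential equation in `w`,
solved near `(x, x)` by Picard iteration with the data `u z z = (cos (θ z / 2), -I sin (θ z / 2))`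
dictated by the required tangent plane along the line. The equation makes `∂f/∂z` closed, so `f` is
recovered by integrating in `w` from the diagonal, where it is `(2 * z) • e1`. The Hopf differential
is twice the Wronskian of `u` and `∂u/∂z`; it does not depend on `w`, and its value on the diagonal
is `-I * deriv θ z - 2 * H`.
-/

section SeparatelyHolomorphic

open Set Filter Topology Metric
open scoped ContDiff

variable {E : Type*} [NormedAddCommGroup E] [NormedSpace ℂ E]

lemma continuousOn_deriv_of_continuousOn_uncurry [CompleteSpace E] {T : Type*} [TopologicalSpace T]
    {D : Set ℂ} {s : Set T} {u : ℂ → T → E} (hD : IsOpen D)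
    (hu : ContinuousOn (fun q : ℂ × T => u q.1 q.2) (D ×ˢ s))
    (hd : ∀ p ∈ s, DifferentiableOn ℂ (u · p) D) :
    ContinuousOn (fun q : ℂ × T => deriv (u · q.2) q.1) (D ×ˢ s) := by
  rintro ⟨z₀, p₀⟩ ⟨hz₀, hp₀⟩
  have hlim : TendstoLocallyUniformlyOn (fun (q : ℂ × T) z => u z q.2) (u · p₀)
      (𝓝[D ×ˢ s] (z₀, p₀)) D := by
    rw [Metric.tendstoLocallyUniformlyOn_iff]
    intro ε hε z hz
    have hnear : ∀ᶠ q in 𝓝[D] z ×ˢ 𝓝[s] p₀, dist (u q.1 q.2) (u z p₀) < ε / 2 := by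
      rw [← nhdsWithin_prod_eq]
      exact Metric.tendsto_nhds.1 (hu (z, p₀) ⟨hz, hp₀⟩) _ (half_pos hε)
    obtain ⟨near_z, hnear_z, near_p, hnear_p, hdist⟩ := eventually_prod_iff.1 hnear
    refine ⟨{y | near_z y}, hnear_z, ?_⟩
    have hsnd : Tendsto Prod.snd (𝓝[D ×ˢ s] (z₀, p₀)) (𝓝[s] p₀) := by
      rw [nhdsWithin_prod_eq]
      exact tendsto_snd
    filter_upwards [hsnd.eventually hnear_p] with q hq y hy
    have h₁ := hdist hy hq
    have h₂ := hdist hy (hnear_p.self_of_nhdsWithin hp₀)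
    linarith [dist_triangle_right (u y p₀) (u y q.2) (u z p₀)]
  have hderiv := hlim.deriv
    (eventually_mem_nhdsWithin.mono fun q hq => hd q.2 hq.2) hD
  have hfst : Tendsto Prod.fst (𝓝[D ×ˢ s] (z₀, p₀)) (𝓝[D] z₀) := by
    rw [nhdsWithin_prod_eq]
    exact tendsto_fst
  exact tendsto_comp_of_locally_uniform_limit_within
    (((hd p₀ hp₀).deriv hD).continuousOn z₀ hz₀) hfst
    fun v hv => hderiv v hv z₀ hz₀

/-- `u` is continuous on `D₁ ×ˢ D₂` and holomorphic in each variable there. -/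
structure SeparatelyHolomorphicOn (u : ℂ → ℂ → E) (D₁ D₂ : Set ℂ) : Prop where
  continuousOn : ContinuousOn (fun p : ℂ × ℂ => u p.1 p.2) (D₁ ×ˢ D₂)
  left : ∀ w ∈ D₂, DifferentiableOn ℂ (u · w) D₁
  right : ∀ z ∈ D₁, DifferentiableOn ℂ (u z) D₂

namespace SeparatelyHolomorphicOn

variable {u : ℂ → ℂ → E} {D₁ D₂ : Set ℂ}

lemma swap (hu : SeparatelyHolomorphicOn u D₁ D₂) :
    SeparatelyHolomorphicOn (fun w z => u z w) D₂ D₁ where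
  continuousOn := hu.continuousOn.comp continuous_swap.continuousOn fun _ hp => ⟨hp.2, hp.1⟩
  left := hu.right
  right := hu.left

variable [CompleteSpace E]

lemma hasStrictFDerivAt (hu : SeparatelyHolomorphicOn u D₁ D₂) (hD₁ : IsOpen D₁) (hD₂ : IsOpen D₂)
    {p : ℂ × ℂ} (hp : p ∈ D₁ ×ˢ D₂) :
    HasStrictFDerivAt (fun p : ℂ × ℂ => u p.1 p.2)
      ((ContinuousLinearMap.toSpanSingleton ℂ (deriv (u · p.2) p.1)).coprod
        (ContinuousLinearMap.toSpanSingleton ℂ (deriv (u p.1) p.2))) p := by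
  have hnhds : D₁ ×ˢ D₂ ∈ 𝓝 p := (hD₁.prod hD₂).mem_nhds hp
  have hcont₁ := continuousOn_deriv_of_continuousOn_uncurry hD₁ hu.continuousOn hu.left
  have hcont₂ := continuousOn_deriv_of_continuousOn_uncurry hD₂ hu.swap.continuousOn hu.right
  refine hasStrictFDerivAt_uncurry_coprod (f := u)
    (f₁ := fun z w => .toSpanSingleton ℂ (deriv (u · w) z))
    (f₂ := fun z w => .toSpanSingleton ℂ (deriv (u z) w)) ?_ ?_ ?_ ?_
  · filter_upwards [hnhds] with v hv
    exact ((hu.left v.2 hv.2).differentiableAt (hD₁.mem_nhds hv.1)).hasDerivAt.hasFDerivAt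
  · filter_upwards [hnhds] with v hv
    exact ((hu.right v.1 hv.1).differentiableAt (hD₂.mem_nhds hv.2)).hasDerivAt.hasFDerivAt
  · exact ContinuousAt.comp (g := ContinuousLinearMap.toSpanSingleton ℂ)
      (ContinuousLinearMap.toSpanSingletonCLE (𝕜 := ℂ) (E := E)).continuous.continuousAt
      (hcont₁.continuousAt hnhds)
  · exact ContinuousAt.comp (g := ContinuousLinearMap.toSpanSingleton ℂ)
      (ContinuousLinearMap.toSpanSingletonCLE (𝕜 := ℂ) (E := E)).continuous.continuousAt
      ((hcont₂.comp continuous_swap.continuousOn fun _ hq => ⟨hq.2, hq.1⟩).continuousAt hnhds)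

lemma tendstoLocallyUniformlyOn_slope (hu : SeparatelyHolomorphicOn u D₁ D₂) (hD₁ : IsOpen D₁)
    (hD₂ : IsOpen D₂) {z : ℂ} (hz : z ∈ D₁) :
    TendstoLocallyUniformlyOn (fun s w => slope (u · w) z s) (fun w => deriv (u · w) z)
      (𝓝[≠] z) D₂ := by
  rw [Metric.tendstoLocallyUniformlyOn_iff]
  intro ε hε w₀ hw₀
  have hpair : Continuous fun q : ℂ × ℂ => ((q.1, q.2), (z, q.2)) := by fun_prop
  have hstrict := hpair.continuousAt (x := (z, w₀)) |>.eventually <|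
    (hasStrictFDerivAt_iff_isLittleO.1
      (hu.hasStrictFDerivAt hD₁ hD₂ (p := (z, w₀)) ⟨hz, hw₀⟩)).def (half_pos hε)
  obtain ⟨near_z, hnear_z, near_w, hnear_w, hquot⟩ :=
    eventually_prod_iff.1 (nhds_prod_eq (x := z) (y := w₀) ▸ hstrict)
  have hderiv : ∀ᶠ w in 𝓝 w₀, dist (deriv (u · w) z) (deriv (u · w₀) z) < ε / 2 :=
    Metric.tendsto_nhds.1 ((((continuousOn_deriv_of_continuousOn_uncurry hD₁ hu.continuousOn
      hu.left).continuousAt ((hD₁.prod hD₂).mem_nhds ⟨hz, hw₀⟩)).comp_of_eq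
      (f := fun w => (z, w)) (by fun_prop) rfl).tendsto) _ (half_pos hε)
  refine ⟨_, mem_nhdsWithin_of_mem_nhds (hnear_w.and hderiv), ?_⟩
  filter_upwards [mem_nhdsWithin_of_mem_nhds hnear_z, self_mem_nhdsWithin] with s hs hsz w hw
  have hsz' : 0 < ‖s - z‖ := norm_pos_iff.2 (sub_ne_zero.2 hsz)
  have hslope : dist (slope (u · w) z s) (deriv (u · w₀) z) ≤ ε / 2 := by
    have hle : ‖u s w - u z w - (s - z) • deriv (u · w₀) z‖ ≤ ε / 2 * ‖s - z‖ := by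
      simpa using hquot hs hw.1
    have heq : slope (u · w) z s - deriv (u · w₀) z =
        (s - z)⁻¹ • (u s w - u z w - (s - z) • deriv (u · w₀) z) := by
      rw [slope_def_module, smul_sub _ (_ - _), inv_smul_smul₀ (sub_ne_zero.2 hsz)]
    rw [dist_eq_norm, heq, norm_smul, norm_inv, inv_mul_le_iff₀ hsz']
    linarith
  linarith [dist_triangle_right (deriv (u · w) z) (slope (u · w) z s) (deriv (u · w₀) z), hw.2]

lemma deriv_left (hu : SeparatelyHolomorphicOn u D₁ D₂) (hD₁ : IsOpen D₁) (hD₂ : IsOpen D₂) :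
    SeparatelyHolomorphicOn (fun z w => deriv (u · w) z) D₁ D₂ where
  continuousOn := continuousOn_deriv_of_continuousOn_uncurry hD₁ hu.continuousOn hu.left
  left w hw := (hu.left w hw).deriv hD₁
  right z hz := by
    refine (hu.tendstoLocallyUniformlyOn_slope hD₁ hD₂ hz).differentiableOn ?_ hD₂
    filter_upwards [mem_nhdsWithin_of_mem_nhds (hD₁.mem_nhds hz)] with s hs
    exact ((hu.right s hs).sub (hu.right z hz)).const_smul (s - z)⁻¹

lemma deriv_right (hu : SeparatelyHolomorphicOn u D₁ D₂) (hD₁ : IsOpen D₁) (hD₂ : IsOpen D₂) :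
    SeparatelyHolomorphicOn (fun z w => deriv (u z) w) D₁ D₂ :=
  (hu.swap.deriv_left hD₂ hD₁).swap

/-- Osgood's lemma. -/
lemma contDiffOn (hu : SeparatelyHolomorphicOn u D₁ D₂) (hD₁ : IsOpen D₁) (hD₂ : IsOpen D₂) :
    ContDiffOn ℂ ∞ (fun p : ℂ × ℂ => u p.1 p.2) (D₁ ×ˢ D₂) := by
  refine contDiffOn_infty.2 fun n => ?_
  induction n generalizing u with
  | zero => exact contDiffOn_zero.2 hu.continuousOn
  | succ n ih =>
    rw [Nat.cast_succ, contDiffOn_succ_iff_fderiv_of_isOpen (hD₁.prod hD₂)]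
    refine ⟨fun p hp => (hu.hasStrictFDerivAt hD₁ hD₂ hp).differentiableAt.differentiableWithinAt,
      fun h => absurd h (by simp), ?_⟩
    have htoSpan := (ContinuousLinearMap.toSpanSingletonCLE (𝕜 := ℂ) (E := E)).contDiff (n := n)
    have hcoprod :=
      ((htoSpan.comp_contDiffOn (ih (hu.deriv_left hD₁ hD₂))).clm_comp
        (contDiffOn_const (c := .fst ℂ ℂ ℂ))).add
      ((htoSpan.comp_contDiffOn (ih (hu.deriv_right hD₁ hD₂))).clm_comp
        (contDiffOn_const (c := .snd ℂ ℂ ℂ)))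
    exact hcoprod.congr fun p hp => (hu.hasStrictFDerivAt hD₁ hD₂ hp).hasFDerivAt.fderiv

end SeparatelyHolomorphicOn

lemma continuousOn_intervalIntegral_of_continuousOn_uncurry {X : Type*} [TopologicalSpace X]
    [LocallyCompactSpace X] {D : Set X} (hD : IsOpen D) {a b : ℝ}
    (hab : a ≤ b) {k : X → ℝ → E} (hk : ContinuousOn (fun q : X × ℝ => k q.1 q.2) (D ×ˢ Icc a b)) :
    ContinuousOn (fun x => ∫ t in a..b, k x t) D := by
  rw [continuousOn_iff_continuous_domRestrict]
  have : LocallyCompactSpace D := hD.locallyCompactSpace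
  have hcont : Continuous fun q : D × ℝ => k q.1 (projIcc a b hab q.2) :=
    hk.comp_continuous (f := fun q : D × ℝ => ((q.1 : X), (projIcc a b hab q.2 : ℝ)))
      (by fun_prop) fun q => ⟨q.1.2, (projIcc a b hab q.2).2⟩
  refine (intervalIntegral.continuous_parametric_intervalIntegral_of_continuous'
    (μ := MeasureTheory.volume) (f := fun (x : D) t => k x (projIcc a b hab t)) hcont a b).congr
      fun x => ?_
  refine intervalIntegral.integral_congr fun t ht => ?_
  rw [uIcc_of_le hab] at ht
  simp only [projIcc_of_mem hab ht]

lemma differentiableOn_intervalIntegral [CompleteSpace E] {D : Set ℂ} (hD : IsOpen D) {a b : ℝ}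
    (hab : a ≤ b) {k : ℂ → ℝ → E} (hk : ContinuousOn (fun q : ℂ × ℝ => k q.1 q.2) (D ×ˢ Icc a b))
    (hd : ∀ t ∈ Icc a b, DifferentiableOn ℂ (k · t) D) :
    DifferentiableOn ℂ (fun z => ∫ t in a..b, k z t) D := by
  intro z hz
  have hk' := continuousOn_deriv_of_continuousOn_uncurry hD hk hd
  have hslice : ∀ {h : ℂ → ℝ → E}, ContinuousOn (fun q : ℂ × ℝ => h q.1 q.2) (D ×ˢ Icc a b) →
      ∀ y ∈ D, ContinuousOn (h y) (uIcc a b) := fun hh y hy =>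
    hh.comp (f := fun t => (y, t)) (by fun_prop) fun t ht => ⟨hy, uIcc_of_le hab ▸ ht⟩
  have hmeas : ∀ {g : ℝ → E}, ContinuousOn g (uIcc a b) → MeasureTheory.AEStronglyMeasurable g
      (MeasureTheory.volume.restrict (uIoc a b)) := fun hg =>
    (hg.mono uIoc_subset_uIcc).aestronglyMeasurable measurableSet_uIoc
  have hIcc : uIoc a b ⊆ Icc a b := uIcc_of_le hab ▸ uIoc_subset_uIcc
  obtain ⟨R, hR, hRD⟩ := Metric.nhds_basis_closedBall.mem_iff.1 (hD.mem_nhds hz)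
  obtain ⟨C, hC⟩ := ((isCompact_closedBall z R).prod isCompact_Icc).exists_bound_of_continuousOn
    (hk'.mono (prod_mono hRD Subset.rfl))
  have hderiv := intervalIntegral.hasDerivAt_integral_of_dominated_loc_of_deriv_le
    (μ := MeasureTheory.volume) (F := k) (F' := fun y t => deriv (k · t) y) (bound := fun _ => C)
    (closedBall_mem_nhds z hR)
    ((hD.eventually_mem hz).mono fun y hy => hmeas (hslice hk y hy))
    (hslice hk z hz).intervalIntegrable
    (hmeas (hslice (h := fun y t => deriv (k · t) y) hk' z hz))
    (.of_forall fun t ht y hy => hC (y, t) ⟨hy, hIcc ht⟩) intervalIntegrable_const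
    (.of_forall fun t ht y hy =>
      ((hd t (hIcc ht)).differentiableAt (hD.mem_nhds (hRD hy))).hasDerivAt)
  exact hderiv.2.differentiableAt.differentiableWithinAt

lemma continuousOn_comp_segment {V Y : Type*} [NormedAddCommGroup V] [NormedSpace ℝ V]
    [TopologicalSpace Y] {g : V → Y} {D : Set V} (hg : ContinuousOn g D) (hD : Convex ℝ D)
    {z w : V} (hz : z ∈ D) (hw : w ∈ D) :
    ContinuousOn (fun t : ℝ => g (z + t • (w - z))) (Icc 0 1) :=
  hg.comp (by fun_prop) fun _ ht => hD.add_smul_sub_mem hz hw ht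

/-- The integral of `g` along the segment from `z` to `w`. -/
def segmentIntegral (g : ℂ → E) (z w : ℂ) : E :=
  (w - z) • ∫ t in (0 : ℝ)..1, g (z + t • (w - z))

lemma segmentIntegral_self (g : ℂ → E) (z : ℂ) : segmentIntegral g z z = 0 := by
  simp [segmentIntegral]

section SegmentIntegral

variable {g h : ℂ → E} {D : Set ℂ} {z w : ℂ}

lemma segmentIntegral_sub (hg : ContinuousOn g D) (hh : ContinuousOn h D) (hD : Convex ℝ D)
    (hz : z ∈ D) (hw : w ∈ D) :
    segmentIntegral (fun s => g s - h s) z w = segmentIntegral g z w - segmentIntegral h z w := by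
  unfold segmentIntegral
  rw [intervalIntegral.integral_sub
    ((continuousOn_comp_segment hg hD hz hw).intervalIntegrable_of_Icc zero_le_one)
    ((continuousOn_comp_segment hh hD hz hw).intervalIntegrable_of_Icc zero_le_one), smul_sub]

lemma norm_segmentIntegral_le {M : ℝ} (hM : ∀ s ∈ D, ‖g s‖ ≤ M) (hD : Convex ℝ D) (hz : z ∈ D)
    (hw : w ∈ D) : ‖segmentIntegral g z w‖ ≤ ‖w - z‖ * M := by
  have hint : ‖∫ t in (0 : ℝ)..1, g (z + t • (w - z))‖ ≤ M * |1 - 0| := by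
    refine intervalIntegral.norm_integral_le_of_norm_le_const fun t ht => hM _ ?_
    rw [uIoc_of_le zero_le_one] at ht
    exact hD.add_smul_sub_mem hz hw (Ioc_subset_Icc_self ht)
  rw [segmentIntegral, norm_smul]
  gcongr
  simpa using hint

lemma hasDerivAt_segmentIntegral [CompleteSpace E] {c : ℂ} {r : ℝ}
    (hg : DifferentiableOn ℂ g (ball c r)) (hz : z ∈ ball c r) (hw : w ∈ ball c r) :
    HasDerivAt (segmentIntegral g z) (g w) w := by
  obtain ⟨G, hG⟩ := hg.isExactOn_ball
  have hseg : ∀ s ∈ ball c r, segmentIntegral g z s = G s - G z := by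
    intro s hs
    have hint := intervalIntegral.integral_unitInterval_deriv_eq_sub (𝕜 := ℂ) (f := G) (f' := g)
      (z₀ := z) (z₁ := s - z) (continuousOn_comp_segment hg.continuousOn (convex_ball c r) hz hs)
      fun t ht => hG _ ((convex_ball c r).add_smul_sub_mem hz hs ht)
    rwa [add_sub_cancel] at hint
  exact ((hG w hw).sub_const (G z)).congr_of_eventuallyEq
    (Filter.mem_of_superset (isOpen_ball.mem_nhds hw) hseg)

end SegmentIntegral

lemma SeparatelyHolomorphicOn.segmentIntegral [CompleteSpace E] {u : ℂ → ℂ → E} {c : ℂ} {r : ℝ}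
    (hu : SeparatelyHolomorphicOn u (ball c r) (ball c r)) :
    SeparatelyHolomorphicOn (fun z w => segmentIntegral (u z) z w) (ball c r) (ball c r) where
  continuousOn := by
    have hcont : ContinuousOn (fun q : (ℂ × ℂ) × ℝ => u q.1.1 (q.1.1 + q.2 • (q.1.2 - q.1.1)))
        ((ball c r ×ˢ ball c r) ×ˢ Icc 0 1) :=
      hu.continuousOn.comp (f := fun q : (ℂ × ℂ) × ℝ => (q.1.1, q.1.1 + q.2 • (q.1.2 - q.1.1)))
        (by fun_prop)
        fun q hq => ⟨hq.1.1, (convex_ball c r).add_smul_sub_mem hq.1.1 hq.1.2 hq.2⟩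
    exact (continuousOn_snd.sub continuousOn_fst).smul
      (continuousOn_intervalIntegral_of_continuousOn_uncurry (isOpen_ball.prod isOpen_ball)
        zero_le_one hcont)
  left w hw := by
    have hseg : ∀ z ∈ ball c r, ∀ t ∈ Icc (0 : ℝ) 1, z + t • (w - z) ∈ ball c r :=
      fun z hz t ht => (convex_ball c r).add_smul_sub_mem hz hw ht
    refine (differentiableOn_id.const_sub w).smul
      (differentiableOn_intervalIntegral isOpen_ball zero_le_one ?_ fun t ht => ?_)
    · exact hu.continuousOn.comp (f := fun q : ℂ × ℝ => (q.1, q.1 + q.2 • (w - q.1)))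
        (by fun_prop) fun q hq => ⟨hq.1, hseg q.1 hq.1 q.2 hq.2⟩
    · refine ((hu.contDiffOn isOpen_ball isOpen_ball).differentiableOn (by simp)).comp
        (f := fun z => (z, z + t • (w - z))) ?_ fun z hz => ⟨hz, hseg z hz t ht⟩
      exact (by fun_prop : Differentiable ℂ fun z : ℂ => (z, z + t • (w - z))).differentiableOn
  right z hz w hw :=
    (hasDerivAt_segmentIntegral (hu.right z hz) hz hw).differentiableAt.differentiableWithinAt

namespace SeparatelyHolomorphicOn

variable {F : Type*} [NormedAddCommGroup F] [NormedSpace ℂ F] {u : ℂ → ℂ → E} {v : ℂ → ℂ → F}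
  {D₁ D₂ : Set ℂ}

lemma of_left {φ : ℂ → E} (hφ : DifferentiableOn ℂ φ D₁) :
    SeparatelyHolomorphicOn (fun z _ => φ z) D₁ D₂ where
  continuousOn := hφ.continuousOn.comp continuousOn_fst fun _ hp => hp.1
  left _ _ := hφ
  right _ _ := differentiableOn_const _

lemma prodMk (hu : SeparatelyHolomorphicOn u D₁ D₂) (hv : SeparatelyHolomorphicOn v D₁ D₂) :
    SeparatelyHolomorphicOn (fun z w => (u z w, v z w)) D₁ D₂ where
  continuousOn := hu.continuousOn.prodMk hv.continuousOn
  left w hw := (hu.left w hw).prodMk (hv.left w hw)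
  right z hz := (hu.right z hz).prodMk (hv.right z hz)

lemma comp (hu : SeparatelyHolomorphicOn u D₁ D₂) {N : E → F} (hN : Differentiable ℂ N) :
    SeparatelyHolomorphicOn (fun z w => N (u z w)) D₁ D₂ where
  continuousOn := hN.continuous.comp_continuousOn hu.continuousOn
  left w hw := hN.comp_differentiableOn (hu.left w hw)
  right z hz := hN.comp_differentiableOn (hu.right z hz)

lemma neg (hu : SeparatelyHolomorphicOn u D₁ D₂) :
    SeparatelyHolomorphicOn (fun z w => -u z w) D₁ D₂ :=
  hu.comp differentiable_id.neg

lemma add {v : ℂ → ℂ → E} (hu : SeparatelyHolomorphicOn u D₁ D₂)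
    (hv : SeparatelyHolomorphicOn v D₁ D₂) :
    SeparatelyHolomorphicOn (fun z w => u z w + v z w) D₁ D₂ where
  continuousOn := hu.continuousOn.add hv.continuousOn
  left w hw := (hu.left w hw).add (hv.left w hw)
  right z hz := (hu.right z hz).add (hv.right z hz)

lemma of_tendstoUniformlyOn [CompleteSpace E] {ι : Type*} {l : Filter ι} [l.NeBot]
    {U : ι → ℂ → ℂ → E} (hD₁ : IsOpen D₁) (hD₂ : IsOpen D₂)
    (hU : ∀ n, SeparatelyHolomorphicOn (U n) D₁ D₂)
    (hlim : TendstoUniformlyOn (fun n (p : ℂ × ℂ) => U n p.1 p.2) (fun p => u p.1 p.2) l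
      (D₁ ×ˢ D₂)) : SeparatelyHolomorphicOn u D₁ D₂ where
  continuousOn := hlim.continuousOn (Eventually.of_forall fun n => (hU n).continuousOn).frequently
  left w hw := ((hlim.comp (·, w)).mono fun _ hz => ⟨hz, hw⟩).tendstoLocallyUniformlyOn
    |>.differentiableOn (.of_forall fun n => (hU n).left w hw) hD₁
  right z hz := ((hlim.comp (z, ·)).mono fun _ hw => ⟨hz, hw⟩).tendstoLocallyUniformlyOn
    |>.differentiableOn (.of_forall fun n => (hU n).right z hz) hD₂

lemma hasDerivAt_left (hu : SeparatelyHolomorphicOn u D₁ D₂) (hD₁ : IsOpen D₁) {z w : ℂ}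
    (hz : z ∈ D₁) (hw : w ∈ D₂) : HasDerivAt (u · w) (deriv (u · w) z) z :=
  ((hu.left w hw).differentiableAt (hD₁.mem_nhds hz)).hasDerivAt

lemma hasDerivAt_right (hu : SeparatelyHolomorphicOn u D₁ D₂) (hD₂ : IsOpen D₂) {z w : ℂ}
    (hz : z ∈ D₁) (hw : w ∈ D₂) : HasDerivAt (u z) (deriv (u z) w) w :=
  ((hu.right z hz).differentiableAt (hD₂.mem_nhds hw)).hasDerivAt

end SeparatelyHolomorphicOn

open scoped ComplexConjugate

lemma conj_mem_ball_ofReal {x r : ℝ} {z : ℂ} (hz : z ∈ ball (x : ℂ) r) :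
    conj z ∈ ball (x : ℂ) r := by
  rwa [mem_ball, ← conj_ofReal x, dist_conj_conj]

section StarSwap

/-- The polarization of `z ↦ star (u z (conj z))` when `u` is the polarization, in the variables
`z` and `w` replacing `conj z`, of `z ↦ u z (conj z)`. -/
def starSwap {F : Type*} [Star F] (u : ℂ → ℂ → F) (z w : ℂ) : F := star (u (conj w) (conj z))

@[simp]
lemma starSwap_conj {F : Type*} [Star F] (u : ℂ → ℂ → F) (z : ℂ) :
    starSwap u z (conj z) = star (u z (conj z)) := by
  simp [starSwap]

variable [StarAddMonoid E] [StarModule ℂ E] [ContinuousStar E] {u : ℂ → ℂ → E}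

lemma hasDerivAt_starSwap_left {z w : ℂ} {u' : E}
    (hu : HasDerivAt (u (conj w)) u' (conj z)) : HasDerivAt (starSwap u · w) (star u') z := by
  have h := hu.star_conj
  rwa [conj_conj] at h

lemma hasDerivAt_starSwap_right {z w : ℂ} {u' : E}
    (hu : HasDerivAt (u · (conj z)) u' (conj w)) : HasDerivAt (starSwap u z) (star u') w := by
  have h := hu.star_conj
  rwa [conj_conj] at h

lemma SeparatelyHolomorphicOn.starSwap {x r : ℝ}
    (hu : SeparatelyHolomorphicOn u (ball (x : ℂ) r) (ball (x : ℂ) r)) :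
    SeparatelyHolomorphicOn (starSwap u) (ball (x : ℂ) r) (ball (x : ℂ) r) where
  continuousOn := continuous_star.comp_continuousOn <|
    hu.continuousOn.comp (f := fun p : ℂ × ℂ => (conj p.2, conj p.1)) (by fun_prop)
      fun p hp => ⟨conj_mem_ball_ofReal hp.2, conj_mem_ball_ofReal hp.1⟩
  left _ hw _ hz := (hasDerivAt_starSwap_left <| hu.hasDerivAt_right isOpen_ball
    (conj_mem_ball_ofReal hw) (conj_mem_ball_ofReal hz)).differentiableAt.differentiableWithinAt
  right _ hz _ hw := (hasDerivAt_starSwap_right <| hu.hasDerivAt_left isOpen_ball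
    (conj_mem_ball_ofReal hw) (conj_mem_ball_ofReal hz)).differentiableAt.differentiableWithinAt

end StarSwap

end SeparatelyHolomorphic

section Picard

open Set Filter Topology Metric
open scoped ComplexConjugate NNReal

lemma tendstoUniformlyOn_limUnder_of_le_geometric {X Y : Type*} [PseudoMetricSpace Y]
    [CompleteSpace Y] [Nonempty Y] {U : ℕ → X → Y} {s : Set X} {C ρ : ℝ} (hρ₀ : 0 ≤ ρ)
    (hρ : ρ < 1) (hU : ∀ n, ∀ p ∈ s, dist (U n p) (U (n + 1) p) ≤ C * ρ ^ n) :
    TendstoUniformlyOn U (fun p => limUnder atTop (U · p)) atTop s := by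
  rw [Metric.tendstoUniformlyOn_iff]
  intro ε hε
  have hzero : Tendsto (fun n : ℕ => C * ρ ^ n / (1 - ρ)) atTop (𝓝 0) := by
    simpa using ((tendsto_pow_atTop_nhds_zero_of_lt_one hρ₀ hρ).const_mul C).div_const (1 - ρ)
  filter_upwards [hzero.eventually (gt_mem_nhds hε)] with n hn p hp
  have hcauchy := cauchySeq_of_le_geometric ρ C hρ (hU · p hp)
  rw [dist_comm]
  exact (dist_le_of_le_geometric_of_tendsto ρ C hρ (hU · p hp)
    hcauchy.tendsto_limUnder n).trans_lt hn

variable {E : Type*} [NormedAddCommGroup E] [NormedSpace ℂ E] [StarAddMonoid E]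

/-- The Picard iterates for the problem `∂u/∂w = N (u, u⋆)`, `u z z = φ z`, where
`u⋆ = starSwap u`. -/
def picardIterate (N : E × E → E) (φ : ℂ → E) : ℕ → ℂ → ℂ → E
  | 0 => fun z _ => φ z
  | n + 1 => fun z w => φ z + segmentIntegral
      (fun s => N (picardIterate N φ n z s, starSwap (picardIterate N φ n) z s)) z w

/-- The pointwise limit of the Picard iterates. It does not refer to a domain, so that the local
solutions it provides agree wherever their domains overlap. -/
def picardLimit (N : E × E → E) (φ : ℂ → E) (z w : ℂ) : E :=
  limUnder atTop fun n => picardIterate N φ n z w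

lemma picardLimit_self (N : E × E → E) (φ : ℂ → E) (z : ℂ) : picardLimit N φ z z = φ z := by
  have hiter : ∀ n, picardIterate N φ n z z = φ z := by
    rintro (_ | n) <;> simp [picardIterate, segmentIntegral_self]
  simp only [picardLimit, hiter]
  exact tendsto_const_nhds.limUnder_eq

/-- The ball of radius `r` about the real point `x` is so small that the Picard iterates
stay within `δ` of `c` on it and contract by the factor `1 / 2`. -/
structure IsPicardBall (N : E × E → E) (φ : ℂ → E) (x r : ℝ) (c : E) (δ M : ℝ) (L : ℝ≥0) :
    Prop where
  lipschitz : LipschitzOnWith L N (closedBall (c, star c) δ)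
  norm_le : ∀ p ∈ closedBall (c, star c) δ, ‖N p‖ ≤ M
  differentiableOn : DifferentiableOn ℂ φ (ball (x : ℂ) r)
  dist_le : ∀ z ∈ ball (x : ℂ) r, dist (φ z) c ≤ δ / 2
  radius_mul_bound : 2 * r * M ≤ δ / 2
  radius_mul_lipschitz : 2 * r * L ≤ 1 / 2

lemma norm_sub_le_two_mul_of_mem_ball {V : Type*} [SeminormedAddCommGroup V] {c z w : V} {r : ℝ}
    (hz : z ∈ ball c r) (hw : w ∈ ball c r) : ‖w - z‖ ≤ 2 * r := by
  rw [← dist_eq_norm]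
  linarith [dist_triangle_right w z c, mem_ball.1 hz, mem_ball.1 hw]

lemma dist_starSwap_le {F : Type*} [SeminormedAddCommGroup F] [StarAddMonoid F] [NormedStarGroup F]
    {u v : ℂ → ℂ → F} {x r ε : ℝ}
    (huv : ∀ z ∈ ball (x : ℂ) r, ∀ w ∈ ball (x : ℂ) r, dist (u z w) (v z w) ≤ ε) {z w : ℂ}
    (hz : z ∈ ball (x : ℂ) r) (hw : w ∈ ball (x : ℂ) r) :
    dist (starSwap u z w) (starSwap v z w) ≤ ε := by
  rw [dist_eq_norm, starSwap, starSwap, ← star_sub, norm_star, ← dist_eq_norm]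
  exact huv _ (conj_mem_ball_ofReal hw) _ (conj_mem_ball_ofReal hz)

lemma exists_isPicardBall {N : E × E → E} {φ : ℂ → E} {x R : ℝ} (hN : ContDiff ℂ 1 N)
    (hR : 0 < R) (hφ : DifferentiableOn ℂ φ (ball (x : ℂ) R)) :
    ∃ r > 0, r ≤ R ∧ ∃ δ M L, IsPicardBall N φ x r (φ x) δ M L := by
  obtain ⟨L, s, hs, hL⟩ := (hN.contDiffAt (x := (φ x, star (φ x)))).exists_lipschitzOnWith
  obtain ⟨δ, hδ, hδs⟩ := Metric.nhds_basis_closedBall.mem_iff.1 hs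
  set M : ℝ := ‖N (φ x, star (φ x))‖ + L * δ
  have hφcont : ∀ᶠ z in 𝓝 (x : ℂ), dist (φ z) (φ x) < δ / 2 :=
    Metric.tendsto_nhds.1 (hφ.continuousOn.continuousAt (ball_mem_nhds _ hR)) _ (half_pos hδ)
  obtain ⟨r', hr', hdist⟩ := Metric.eventually_nhds_iff_ball.1 hφcont
  have hsmall : ∀ᶠ r in 𝓝[>] (0 : ℝ), r < R ∧ r < r' ∧ 2 * r * M < δ / 2 ∧ 2 * r * L < 1 / 2 := by
    have hlim : ∀ C : ℝ, Tendsto (fun r : ℝ => 2 * r * C) (𝓝[>] 0) (𝓝 0) := fun C =>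
      (Continuous.tendsto' (by fun_prop) 0 0 (by simp)).mono_left nhdsWithin_le_nhds
    have hid : Tendsto (fun r : ℝ => r) (𝓝[>] 0) (𝓝 0) := tendsto_id.mono_left nhdsWithin_le_nhds
    exact (hid.eventually_lt_const hR).and <| (hid.eventually_lt_const hr').and <|
      ((hlim M).eventually_lt_const (half_pos hδ)).and
        ((hlim L).eventually_lt_const (by norm_num))
  obtain ⟨r, ⟨hrR, hrr', hrM, hrL⟩, hr⟩ := (hsmall.and self_mem_nhdsWithin).exists
  refine ⟨r, hr, hrR.le, δ, M, L, hL.mono hδs, fun p hp => ?_, hφ.mono (ball_subset_ball hrR.le),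
    fun z hz => (hdist z (ball_subset_ball hrr'.le hz)).le, hrM.le, hrL.le⟩
  have hLip := (hL.mono hδs).dist_le_mul p hp _ (mem_closedBall_self hδ.le)
  calc ‖N p‖ ≤ ‖N (φ x, star (φ x))‖ + dist (N p) (N (φ x, star (φ x))) := by
        rw [dist_eq_norm]; exact norm_le_norm_add_norm_sub' _ _
    _ ≤ ‖N (φ x, star (φ x))‖ + L * δ := by
        gcongr
        exact hLip.trans (mul_le_mul_of_nonneg_left hp L.2)

namespace IsPicardBall

variable [NormedStarGroup E] {N : E × E → E} {φ : ℂ → E} {x r : ℝ} {c : E} {δ M : ℝ} {L : ℝ≥0}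

lemma dist_picardIterate_le (h : IsPicardBall N φ x r c δ M L) (n : ℕ) :
    ∀ z ∈ ball (x : ℂ) r, ∀ w ∈ ball (x : ℂ) r, dist (picardIterate N φ n z w) c ≤ δ := by
  induction n with
  | zero =>
    intro z hz w _
    have := h.dist_le z hz
    exact this.trans (by linarith [dist_nonneg.trans this])
  | succ n ih =>
    intro z hz w hw
    have hbound : ∀ s ∈ ball (x : ℂ) r,
        ‖N (picardIterate N φ n z s, starSwap (picardIterate N φ n) z s)‖ ≤ M := fun s hs =>
      h.norm_le _ <| max_le (ih z hz s hs) (dist_starSwap_le (v := fun _ _ => c) ih hz hs)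
    have hint := norm_segmentIntegral_le hbound (convex_ball _ _) hz hw
    have hM : 0 ≤ M := (norm_nonneg _).trans (hbound z hz)
    calc dist (picardIterate N φ (n + 1) z w) c
        ≤ dist (φ z) c + ‖segmentIntegral _ z w‖ := by
          rw [picardIterate, dist_eq_norm, dist_eq_norm, add_sub_right_comm]
          exact norm_add_le _ _
      _ ≤ δ / 2 + 2 * r * M := by
          gcongr
          · exact h.dist_le z hz
          · exact hint.trans (by gcongr; exact norm_sub_le_two_mul_of_mem_ball hz hw)
      _ ≤ δ := by linarith [h.radius_mul_bound]

lemma pair_mem_closedBall (h : IsPicardBall N φ x r c δ M L) (n : ℕ) {z w : ℂ}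
    (hz : z ∈ ball (x : ℂ) r) (hw : w ∈ ball (x : ℂ) r) :
    (picardIterate N φ n z w, starSwap (picardIterate N φ n) z w) ∈ closedBall (c, star c) δ :=
  max_le (h.dist_picardIterate_le n z hz w hw)
    (dist_starSwap_le (v := fun _ _ => c) (h.dist_picardIterate_le n) hz hw)

lemma dist_comp_picardIterate_le (h : IsPicardBall N φ x r c δ M L) {n m : ℕ} {ε : ℝ}
    (hdist : ∀ z ∈ ball (x : ℂ) r, ∀ w ∈ ball (x : ℂ) r,
      dist (picardIterate N φ n z w) (picardIterate N φ m z w) ≤ ε) {z w : ℂ}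
    (hz : z ∈ ball (x : ℂ) r) (hw : w ∈ ball (x : ℂ) r) :
    ‖N (picardIterate N φ n z w, starSwap (picardIterate N φ n) z w) -
      N (picardIterate N φ m z w, starSwap (picardIterate N φ m) z w)‖ ≤ L * ε := by
  rw [← dist_eq_norm]
  refine (h.lipschitz.dist_le_mul _ (h.pair_mem_closedBall n hz hw) _
    (h.pair_mem_closedBall m hz hw)).trans (mul_le_mul_of_nonneg_left ?_ L.2)
  exact max_le (hdist z hz w hw) (dist_starSwap_le hdist hz hw)

variable [CompleteSpace E] [StarModule ℂ E]

lemma separatelyHolomorphicOn_picardIterate (h : IsPicardBall N φ x r c δ M L)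
    (hN : Differentiable ℂ N) (n : ℕ) :
    SeparatelyHolomorphicOn (picardIterate N φ n) (ball (x : ℂ) r) (ball (x : ℂ) r) := by
  induction n with
  | zero => exact .of_left h.differentiableOn
  | succ n ih =>
    exact (SeparatelyHolomorphicOn.of_left h.differentiableOn).add
      ((ih.prodMk ih.starSwap).comp hN).segmentIntegral

lemma dist_picardIterate_succ_le (h : IsPicardBall N φ x r c δ M L) (hN : Differentiable ℂ N)
    (n : ℕ) : ∀ z ∈ ball (x : ℂ) r, ∀ w ∈ ball (x : ℂ) r,
      dist (picardIterate N φ n z w) (picardIterate N φ (n + 1) z w) ≤ 2 * δ * (1 / 2) ^ n := by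
  induction n with
  | zero =>
    intro z hz w hw
    have h₀ := h.dist_picardIterate_le 0 z hz w hw
    have h₁ := h.dist_picardIterate_le 1 z hz w hw
    linarith [dist_triangle_right (picardIterate N φ 0 z w) (picardIterate N φ 1 z w) c]
  | succ n ih =>
    intro z hz w hw
    have hcont : ∀ m, ContinuousOn
        (fun s => N (picardIterate N φ m z s, starSwap (picardIterate N φ m) z s))
        (ball (x : ℂ) r) := fun m =>
      have hm := h.separatelyHolomorphicOn_picardIterate hN m
      (((hm.prodMk hm.starSwap).comp hN).right z hz).continuousOn
    have hint := norm_segmentIntegral_le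
      (fun s hs => h.dist_comp_picardIterate_le ih hz hs) (convex_ball _ _) hz hw
    rw [segmentIntegral_sub (hcont n) (hcont (n + 1)) (convex_ball _ _) hz hw] at hint
    rw [picardIterate, picardIterate, dist_add_left, dist_eq_norm]
    have hδ : 0 ≤ 2 * δ * (1 / 2) ^ n := dist_nonneg.trans (ih z hz w hw)
    calc _ ≤ ‖w - z‖ * (L * (2 * δ * (1 / 2) ^ n)) := hint
      _ ≤ 2 * r * (L * (2 * δ * (1 / 2) ^ n)) := by
          gcongr
          exact norm_sub_le_two_mul_of_mem_ball hz hw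
      _ = 2 * r * L * (2 * δ * (1 / 2) ^ n) := by ring
      _ ≤ 1 / 2 * (2 * δ * (1 / 2) ^ n) := by gcongr; exact h.radius_mul_lipschitz
      _ = 2 * δ * (1 / 2) ^ (n + 1) := by ring

lemma tendstoUniformlyOn_picardIterate (h : IsPicardBall N φ x r c δ M L)
    (hN : Differentiable ℂ N) :
    TendstoUniformlyOn (fun n (p : ℂ × ℂ) => picardIterate N φ n p.1 p.2)
      (fun p => picardLimit N φ p.1 p.2) atTop (ball (x : ℂ) r ×ˢ ball (x : ℂ) r) :=
  tendstoUniformlyOn_limUnder_of_le_geometric (by norm_num) (by norm_num)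
    fun n p hp => h.dist_picardIterate_succ_le hN n p.1 hp.1 p.2 hp.2

lemma separatelyHolomorphicOn_picardLimit (h : IsPicardBall N φ x r c δ M L)
    (hN : Differentiable ℂ N) :
    SeparatelyHolomorphicOn (picardLimit N φ) (ball (x : ℂ) r) (ball (x : ℂ) r) :=
  .of_tendstoUniformlyOn isOpen_ball isOpen_ball (h.separatelyHolomorphicOn_picardIterate hN)
    (h.tendstoUniformlyOn_picardIterate hN)

lemma hasDerivAt_picardLimit (h : IsPicardBall N φ x r c δ M L) (hN : Differentiable ℂ N)
    {z w : ℂ} (hz : z ∈ ball (x : ℂ) r) (hw : w ∈ ball (x : ℂ) r) :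
    HasDerivAt (picardLimit N φ z)
      (N (picardLimit N φ z w, starSwap (picardLimit N φ) z w)) w := by
  have hhol := h.separatelyHolomorphicOn_picardIterate hN
  have hunif := h.tendstoUniformlyOn_picardIterate hN
  have hlim : ∀ {z w : ℂ}, z ∈ ball (x : ℂ) r → w ∈ ball (x : ℂ) r →
      Tendsto (fun n => picardIterate N φ n z w) atTop (𝓝 (picardLimit N φ z w)) :=
    fun hz hw => hunif.tendsto_at (x := (_, _)) ⟨hz, hw⟩
  have hderiv_succ : ∀ n, deriv (picardIterate N φ (n + 1) z) w =
      N (picardIterate N φ n z w, starSwap (picardIterate N φ n) z w) := fun n =>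
    ((hasDerivAt_segmentIntegral ((((hhol n).prodMk (hhol n).starSwap).comp hN).right z hz)
      hz hw).const_add (φ z)).deriv
  have hderiv_lim : Tendsto (fun n => deriv (picardIterate N φ n z) w) atTop
      (𝓝 (deriv (picardLimit N φ z) w)) :=
    (((hunif.comp (z, ·)).mono fun _ hs => ⟨hz, hs⟩).tendstoLocallyUniformlyOn.deriv
      (.of_forall fun n => (hhol n).right z hz) isOpen_ball).tendsto_at hw
  have hN_lim : Tendsto (fun n => deriv (picardIterate N φ (n + 1) z) w) atTop
      (𝓝 (N (picardLimit N φ z w, starSwap (picardLimit N φ) z w))) := by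
    simp only [hderiv_succ]
    exact (hN.continuous.tendsto _).comp <| (hlim hz hw).prodMk_nhds <|
      (continuous_star.tendsto _).comp (hlim (conj_mem_ball_ofReal hw) (conj_mem_ball_ofReal hz))
  rw [← tendsto_nhds_unique ((tendsto_add_atTop_iff_nat 1).2 hderiv_lim) hN_lim]
  exact (h.separatelyHolomorphicOn_picardLimit hN).hasDerivAt_right isOpen_ball hz hw

end IsPicardBall

end Picard

section Polarization

open Set Filter Topology Metric
open scoped ComplexConjugate ContDiff

/-- The function of `z` alone that `u` polarizes. -/
def depolarize {E : Type*} (u : ℂ → ℂ → E) (z : ℂ) : E := u z (conj z)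

variable {E : Type*} [NormedAddCommGroup E] [NormedSpace ℂ E]

namespace SeparatelyHolomorphicOn

variable {u v : ℂ → ℂ → E} {D₁ D₂ : Set ℂ} {c : ℂ} {r : ℝ} {z w : ℂ}

lemma eq_of_deriv_right_eq_of_eq_diag (hu : SeparatelyHolomorphicOn u (ball c r) (ball c r))
    (hv : SeparatelyHolomorphicOn v (ball c r) (ball c r)) (hz : z ∈ ball c r)
    (hderiv : ∀ w ∈ ball c r, deriv (u z) w = deriv (v z) w) (hdiag : u z z = v z z)
    (hw : w ∈ ball c r) : u z w = v z w :=
  isOpen_ball.eqOn_of_deriv_eq (convex_ball c r).isPreconnected (hu.right z hz)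
    (hv.right z hz) hderiv hz hdiag hw

variable [CompleteSpace E]

lemma deriv_deriv_comm (hu : SeparatelyHolomorphicOn u D₁ D₂) (hD₁ : IsOpen D₁) (hD₂ : IsOpen D₂)
    (hz : z ∈ D₁) (hw : w ∈ D₂) :
    deriv (fun w => deriv (u · w) z) w = deriv (fun z => deriv (u z) w) z := by
  have hnhds : D₁ ×ˢ D₂ ∈ 𝓝 (z, w) := (hD₁.prod hD₂).mem_nhds ⟨hz, hw⟩
  have hcontDiff := ((hu.contDiffOn hD₁ hD₂).contDiffAt hnhds).of_le
    (WithTop.coe_le_coe.2 (le_top (a := (2 : ℕ∞))))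
  have hsymm := hcontDiff.isSymmSndFDerivAt (by simp) (0, 1) (1, 0)
  have happly : ∀ v y, fderiv ℂ (fderiv ℂ fun p : ℂ × ℂ => u p.1 p.2) (z, w) v y =
      fderiv ℂ (fun p => fderiv ℂ (fun p : ℂ × ℂ => u p.1 p.2) p y) (z, w) v := fun v y => by
    rw [fderiv_clm_apply ((hcontDiff.fderiv_right (m := 1) one_add_one_eq_two.le).differentiableAt
      one_ne_zero) (differentiableAt_const y)]
    simp
  have hleft : (fun p => fderiv ℂ (fun p : ℂ × ℂ => u p.1 p.2) p (1, 0)) =ᶠ[𝓝 (z, w)]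
      fun p => deriv (u · p.2) p.1 := by
    filter_upwards [hnhds] with p hp
    simp [(hu.hasStrictFDerivAt hD₁ hD₂ hp).hasFDerivAt.fderiv]
  have hright : (fun p => fderiv ℂ (fun p : ℂ × ℂ => u p.1 p.2) p (0, 1)) =ᶠ[𝓝 (z, w)]
      fun p => deriv (u p.1) p.2 := by
    filter_upwards [hnhds] with p hp
    simp [(hu.hasStrictFDerivAt hD₁ hD₂ hp).hasFDerivAt.fderiv]
  rw [happly, happly, hleft.fderiv_eq, hright.fderiv_eq,
    ((hu.deriv_left hD₁ hD₂).hasStrictFDerivAt hD₁ hD₂ ⟨hz, hw⟩).hasFDerivAt.fderiv,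
    ((hu.deriv_right hD₁ hD₂).hasStrictFDerivAt hD₁ hD₂ ⟨hz, hw⟩).hasFDerivAt.fderiv] at hsymm
  simpa using hsymm

lemma hasDerivAt_diag (hu : SeparatelyHolomorphicOn u D₁ D₂) (hD₁ : IsOpen D₁) (hD₂ : IsOpen D₂)
    (hz₁ : z ∈ D₁) (hz₂ : z ∈ D₂) :
    HasDerivAt (fun s => u s s) (deriv (u · z) z + deriv (u z) z) z := by
  simpa [Function.comp_def] using
    (hu.hasStrictFDerivAt hD₁ hD₂ (p := (z, z)) ⟨hz₁, hz₂⟩).hasFDerivAt.comp_hasDerivAt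
      (f := fun s => (s, s)) z ((hasDerivAt_id z).prodMk (hasDerivAt_id z))

lemma hasDerivAt_add_segmentIntegral {g k : ℂ → ℂ → E} {φ : ℂ → E}
    (hg : SeparatelyHolomorphicOn g (ball c r) (ball c r))
    (hk : SeparatelyHolomorphicOn k (ball c r) (ball c r)) (hφ : DifferentiableOn ℂ φ (ball c r))
    (hclosed : ∀ z ∈ ball c r, ∀ w ∈ ball c r, deriv (k z) w = deriv (g · w) z)
    (hdiag : ∀ z ∈ ball c r, k z z + g z z = deriv φ z)
    (hz : z ∈ ball c r) (hw : w ∈ ball c r) :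
    HasDerivAt (fun z => φ z + _root_.segmentIntegral (g z) z w) (k z w) z := by
  set U : ℂ → ℂ → E := fun z w => φ z + _root_.segmentIntegral (g z) z w with hU
  have hUhol : SeparatelyHolomorphicOn U (ball c r) (ball c r) :=
    (of_left hφ).add hg.segmentIntegral
  have hright : ∀ z ∈ ball c r, ∀ w ∈ ball c r, deriv (U z) w = g z w := fun z hz w hw =>
    ((hasDerivAt_segmentIntegral (hg.right z hz) hz hw).const_add _).deriv
  have hUdiag : (fun s => U s s) = φ := by simp [hU, segmentIntegral_self]
  have hk_eq : deriv (U · w) z = k z w := by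
    refine eq_of_deriv_right_eq_of_eq_diag (hUhol.deriv_left isOpen_ball isOpen_ball) hk hz
      (fun w hw => ?_) ?_ hw
    · rw [hUhol.deriv_deriv_comm isOpen_ball isOpen_ball hz hw, hclosed z hz w hw]
      refine EventuallyEq.deriv_eq ?_
      filter_upwards [isOpen_ball.mem_nhds hz] with s hs using hright s hs w hw
    · have h := (hUhol.hasDerivAt_diag isOpen_ball isOpen_ball hz hz).deriv
      rw [hUdiag, ← hdiag z hz, hright z hz z hz] at h
      exact (add_right_cancel h).symm
  exact hk_eq ▸ hUhol.hasDerivAt_left isOpen_ball hz hw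

end SeparatelyHolomorphicOn

section Depolarize

variable [NormedSpace ℝ E] [IsScalarTower ℝ ℂ E] [CompleteSpace E] {u : ℂ → ℂ → E} {x r : ℝ}
  {z : ℂ}

lemma contDiffOn_depolarize (hu : SeparatelyHolomorphicOn u (ball (x : ℂ) r) (ball (x : ℂ) r)) :
    ContDiffOn ℝ ∞ (depolarize u) (ball (x : ℂ) r) :=
  ((hu.contDiffOn isOpen_ball isOpen_ball).restrict_scalars ℝ).comp
    (f := fun z => (z, conj z)) (contDiff_id.prodMk conjCLE.contDiff).contDiffOn
    fun _ hz => ⟨hz, conj_mem_ball_ofReal hz⟩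

lemma fderiv_depolarize_apply
    (hu : SeparatelyHolomorphicOn u (ball (x : ℂ) r) (ball (x : ℂ) r)) (hz : z ∈ ball (x : ℂ) r)
    (v : ℂ) : fderiv ℝ (depolarize u) z v =
      v • deriv (u · (conj z)) z + conj v • deriv (u z) (conj z) := by
  have hderiv := ((hu.hasStrictFDerivAt isOpen_ball isOpen_ball (p := (z, conj z))
    ⟨hz, conj_mem_ball_ofReal hz⟩).hasFDerivAt.restrictScalars ℝ).comp
    (f := fun z => (z, conj z)) z ((hasFDerivAt_id z).prodMk conjCLE.hasFDerivAt)
  have heq : depolarize u = (fun p : ℂ × ℂ => u p.1 p.2) ∘ fun z => (z, conj z) := rfl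
  rw [heq, hderiv.fderiv]
  simp

lemma fderiv_fderiv_depolarize_apply
    (hu : SeparatelyHolomorphicOn u (ball (x : ℂ) r) (ball (x : ℂ) r)) (hz : z ∈ ball (x : ℂ) r)
    (v : ℂ) : fderiv ℝ (fun s => fderiv ℝ (depolarize u) s v) z v =
      v ^ 2 • deriv (fun s => deriv (u · (conj z)) s) z +
        (2 * (v * conj v)) • deriv (fun w => deriv (u · w) z) (conj z) +
          conj v ^ 2 • deriv (deriv (u z)) (conj z) := by
  have hleft := hu.deriv_left isOpen_ball isOpen_ball
  have hright := hu.deriv_right isOpen_ball isOpen_ball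
  have hz' := conj_mem_ball_ofReal hz
  have hsum : SeparatelyHolomorphicOn (fun z w => v • deriv (u · w) z + conj v • deriv (u z) w)
      (ball (x : ℂ) r) (ball (x : ℂ) r) :=
    (hleft.prodMk hright).comp (N := fun p => v • p.1 + conj v • p.2) (by fun_prop)
  have heq : (fun s => fderiv ℝ (depolarize u) s v) =ᶠ[𝓝 z]
      depolarize fun z w => v • deriv (u · w) z + conj v • deriv (u z) w := by
    filter_upwards [isOpen_ball.mem_nhds hz] with s hs using fderiv_depolarize_apply hu hs v
  have hderiv_left := ((hleft.hasDerivAt_left isOpen_ball hz hz').fun_const_smul v).fun_add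
    ((hright.hasDerivAt_left isOpen_ball hz hz').fun_const_smul (conj v))
  have hderiv_right := ((hleft.hasDerivAt_right isOpen_ball hz hz').fun_const_smul v).fun_add
    ((hright.hasDerivAt_right isOpen_ball hz hz').fun_const_smul (conj v))
  rw [heq.fderiv_eq, fderiv_depolarize_apply hsum hz, hderiv_left.deriv, hderiv_right.deriv,
    ← hu.deriv_deriv_comm isOpen_ball isOpen_ball hz hz']
  module

lemma fderiv_fderiv_depolarize_one_add_I
    (hu : SeparatelyHolomorphicOn u (ball (x : ℂ) r) (ball (x : ℂ) r))
    (hz : z ∈ ball (x : ℂ) r) :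
    fderiv ℝ (fun s => fderiv ℝ (depolarize u) s 1) z 1 +
        fderiv ℝ (fun s => fderiv ℝ (depolarize u) s I) z I =
      (4 : ℂ) • deriv (fun w => deriv (u · w) z) (conj z) := by
  rw [fderiv_fderiv_depolarize_apply hu hz, fderiv_fderiv_depolarize_apply hu hz, conj_I,
    map_one (starRingEnd ℂ), neg_sq, I_sq, mul_neg, I_mul_I]
  module

end Depolarize

variable {u : ℂ → ℂ → M2} {x r : ℝ} {z : ℂ}

lemma px_depolarize (hu : SeparatelyHolomorphicOn u (ball (x : ℂ) r) (ball (x : ℂ) r))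
    (hz : z ∈ ball (x : ℂ) r) :
    px (depolarize u) z = deriv (u · (conj z)) z + deriv (u z) (conj z) := by
  have h := fderiv_depolarize_apply hu hz 1
  rw [map_one (starRingEnd ℂ), one_smul, one_smul] at h
  exact h

lemma py_depolarize (hu : SeparatelyHolomorphicOn u (ball (x : ℂ) r) (ball (x : ℂ) r))
    (hz : z ∈ ball (x : ℂ) r) :
    py (depolarize u) z = I • (deriv (u · (conj z)) z - deriv (u z) (conj z)) := by
  have h := fderiv_depolarize_apply hu hz I
  rw [conj_I, neg_smul, ← sub_eq_add_neg, ← smul_sub] at h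
  exact h

lemma dz_depolarize (hu : SeparatelyHolomorphicOn u (ball (x : ℂ) r) (ball (x : ℂ) r))
    (hz : z ∈ ball (x : ℂ) r) : dz (depolarize u) z = deriv (u · (conj z)) z := by
  rw [dz, px_depolarize hu hz, py_depolarize hu hz, smul_smul, I_mul_I]
  module

lemma dz_dz_depolarize (hu : SeparatelyHolomorphicOn u (ball (x : ℂ) r) (ball (x : ℂ) r))
    (hz : z ∈ ball (x : ℂ) r) :
    dz (dz (depolarize u)) z = deriv (fun s => deriv (u · (conj z)) s) z := by
  have heq : dz (depolarize u) =ᶠ[𝓝 z] depolarize fun z w => deriv (u · w) z := by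
    filter_upwards [isOpen_ball.mem_nhds hz] with s hs using dz_depolarize hu hs
  have hcongr : dz (dz (depolarize u)) z = dz (depolarize fun z w => deriv (u · w) z) z := by
    simp only [dz, px, py] at heq ⊢
    rw [heq.fderiv_eq]
  exact hcongr.trans (dz_depolarize (hu.deriv_left isOpen_ball isOpen_ball) hz)

lemma px_px_add_py_py_depolarize
    (hu : SeparatelyHolomorphicOn u (ball (x : ℂ) r) (ball (x : ℂ) r)) (hz : z ∈ ball (x : ℂ) r) :
    px (px (depolarize u)) z + py (py (depolarize u)) z =
      (4 : ℂ) • deriv (fun w => deriv (u · w) z) (conj z) :=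
  fderiv_fderiv_depolarize_one_add_I hu hz

end Polarization

section AnalyticExtension

open Set Filter Topology Metric
open scoped ComplexConjugate NNReal ENNReal

lemma ofReal_mem_ball_ofReal {x t r : ℝ} : (t : ℂ) ∈ ball (x : ℂ) r ↔ t ∈ ball x r := by
  rw [mem_ball, mem_ball, Complex.dist_of_im_eq (by simp), ofReal_re, ofReal_re]

lemma ofReal_re_mem_ball_ofReal {x r : ℝ} {z : ℂ} (hz : z ∈ ball (x : ℂ) r) :
    (z.re : ℂ) ∈ ball (x : ℂ) r := by
  rw [ofReal_mem_ball_ofReal, mem_ball, Real.dist_eq]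
  exact (by simpa using abs_re_le_norm (z - x) : |z.re - x| ≤ ‖z - x‖).trans_lt
    (mem_ball_iff_norm.1 hz)

lemma eqOn_of_eq_ofReal {E : Type*} [NormedAddCommGroup E] [NormedSpace ℂ E] [CompleteSpace E]
    {U : Set ℂ} (hU : IsOpen U) (hUc : IsPreconnected U)
    {g h : ℂ → E} (hg : DifferentiableOn ℂ g U) (hh : DifferentiableOn ℂ h U)
    (hgh : ∀ t : ℝ, (t : ℂ) ∈ U → g t = h t) {t₀ : ℝ} (ht₀ : (t₀ : ℂ) ∈ U) : EqOn g h U := by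
  have hreal : Tendsto ((↑) : ℝ → ℂ) (𝓝[≠] t₀) (𝓝[≠] (t₀ : ℂ)) :=
    continuous_ofReal.continuousWithinAt.tendsto_nhdsWithin fun t ht => by simpa using ht
  refine (hg.analyticOnNhd hU).eqOn_of_preconnected_of_frequently_eq (hh.analyticOnNhd hU)
    hUc ht₀ (hreal.frequently (Eventually.frequently ?_))
  filter_upwards [nhdsWithin_le_nhds
    (continuous_ofReal.continuousAt.eventually_mem (hU.mem_nhds ht₀))] with t ht using hgh t ht

variable {E : Type*} [NormedAddCommGroup E] [NormedSpace ℂ E] [CompleteSpace E]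

lemma differentiableOn_tsum_pow_smul {a : ℕ → E} {r : ℝ≥0} (hr : 0 < r)
    (ha : Summable fun n => (r : ℂ) ^ n • a n) :
    DifferentiableOn ℂ (fun z : ℂ => ∑' n, z ^ n • a n) (ball 0 r) := by
  let p : FormalMultilinearSeries ℂ ℂ E := fun n => .mkPiRing ℂ (Fin n) (a n)
  have hsum : (fun z : ℂ => ∑' n, z ^ n • a n) = p.sum := by
    ext z
    simp [p, FormalMultilinearSeries.sum]
  have hradius : (r : ℝ≥0∞) ≤ p.radius := by
    refine p.le_radius_of_tendsto (l := 0) (ha.tendsto_atTop_zero.norm.congr' ?_ |>.trans (by simp))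
    exact .of_forall fun n => by simp [p, norm_smul, mul_comm]
  have hr' : (0 : ℝ≥0∞) < r := ENNReal.coe_pos.2 hr
  have hball := (p.hasFPowerSeriesOnBall (hr'.trans_le hradius)).mono hr' hradius
  rw [hsum, ← Metric.eball_coe]
  exact hball.differentiableOn

lemma exists_differentiableOn_ball_eq_ofReal {f : ℝ → E} {x : ℝ} (hf : AnalyticAt ℝ f x) :
    ∃ g : ℂ → E, ∃ r > 0, DifferentiableOn ℂ g (ball (x : ℂ) r) ∧ ∀ t ∈ ball x r, g t = f t := by
  obtain ⟨p, hp⟩ := hf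
  obtain ⟨ε, hε, hsum⟩ := Metric.eventually_nhds_iff_ball.1 (hasFPowerSeriesAt_iff.1 hp)
  simp only [← Complex.coe_smul, ofReal_pow] at hsum
  obtain ⟨r, hr, hrε⟩ := exists_between hε
  lift r to ℝ≥0 using hr.le
  refine ⟨fun z => ∑' n, (z - x) ^ n • p.coeff n, r, hr, ?_, fun t ht => ?_⟩
  · have hdiff := differentiableOn_tsum_pow_smul (mod_cast hr)
      (hsum r (by simpa [abs_of_pos hr] using hrε)).summable
    exact hdiff.comp (differentiableOn_id.sub_const _) fun z hz => by
      simpa [dist_eq_norm] using hz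
  · have ht' : t - x ∈ ball (0 : ℝ) ε := by simpa [dist_eq_norm] using ball_subset_ball hrε.le ht
    simpa using (hsum _ ht').tsum_eq

lemma exists_differentiableOn_balls_eq_ofReal {f : ℝ → E} {J : Set ℝ}
    (hf : AnalyticOnNhd ℝ f J) :
    ∃ g : ℂ → E, ∀ x ∈ J, ∃ r > 0, DifferentiableOn ℂ g (ball (x : ℂ) r) ∧
      ∀ t ∈ ball x r, g t = f t := by
  classical
  choose! g r hr hg hgf using fun x hx => exists_differentiableOn_ball_eq_ofReal (hf x hx)
  let G : ℂ → E := fun z => if h : ∃ x ∈ J, z ∈ ball (x : ℂ) (r x) then g h.choose z else 0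
  have hG : ∀ x ∈ J, EqOn G (g x) (ball (x : ℂ) (r x)) := by
    intro x hx z hz
    have h : ∃ x ∈ J, z ∈ ball (x : ℂ) (r x) := ⟨x, hx, hz⟩
    obtain ⟨hy, hzy⟩ := h.choose_spec
    have hGz : G z = g h.choose z := dif_pos h
    rw [hGz]
    refine eqOn_of_eq_ofReal (U := ball (h.choose : ℂ) (r h.choose) ∩ ball (x : ℂ) (r x))
      (isOpen_ball.inter isOpen_ball)
      ((convex_ball _ _).inter (convex_ball _ _)).isPreconnected
      ((hg _ hy).mono inter_subset_left) ((hg x hx).mono inter_subset_right) (fun t ht => ?_)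
      ⟨ofReal_re_mem_ball_ofReal hzy, ofReal_re_mem_ball_ofReal hz⟩ ⟨hzy, hz⟩
    rw [hgf _ hy t (ofReal_mem_ball_ofReal.1 ht.1), hgf x hx t (ofReal_mem_ball_ofReal.1 ht.2)]
  refine ⟨G, fun x hx => ⟨r x, hr x hx, (hg x hx).congr (hG x hx), fun t ht => ?_⟩⟩
  rw [hG x hx (ofReal_mem_ball_ofReal.2 ht), hgf x hx t ht]

lemma conj_eq_of_eq_ofReal {θ : ℂ → ℂ} {θ₀ : ℝ → ℝ} {x r : ℝ} (hr : 0 < r)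
    (hθ : DifferentiableOn ℂ θ (ball (x : ℂ) r)) (hreal : ∀ t ∈ ball x r, θ t = θ₀ t) {z : ℂ}
    (hz : z ∈ ball (x : ℂ) r) : θ (conj z) = conj (θ z) := by
  have hconj : DifferentiableOn ℂ (conj ∘ θ ∘ conj) (ball (x : ℂ) r) := fun s hs =>
    (conj_conj s ▸ ((hθ.differentiableAt
      (isOpen_ball.mem_nhds (conj_mem_ball_ofReal hs))).conj_conj)).differentiableWithinAt
  have heq := eqOn_of_eq_ofReal isOpen_ball (convex_ball _ _).isPreconnected hθ hconj
    (fun t ht => by simp [hreal t (ofReal_mem_ball_ofReal.1 ht)]) (mem_ball_self hr)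
  simpa using heq (conj_mem_ball_ofReal hz)

lemma deriv_eq_of_eq_ofReal {θ : ℂ → ℂ} {θ₀ : ℝ → ℝ} {x r : ℝ} (hr : 0 < r)
    (hθ : DifferentiableOn ℂ θ (ball (x : ℂ) r)) (hreal : ∀ t ∈ ball x r, θ t = θ₀ t) :
    deriv θ x = deriv θ₀ x := by
  have hθx := (hθ.differentiableAt (ball_mem_nhds _ hr)).hasDerivAt
  have hθ₀ : DifferentiableAt ℝ θ₀ x :=
    hθx.real_of_complex.differentiableAt.congr_of_eventuallyEq <|
      mem_of_superset (ball_mem_nhds x hr) fun t ht => by simp [hreal t ht]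
  refine hθx.comp_ofReal.unique (hθ₀.hasDerivAt.ofReal_comp.congr_of_eventuallyEq ?_)
  filter_upwards [ball_mem_nhds x hr] with t ht using hreal t ht

end AnalyticExtension

section Spinor

open scoped ComplexConjugate ContDiff

/-- The determinant form on `ℂ²`. -/
def spinorDet (p q : ℂ × ℂ) : ℂ := p.1 * q.2 - p.2 * q.1

/-- Rotation of `ℂ²` by a right angle; `p ↦ spinorRot (star p)` is the quaternionic structure. -/
def spinorRot (p : ℂ × ℂ) : ℂ × ℂ := (-p.2, p.1)

/-- The symmetric product `ℂ² × ℂ² → sl(2, ℂ)`, identifying `sl(2, ℂ)` with the symmetric square of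
`ℂ²`. A surface with `∂f/∂z = spinorProd u u` is conformal (Weierstrass representation). -/
def spinorProd (p q : ℂ × ℂ) : M2 :=
  (p.1 * q.1 - p.2 * q.2) • e1 - (I * (p.1 * q.1 + p.2 * q.2)) • e2 +
    (p.1 * q.2 + p.2 * q.1) • e3

lemma ip_smul_smul (a b : ℂ) (X Y : M2) : ip (a • X) (b • Y) = a * b * ip X Y := by
  simp only [ip, smul_mul_smul_comm, trace_smul, smul_eq_mul]
  ring

lemma hasDerivAt_fst {u : ℂ → ℂ × ℂ} {u' : ℂ × ℂ} {z : ℂ} (hu : HasDerivAt u u' z) :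
    HasDerivAt (fun s => (u s).1) u'.1 z :=
  (ContinuousLinearMap.fst ℂ ℂ ℂ).hasFDerivAt.comp_hasDerivAt z hu

lemma hasDerivAt_snd {u : ℂ → ℂ × ℂ} {u' : ℂ × ℂ} {z : ℂ} (hu : HasDerivAt u u' z) :
    HasDerivAt (fun s => (u s).2) u'.2 z :=
  (ContinuousLinearMap.snd ℂ ℂ ℂ).hasFDerivAt.comp_hasDerivAt z hu

lemma spinorProd_eq (p q : ℂ × ℂ) :
    spinorProd p q = I • !![p.1 * q.2 + p.2 * q.1, -2 * (p.1 * q.1);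
      2 * (p.2 * q.2), -(p.1 * q.2 + p.2 * q.1)] := by
  ext i j
  fin_cases i <;> fin_cases j <;> simp [spinorProd, e1, e2, e3] <;> ring

lemma ip_spinorProd (p q r s : ℂ × ℂ) : ip (spinorProd p q) (spinorProd r s) =
    -(spinorDet p r * spinorDet q s + spinorDet p s * spinorDet q r) := by
  simp only [ip, spinorProd_eq, spinorDet, smul_mul_smul_comm, I_mul_I, trace_smul, smul_eq_mul,
    trace_fin_two, mul_apply, Fin.sum_univ_two, of_apply, cons_val', cons_val_zero, cons_val_one,
    cons_val_fin_one]
  ring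

lemma spinorProd_comm (p q : ℂ × ℂ) : spinorProd p q = spinorProd q p := by
  simp only [spinorProd, mul_comm q.1, mul_comm q.2, add_comm (p.1 * q.2)]

lemma spinorProd_smul (c : ℂ) (p q : ℂ × ℂ) : spinorProd p (c • q) = c • spinorProd p q := by
  simp only [spinorProd, Prod.smul_fst, Prod.smul_snd, smul_eq_mul]
  module

lemma star_spinorProd (p q : ℂ × ℂ) : star (spinorProd p q) =
    spinorProd (spinorRot (star p)) (spinorRot (star q)) := by
  ext i j
  fin_cases i <;> fin_cases j <;> simp [spinorProd_eq, spinorRot, star_apply] <;> ring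

lemma trace_spinorProd (p q : ℂ × ℂ) : (spinorProd p q).trace = 0 := by
  simp only [spinorProd_eq, trace_smul, trace_fin_two_of, add_neg_cancel, smul_zero]

lemma hasDerivAt_spinorProd {u v : ℂ → ℂ × ℂ} {u' v' : ℂ × ℂ} {z : ℂ} (hu : HasDerivAt u u' z)
    (hv : HasDerivAt v v' z) :
    HasDerivAt (fun s => spinorProd (u s) (v s)) (spinorProd u' (v z) + spinorProd (u z) v') z := by
  have h₁ := (hasDerivAt_fst hu).mul (hasDerivAt_fst hv)
  have h₂ := (hasDerivAt_snd hu).mul (hasDerivAt_snd hv)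
  have h₃ := ((hasDerivAt_fst hu).mul (hasDerivAt_snd hv)).add
    ((hasDerivAt_snd hu).mul (hasDerivAt_fst hv))
  refine ((((h₁.sub h₂).smul_const e1).sub (((h₁.add h₂).const_mul I).smul_const e2)).add
    (h₃.smul_const e3)).congr_deriv ?_
  simp only [spinorProd]
  module

lemma hasDerivAt_spinorDet {u v : ℂ → ℂ × ℂ} {u' v' : ℂ × ℂ} {z : ℂ} (hu : HasDerivAt u u' z)
    (hv : HasDerivAt v v' z) :
    HasDerivAt (fun s => spinorDet (u s) (v s)) (spinorDet u' (v z) + spinorDet (u z) v') z := by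
  refine (((hasDerivAt_fst hu).mul (hasDerivAt_snd hv)).sub
    ((hasDerivAt_snd hu).mul (hasDerivAt_fst hv))).congr_deriv ?_
  simp only [spinorDet]
  ring

/-- The squared norm of a vector of `ℂ²` (`ℂ × ℂ` itself carries the supremum norm). -/
def spinorNormSq (p : ℂ × ℂ) : ℝ := normSq p.1 + normSq p.2

/-- The matrix with columns `p` and `spinorRot (star p)`, a multiple of a matrix in `SU(2)`. -/
def spinorMatrix (p : ℂ × ℂ) : M2 := !![p.1, -conj p.2; p.2, conj p.1]

/-- The matrix in `SU(2)` proportional to `spinorMatrix p`. -/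
def spinorFrame (p : ℂ × ℂ) : M2 := ((√(spinorNormSq p))⁻¹ : ℂ) • spinorMatrix p

variable {p : ℂ × ℂ}

lemma spinorDet_spinorRot_star (p : ℂ × ℂ) : spinorDet p (spinorRot (star p)) = spinorNormSq p := by
  simp [spinorDet, spinorRot, spinorNormSq, mul_conj]

lemma ip_spinorProd_spinorRot_star (p q : ℂ × ℂ) :
    ip (spinorProd p (spinorRot (star p))) (spinorProd p q) = spinorNormSq p * spinorDet p q := by
  rw [ip_spinorProd, ← spinorDet_spinorRot_star]
  simp only [spinorDet]
  ring

lemma spinorNormSq_pos (hp : p ≠ 0) : 0 < spinorNormSq p := by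
  by_contra! h
  have h₁ := normSq_nonneg p.1
  have h₂ := normSq_nonneg p.2
  simp only [spinorNormSq] at h
  exact hp (Prod.ext (normSq_eq_zero.1 (by linarith)) (normSq_eq_zero.1 (by linarith)))

lemma conjTranspose_spinorMatrix (p : ℂ × ℂ) :
    (spinorMatrix p)ᴴ = !![conj p.1, conj p.2; -p.2, p.1] := by
  ext i j
  fin_cases i <;> fin_cases j <;> simp [spinorMatrix]

lemma conjTranspose_spinorMatrix_mul_self (p : ℂ × ℂ) :
    (spinorMatrix p)ᴴ * spinorMatrix p = (spinorNormSq p : ℂ) • (1 : M2) := by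
  rw [conjTranspose_spinorMatrix, spinorMatrix, mul_fin_two, one_fin_two]
  simp only [spinorNormSq, ofReal_add, ← mul_conj, smul_of, smul_cons, smul_empty, smul_eq_mul]
  ring_nf

lemma ip_spinorMatrix_mul_mul (p : ℂ × ℂ) (X Y : M2) :
    ip (spinorMatrix p * X * (spinorMatrix p)ᴴ) (spinorMatrix p * Y * (spinorMatrix p)ᴴ) =
      (spinorNormSq p : ℂ) ^ 2 * ip X Y := by
  have hmul : spinorMatrix p * X * (spinorMatrix p)ᴴ * (spinorMatrix p * Y * (spinorMatrix p)ᴴ) =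
      (spinorNormSq p : ℂ) • (spinorMatrix p * (X * Y) * (spinorMatrix p)ᴴ) := by
    rw [Matrix.mul_assoc (spinorMatrix p * X), ← Matrix.mul_assoc _ (spinorMatrix p * Y),
      ← Matrix.mul_assoc _ (spinorMatrix p), conjTranspose_spinorMatrix_mul_self]
    simp only [smul_mul_assoc, mul_smul_comm, Matrix.one_mul, Matrix.mul_assoc]
  rw [ip, hmul, trace_smul, trace_mul_comm, ← Matrix.mul_assoc,
    conjTranspose_spinorMatrix_mul_self, smul_mul_assoc, Matrix.one_mul, trace_smul, ip,
    smul_eq_mul, smul_eq_mul]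
  ring

lemma spinorMatrix_mul_e1_mul (p : ℂ × ℂ) : (2 : ℂ) • (spinorMatrix p * e1 * (spinorMatrix p)ᴴ) =
    spinorProd p p - star (spinorProd p p) := by
  rw [star_spinorProd, spinorProd_eq, spinorProd_eq, conjTranspose_spinorMatrix, spinorMatrix, e1,
    mul_fin_two, mul_fin_two]
  ext i j
  fin_cases i <;> fin_cases j <;> simp [spinorRot] <;> ring

lemma spinorMatrix_mul_e2_mul (p : ℂ × ℂ) : (2 : ℂ) • (spinorMatrix p * e2 * (spinorMatrix p)ᴴ) =
    I • (spinorProd p p + star (spinorProd p p)) := by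
  rw [star_spinorProd, spinorProd_eq, spinorProd_eq, ← smul_add, smul_smul, I_mul_I,
    conjTranspose_spinorMatrix, spinorMatrix, e2, mul_fin_two, mul_fin_two]
  ext i j
  fin_cases i <;> fin_cases j <;> simp [spinorRot] <;> ring

lemma spinorMatrix_mul_e3_mul (p : ℂ × ℂ) : spinorMatrix p * e3 * (spinorMatrix p)ᴴ =
    spinorProd p (spinorRot (star p)) := by
  rw [spinorProd_eq, conjTranspose_spinorMatrix, spinorMatrix, e3, mul_fin_two, mul_fin_two]
  ext i j
  fin_cases i <;> fin_cases j <;> simp [spinorRot] <;> ring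

lemma sqrt_spinorNormSq_inv_mul_self (p : ℂ × ℂ) :
    ((√(spinorNormSq p))⁻¹ : ℂ) * (√(spinorNormSq p) : ℂ)⁻¹ = (spinorNormSq p : ℂ)⁻¹ := by
  have hnonneg : 0 ≤ spinorNormSq p := add_nonneg (normSq_nonneg _) (normSq_nonneg _)
  rw [← mul_inv, ← ofReal_mul, Real.mul_self_sqrt hnonneg]

lemma conjTranspose_spinorFrame (p : ℂ × ℂ) :
    (spinorFrame p)ᴴ = ((√(spinorNormSq p))⁻¹ : ℂ) • (spinorMatrix p)ᴴ := by
  rw [spinorFrame, conjTranspose_smul, star_inv₀, star_def, conj_ofReal]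

lemma conjTranspose_spinorFrame_mul_self (hp : p ≠ 0) : (spinorFrame p)ᴴ * spinorFrame p = 1 := by
  rw [conjTranspose_spinorFrame, spinorFrame, smul_mul_smul_comm, sqrt_spinorNormSq_inv_mul_self,
    conjTranspose_spinorMatrix_mul_self,
    inv_smul_smul₀ (ofReal_ne_zero.2 (spinorNormSq_pos hp).ne')]

lemma det_spinorFrame (hp : p ≠ 0) : (spinorFrame p).det = 1 := by
  have hdet : (spinorMatrix p).det = spinorNormSq p := by
    rw [spinorMatrix, det_fin_two_of, ← spinorDet_spinorRot_star, spinorDet, spinorRot]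
    simp only [Prod.fst_star, Prod.snd_star, star_def]
    ring
  rw [spinorFrame, det_smul, hdet, Fintype.card_fin, sq, sqrt_spinorNormSq_inv_mul_self,
    inv_mul_cancel₀ (ofReal_ne_zero.2 (spinorNormSq_pos hp).ne')]

lemma spinorFrame_mul_mul_inv (hp : p ≠ 0) (X : M2) :
    spinorFrame p * X * (spinorFrame p)⁻¹ =
      ((spinorNormSq p)⁻¹ : ℂ) • (spinorMatrix p * X * (spinorMatrix p)ᴴ) := by
  rw [inv_eq_left_inv (conjTranspose_spinorFrame_mul_self hp), conjTranspose_spinorFrame,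
    spinorFrame, smul_mul_assoc, smul_mul_smul_comm, sqrt_spinorNormSq_inv_mul_self]

lemma spinorFrame_mul_e3_mul_inv (hp : p ≠ 0) : spinorFrame p * e3 * (spinorFrame p)⁻¹ =
    ((spinorNormSq p)⁻¹ : ℂ) • spinorProd p (spinorRot (star p)) := by
  rw [spinorFrame_mul_mul_inv hp, spinorMatrix_mul_e3_mul]

lemma contDiff_spinorNormSq : ContDiff ℝ ∞ spinorNormSq := by
  have hre := reCLM.contDiff (n := ∞)
  have him := imCLM.contDiff (n := ∞)
  have h : ∀ g : ℂ × ℂ → ℂ, ContDiff ℝ ∞ g → ContDiff ℝ ∞ fun p => normSq (g p) := fun g hg =>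
    ((hre.comp hg).mul (hre.comp hg)).add ((him.comp hg).mul (him.comp hg))
  exact (h _ contDiff_fst).add (h _ contDiff_snd)

lemma contDiffOn_spinorFrame : ContDiffOn ℝ ∞ spinorFrame {p | p ≠ 0} := by
  have hmatrix : ContDiff ℝ ∞ spinorMatrix := by
    have heq : spinorMatrix = fun p => p.1 • !![1, 0; 0, 0] + conj p.1 • !![0, 0; 0, 1] +
        p.2 • !![0, 0; 1, 0] - conj p.2 • (!![0, 1; 0, 0] : M2) := by
      ext p i j
      fin_cases i <;> fin_cases j <;> simp [spinorMatrix]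
    have hconj : ContDiff ℝ ∞ (conj : ℂ → ℂ) := conjCLE.contDiff
    rw [heq]
    fun_prop
  have hscalar : ContDiffOn ℝ ∞ (fun p => ((√(spinorNormSq p))⁻¹ : ℝ)) {p | p ≠ 0} :=
    (contDiff_spinorNormSq.contDiffOn.sqrt fun p hp => (spinorNormSq_pos hp).ne').inv
      fun p hp => (Real.sqrt_pos.2 (spinorNormSq_pos hp)).ne'
  refine (hscalar.smul hmatrix.contDiffOn).congr fun p _ => ?_
  rw [spinorFrame, ← ofReal_inv]
  rfl

end Spinor

section SpinorEquation

open Set Filter Topology Metric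
open scoped ComplexConjugate ContDiff

/-- The nonlinearity of the spinor equation `∂u/∂w = H ⟨u, u⋆⟩ J u⋆`, where `u⋆ = starSwap u` and
`J = spinorRot`. On `w = conj z` it is the Dirac equation of a surface of mean curvature `H`. -/
def spinorRHS (H : ℝ) (p : (ℂ × ℂ) × ℂ × ℂ) : ℂ × ℂ :=
  (H * spinorDet p.1 (spinorRot p.2)) • spinorRot p.2

/-- The diagonal data: at a real point it is the spinor of a surface with tangent vectors `e1` and
`cos θ • e2 + sin θ • e3`. -/
def spinorInitial (θ : ℂ → ℂ) (z : ℂ) : ℂ × ℂ := (cos (θ z / 2), -I * sin (θ z / 2))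

/-- `u` is a holomorphic spinor of mean curvature `H` with angle `θ` on the bidisc of radius `r`
about `(x, x)`. -/
structure IsSpinorSolution (H : ℝ) (θ : ℂ → ℂ) (u : ℂ → ℂ → ℂ × ℂ) (x r : ℝ) : Prop where
  differentiableOn : DifferentiableOn ℂ θ (ball (x : ℂ) r)
  conj_eq : ∀ z ∈ ball (x : ℂ) r, θ (conj z) = conj (θ z)
  separatelyHolomorphicOn : SeparatelyHolomorphicOn u (ball (x : ℂ) r) (ball (x : ℂ) r)
  hasDerivAt_right : ∀ z ∈ ball (x : ℂ) r, ∀ w ∈ ball (x : ℂ) r,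
    HasDerivAt (u z) (spinorRHS H (u z w, starSwap u z w)) w
  self_eq : ∀ z ∈ ball (x : ℂ) r, u z z = spinorInitial θ z

lemma contDiff_spinorRHS (H : ℝ) : ContDiff ℂ ∞ (spinorRHS H) := by
  unfold spinorRHS spinorDet spinorRot
  fun_prop

lemma hasDerivAt_spinorInitial {θ : ℂ → ℂ} {z θ' : ℂ} (hθ : HasDerivAt θ θ' z) :
    HasDerivAt (spinorInitial θ)
      ((θ' / 2) • (-sin (θ z / 2), -I * cos (θ z / 2))) z := by
  have hhalf := hθ.div_const 2
  refine ((hhalf.ccos).prodMk (hhalf.csin.const_mul (-I))).congr_deriv ?_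
  simp only [Prod.smul_mk, smul_eq_mul]
  ring_nf

lemma exists_isSpinorSolution (H : ℝ) {θ : ℂ → ℂ} {x R : ℝ} (hR : 0 < R)
    (hθ : DifferentiableOn ℂ θ (ball (x : ℂ) R))
    (hconj : ∀ z ∈ ball (x : ℂ) R, θ (conj z) = conj (θ z)) :
    ∃ r > 0, IsSpinorSolution H θ (picardLimit (spinorRHS H) (spinorInitial θ)) x r := by
  have hN : Differentiable ℂ (spinorRHS H) := (contDiff_spinorRHS H).differentiable (by simp)
  have hinit : DifferentiableOn ℂ (spinorInitial θ) (ball (x : ℂ) R) := fun z hz =>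
    (hasDerivAt_spinorInitial (hθ.hasDerivAt
      (isOpen_ball.mem_nhds hz))).differentiableAt.differentiableWithinAt
  obtain ⟨r, hr, hrR, δ, M, L, h⟩ := exists_isPicardBall ((contDiff_spinorRHS H).of_le
    (by exact_mod_cast le_top)) hR hinit
  exact ⟨r, hr,
    { differentiableOn := hθ.mono (ball_subset_ball hrR)
      conj_eq := fun z hz => hconj z (ball_subset_ball hrR hz)
      separatelyHolomorphicOn := h.separatelyHolomorphicOn_picardLimit hN
      hasDerivAt_right := fun z hz w hw => h.hasDerivAt_picardLimit hN hz hw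
      self_eq := fun z _ => picardLimit_self _ _ z }⟩

lemma spinorDet_comm_spinorRot (p q : ℂ × ℂ) :
    spinorDet p (spinorRot q) = spinorDet q (spinorRot p) := by
  simp only [spinorDet, spinorRot]
  ring

lemma star_spinorRHS (H : ℝ) (p q : ℂ × ℂ) :
    star (spinorRHS H (p, q)) = spinorRHS H (star p, star q) := by
  ext <;> simp [spinorRHS, spinorDet, spinorRot]

/-- Stated for the topology of the `linftyOp` norm, which is not reducibly the product topology. -/
instance : @ContinuousStar M2 PseudoMetricSpace.toUniformSpace.toTopologicalSpace _ :=
  ⟨continuous_id.matrix_conjTranspose⟩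

/-- The holomorphic extension of `∂f/∂z`, for the surface `f` with spinor `u`. -/
def spinorSquare (u : ℂ → ℂ → ℂ × ℂ) (z w : ℂ) : M2 := spinorProd (u z w) (u z w)

lemma hasDerivAt_spinorProd_self {u : ℂ → ℂ × ℂ} {u' : ℂ × ℂ} {z : ℂ} (hu : HasDerivAt u u' z) :
    HasDerivAt (fun s => spinorProd (u s) (u s)) ((2 : ℂ) • spinorProd (u z) u') z := by
  refine (hasDerivAt_spinorProd hu hu).congr_deriv ?_
  rw [spinorProd_comm u', two_smul]

lemma starSwap_spinorSquare (u : ℂ → ℂ → ℂ × ℂ) (z w : ℂ) : starSwap (spinorSquare u) z w =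
    spinorProd (spinorRot (starSwap u z w)) (spinorRot (starSwap u z w)) :=
  star_spinorProd _ _

lemma hasDerivAt_spinorRot {u : ℂ → ℂ × ℂ} {u' : ℂ × ℂ} {z : ℂ} (hu : HasDerivAt u u' z) :
    HasDerivAt (fun s => spinorRot (u s)) (spinorRot u') z :=
  (hasDerivAt_snd hu).neg.prodMk (hasDerivAt_fst hu)

lemma spinorRot_spinorRot (p : ℂ × ℂ) : spinorRot (spinorRot p) = -p := rfl

lemma spinorRot_smul (c : ℂ) (p : ℂ × ℂ) : spinorRot (c • p) = c • spinorRot p := by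
  simp [spinorRot]

lemma differentiable_spinorProd_self : Differentiable ℂ fun p : ℂ × ℂ => spinorProd p p := by
  unfold spinorProd
  fun_prop

/-- The immersion with spinor `u`, extended holomorphically, that maps `x` to `(2 * x) • e1`. -/
def spinorSurface (u : ℂ → ℂ → ℂ × ℂ) (z w : ℂ) : M2 :=
  (2 * z) • e1 + segmentIntegral (fun s => -starSwap (spinorSquare u) z s) z w

lemma spinorSurface_self (u : ℂ → ℂ → ℂ × ℂ) (z : ℂ) : spinorSurface u z z = (2 * z) • e1 := by
  rw [spinorSurface, segmentIntegral_self, add_zero]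

namespace IsSpinorSolution

variable {H : ℝ} {θ : ℂ → ℂ} {u : ℂ → ℂ → ℂ × ℂ} {x r : ℝ} {z w : ℂ}

lemma hasDerivAt_starSwap_left (h : IsSpinorSolution H θ u x r) (hz : z ∈ ball (x : ℂ) r)
    (hw : w ∈ ball (x : ℂ) r) :
    HasDerivAt (starSwap u · w) (spinorRHS H (starSwap u z w, u z w)) z := by
  have hderiv := _root_.hasDerivAt_starSwap_left
    (h.hasDerivAt_right _ (conj_mem_ball_ofReal hw) _ (conj_mem_ball_ofReal hz))
  rwa [star_spinorRHS, starSwap, conj_conj, conj_conj, star_star] at hderiv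

lemma separatelyHolomorphicOn_spinorSquare (h : IsSpinorSolution H θ u x r) :
    SeparatelyHolomorphicOn (spinorSquare u) (ball (x : ℂ) r) (ball (x : ℂ) r) :=
  h.separatelyHolomorphicOn.comp differentiable_spinorProd_self

lemma hasDerivAt_spinorSquare_right (h : IsSpinorSolution H θ u x r) (hz : z ∈ ball (x : ℂ) r)
    (hw : w ∈ ball (x : ℂ) r) :
    HasDerivAt (spinorSquare u z) ((2 * (H * spinorDet (u z w) (spinorRot (starSwap u z w)))) •
      spinorProd (u z w) (spinorRot (starSwap u z w))) w := by
  refine (hasDerivAt_spinorProd_self (h.hasDerivAt_right z hz w hw)).congr_deriv ?_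
  rw [spinorRHS, spinorProd_smul, smul_smul]

lemma deriv_spinorSquare_right (h : IsSpinorSolution H θ u x r) (hz : z ∈ ball (x : ℂ) r)
    (hw : w ∈ ball (x : ℂ) r) :
    deriv (spinorSquare u z) w = deriv (fun s => -starSwap (spinorSquare u) s w) z := by
  have hleft := (hasDerivAt_spinorProd_self
    (hasDerivAt_spinorRot (h.hasDerivAt_starSwap_left hz hw))).fun_neg
  simp only [← starSwap_spinorSquare] at hleft
  refine (h.hasDerivAt_spinorSquare_right hz hw).deriv.trans (.trans ?_ hleft.deriv.symm)
  rw [spinorRHS, spinorRot_smul, spinorRot_spinorRot, ← neg_one_smul ℂ (u z w), spinorProd_smul,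
    spinorProd_smul, spinorDet_comm_spinorRot (starSwap u z w),
    spinorProd_comm (spinorRot (starSwap u z w))]
  module

lemma starSwap_self (h : IsSpinorSolution H θ u x r) (hz : z ∈ ball (x : ℂ) r) :
    starSwap u z z = (cos (θ z / 2), I * sin (θ z / 2)) := by
  rw [starSwap, h.self_eq _ (conj_mem_ball_ofReal hz), spinorInitial, h.conj_eq z hz]
  ext <;> simp [← cos_conj, ← sin_conj, map_ofNat]

lemma spinorDet_spinorRot_starSwap_self (h : IsSpinorSolution H θ u x r)
    (hz : z ∈ ball (x : ℂ) r) : spinorDet (u z z) (spinorRot (starSwap u z z)) = 1 := by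
  rw [h.starSwap_self hz, h.self_eq z hz, spinorInitial, spinorDet, spinorRot]
  linear_combination cos_sq_add_sin_sq (θ z / 2) - sin (θ z / 2) ^ 2 * I_mul_I

lemma spinorSquare_sub_starSwap_self (h : IsSpinorSolution H θ u x r) (hz : z ∈ ball (x : ℂ) r) :
    spinorSquare u z z - starSwap (spinorSquare u) z z = (2 : ℂ) • e1 := by
  rw [starSwap_spinorSquare, spinorSquare, h.starSwap_self hz, h.self_eq z hz, spinorInitial]
  simp only [spinorProd, spinorRot]
  linear_combination (norm := module) cos_sq_add_sin_sq (θ z / 2) • ((2 : ℂ) • e1) -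
    I_mul_I • ((2 * sin (θ z / 2) ^ 2) • e1)

lemma separatelyHolomorphicOn_neg_starSwap_spinorSquare (h : IsSpinorSolution H θ u x r) :
    SeparatelyHolomorphicOn (fun z w => -starSwap (spinorSquare u) z w)
      (ball (x : ℂ) r) (ball (x : ℂ) r) :=
  h.separatelyHolomorphicOn_spinorSquare.starSwap.neg

lemma separatelyHolomorphicOn_spinorSurface (h : IsSpinorSolution H θ u x r) :
    SeparatelyHolomorphicOn (spinorSurface u) (ball (x : ℂ) r) (ball (x : ℂ) r) :=
  (SeparatelyHolomorphicOn.of_left (φ := fun z : ℂ => (2 * z) • e1) (by fun_prop)).add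
    h.separatelyHolomorphicOn_neg_starSwap_spinorSquare.segmentIntegral

lemma hasDerivAt_spinorSurface_right (h : IsSpinorSolution H θ u x r) (hz : z ∈ ball (x : ℂ) r)
    (hw : w ∈ ball (x : ℂ) r) :
    HasDerivAt (spinorSurface u z) (-starSwap (spinorSquare u) z w) w :=
  (hasDerivAt_segmentIntegral (h.separatelyHolomorphicOn_neg_starSwap_spinorSquare.right z hz)
    hz hw).const_add _

lemma hasDerivAt_spinorSurface_left (h : IsSpinorSolution H θ u x r) (hz : z ∈ ball (x : ℂ) r)
    (hw : w ∈ ball (x : ℂ) r) : HasDerivAt (spinorSurface u · w) (spinorSquare u z w) z := by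
  have hφ : ∀ z : ℂ, HasDerivAt (fun z : ℂ => (2 * z) • e1) ((2 : ℂ) • e1) z := fun z => by
    exact (((hasDerivAt_id z).const_mul 2).smul_const e1).congr_deriv (by rw [mul_one])
  refine h.separatelyHolomorphicOn_neg_starSwap_spinorSquare.hasDerivAt_add_segmentIntegral
    h.separatelyHolomorphicOn_spinorSquare
    (fun z _ => (hφ z).differentiableAt.differentiableWithinAt)
    (fun z hz w hw => h.deriv_spinorSquare_right hz hw) (fun z hz => ?_) hz hw
  refine .trans ?_ (hφ z).deriv.symm
  rw [← h.spinorSquare_sub_starSwap_self hz, sub_eq_add_neg]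

lemma starSwap_spinorSurface (h : IsSpinorSolution H θ u x r) (hz : z ∈ ball (x : ℂ) r)
    (hw : w ∈ ball (x : ℂ) r) : starSwap (spinorSurface u) z w = -spinorSurface u z w := by
  have hhol := h.separatelyHolomorphicOn_spinorSurface
  refine hhol.starSwap.eq_of_deriv_right_eq_of_eq_diag hhol.neg hz
    (fun w hw => ?_) ?_ hw
  · have hstar := hasDerivAt_starSwap_right (h.hasDerivAt_spinorSurface_left
      (conj_mem_ball_ofReal hw) (conj_mem_ball_ofReal hz))
    refine hstar.deriv.trans (.trans ?_ (h.hasDerivAt_spinorSurface_right hz hw).neg.deriv.symm)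
    rw [neg_neg, starSwap]
  · rw [starSwap, spinorSurface_self, spinorSurface_self]
    ext i j
    fin_cases i <;> fin_cases j <;> simp [e1, star_apply]

lemma trace_spinorSurface (h : IsSpinorSolution H θ u x r) (hz : z ∈ ball (x : ℂ) r)
    (hw : w ∈ ball (x : ℂ) r) : (spinorSurface u z w).trace = 0 := by
  let T : M2 →L[ℂ] ℂ := (traceLinearMap (Fin 2) ℂ ℂ).toContinuousLinearMap
  refine (h.separatelyHolomorphicOn_spinorSurface.comp T.differentiable)
    |>.eq_of_deriv_right_eq_of_eq_diag (.of_left (differentiableOn_const 0)) hz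
    (fun w hw => ?_) ?_ hw
  · refine (T.hasFDerivAt.comp_hasDerivAt w
      (h.hasDerivAt_spinorSurface_right hz hw)).deriv.trans (.trans ?_ (deriv_const w 0).symm)
    change trace (-starSwap (spinorSquare u) z w) = 0
    rw [starSwap_spinorSquare, trace_neg, trace_spinorProd, neg_zero]
  · simp [T, spinorSurface_self, e1, trace_fin_two]

lemma hasDerivAt_spinorDet_deriv_left (h : IsSpinorSolution H θ u x r) (hz : z ∈ ball (x : ℂ) r)
    (hw : w ∈ ball (x : ℂ) r) :
    HasDerivAt (fun w => spinorDet (u z w) (deriv (u · w) z)) 0 w := by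
  have hhol := h.separatelyHolomorphicOn
  have huz := hhol.hasDerivAt_left isOpen_ball hz hw
  have huw := h.hasDerivAt_right z hz w hw
  have hrot := hasDerivAt_spinorRot (h.hasDerivAt_starSwap_left hz hw)
  have hmixed : HasDerivAt (fun w => deriv (u · w) z)
      (deriv (fun s => spinorRHS H (u s w, starSwap u s w)) z) w := by
    refine ((hhol.deriv_left isOpen_ball isOpen_ball).hasDerivAt_right isOpen_ball hz
      hw).congr_deriv ?_
    rw [hhol.deriv_deriv_comm isOpen_ball isOpen_ball hz hw]
    refine EventuallyEq.deriv_eq ?_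
    filter_upwards [isOpen_ball.mem_nhds hz] with s hs using (h.hasDerivAt_right s hs w hw).deriv
  have hRHS := ((hasDerivAt_spinorDet huz hrot).const_mul (H : ℂ)).fun_smul hrot
  refine (hasDerivAt_spinorDet huw hmixed).congr_deriv ?_
  simp only [spinorRHS] at hRHS ⊢
  rw [hRHS.deriv]
  simp only [spinorDet, spinorRot, Prod.fst_add, Prod.snd_add, smul_eq_mul, Prod.smul_mk]
  ring

lemma spinorDet_deriv_left_self (h : IsSpinorSolution H θ u x r) (hz : z ∈ ball (x : ℂ) r) :
    spinorDet (u z z) (deriv (u · z) z) = -I * deriv θ z / 2 - H := by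
  have hdiag : deriv (u · z) z + deriv (u z) z =
      (deriv θ z / 2) • (-sin (θ z / 2), -I * cos (θ z / 2)) := by
    refine (h.separatelyHolomorphicOn.hasDerivAt_diag isOpen_ball isOpen_ball hz hz).unique ?_
    refine (hasDerivAt_spinorInitial
      (h.differentiableOn.hasDerivAt (isOpen_ball.mem_nhds hz))).congr_of_eventuallyEq ?_
    filter_upwards [isOpen_ball.mem_nhds hz] with s hs using h.self_eq s hs
  rw [(h.hasDerivAt_right z hz z hz).deriv, spinorRHS, h.spinorDet_spinorRot_starSwap_self hz,
    mul_one] at hdiag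
  have hdet := h.spinorDet_spinorRot_starSwap_self hz
  rw [h.self_eq z hz, spinorInitial, spinorDet] at hdet
  rw [eq_sub_of_add_eq hdiag, h.self_eq z hz, spinorInitial, spinorDet]
  simp only [Prod.fst_sub, Prod.snd_sub, Prod.smul_fst, Prod.smul_snd, smul_eq_mul]
  linear_combination -(H : ℂ) * hdet - I * deriv θ z / 2 * cos_sq_add_sin_sq (θ z / 2)

lemma spinorDet_deriv_left (h : IsSpinorSolution H θ u x r) (hz : z ∈ ball (x : ℂ) r)
    (hw : w ∈ ball (x : ℂ) r) :
    spinorDet (u z w) (deriv (u · w) z) = -I * deriv θ z / 2 - H := by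
  have hW : SeparatelyHolomorphicOn (fun z w => spinorDet (u z w) (deriv (u · w) z))
      (ball (x : ℂ) r) (ball (x : ℂ) r) :=
    (h.separatelyHolomorphicOn.prodMk (h.separatelyHolomorphicOn.deriv_left isOpen_ball
      isOpen_ball)).comp (N := fun p => spinorDet p.1 p.2) (by unfold spinorDet; fun_prop)
  refine hW.eq_of_deriv_right_eq_of_eq_diag (v := fun z _ => -I * deriv θ z / 2 - H)
    (.of_left ?_) hz (fun w hw => ?_) (h.spinorDet_deriv_left_self hz) hw
  · exact (((h.differentiableOn.deriv isOpen_ball).const_mul _).div_const 2).sub_const _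
  · rw [(h.hasDerivAt_spinorDet_deriv_left hz hw).deriv, deriv_const]

lemma px_depolarize_spinorSurface (h : IsSpinorSolution H θ u x r) (hz : z ∈ ball (x : ℂ) r) :
    px (depolarize (spinorSurface u)) z = (2 : ℂ) •
      (spinorMatrix (depolarize u z) * e1 * (spinorMatrix (depolarize u z))ᴴ) := by
  have hz' := conj_mem_ball_ofReal hz
  refine (px_depolarize h.separatelyHolomorphicOn_spinorSurface hz).trans (.trans (congrArg₂ _
    (h.hasDerivAt_spinorSurface_left hz hz').deriv
    (h.hasDerivAt_spinorSurface_right hz hz').deriv) ?_)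
  rw [spinorMatrix_mul_e1_mul, starSwap_conj, sub_eq_add_neg]
  rfl

lemma py_depolarize_spinorSurface (h : IsSpinorSolution H θ u x r) (hz : z ∈ ball (x : ℂ) r) :
    py (depolarize (spinorSurface u)) z = (2 : ℂ) •
      (spinorMatrix (depolarize u z) * e2 * (spinorMatrix (depolarize u z))ᴴ) := by
  have hz' := conj_mem_ball_ofReal hz
  refine (py_depolarize h.separatelyHolomorphicOn_spinorSurface hz).trans (.trans
    (congrArg₂ (fun X Y : M2 => I • (X - Y)) (h.hasDerivAt_spinorSurface_left hz hz').deriv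
    (h.hasDerivAt_spinorSurface_right hz hz').deriv) ?_)
  rw [spinorMatrix_mul_e2_mul, starSwap_conj, sub_neg_eq_add]
  rfl

lemma deriv_spinorSurface_left (h : IsSpinorSolution H θ u x r) (hz : z ∈ ball (x : ℂ) r)
    (hw : w ∈ ball (x : ℂ) r) : deriv (spinorSurface u · w) z = spinorSquare u z w :=
  (h.hasDerivAt_spinorSurface_left hz hw).deriv

lemma laplacian_spinorSurface (h : IsSpinorSolution H θ u x r) (hz : z ∈ ball (x : ℂ) r) :
    px (px (depolarize (spinorSurface u))) z + py (py (depolarize (spinorSurface u))) z =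
      (8 * H * spinorNormSq (depolarize u z) : ℂ) •
        spinorProd (depolarize u z) (spinorRot (star (depolarize u z))) := by
  have hz' := conj_mem_ball_ofReal hz
  have hderiv := h.hasDerivAt_spinorSquare_right hz hz'
  rw [starSwap_conj] at hderiv
  have heq : (fun w => deriv (spinorSurface u · w) z) =ᶠ[𝓝 (conj z)] spinorSquare u z := by
    filter_upwards [isOpen_ball.mem_nhds hz'] with w hw using h.deriv_spinorSurface_left hz hw
  refine (px_px_add_py_py_depolarize h.separatelyHolomorphicOn_spinorSurface hz).trans
    (.trans (congrArg _ (hderiv.congr_of_eventuallyEq heq).deriv) ?_)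
  rw [smul_smul, depolarize, ← spinorDet_spinorRot_star]
  ring_nf

lemma dz_dz_depolarize_spinorSurface (h : IsSpinorSolution H θ u x r)
    (hz : z ∈ ball (x : ℂ) r) : dz (dz (depolarize (spinorSurface u))) z =
      (2 : ℂ) • spinorProd (depolarize u z) (deriv (u · (conj z)) z) := by
  have hz' := conj_mem_ball_ofReal hz
  have heq : (fun s => deriv (spinorSurface u · (conj z)) s) =ᶠ[𝓝 z]
      (spinorSquare u · (conj z)) := by
    filter_upwards [isOpen_ball.mem_nhds hz] with s hs using h.deriv_spinorSurface_left hs hz'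
  have hderiv := hasDerivAt_spinorProd_self
    (h.separatelyHolomorphicOn.hasDerivAt_left isOpen_ball hz hz')
  exact (dz_dz_depolarize h.separatelyHolomorphicOn_spinorSurface hz).trans
    (hderiv.congr_of_eventuallyEq heq).deriv

end IsSpinorSolution

end SpinorEquation

section SpinorSurface

open Set Filter Topology Metric
open scoped ComplexConjugate ContDiff

namespace IsSpinorSolution

variable {H : ℝ} {θ : ℂ → ℂ} {u : ℂ → ℂ → ℂ × ℂ} {x r : ℝ} {z : ℂ}

lemma skewHermitian_and_trace_eq_zero (h : IsSpinorSolution H θ u x r)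
    (hz : z ∈ ball (x : ℂ) r) :
    (depolarize (spinorSurface u) z)ᴴ = -depolarize (spinorSurface u) z ∧
      (depolarize (spinorSurface u) z).trace = 0 := by
  have hz' := conj_mem_ball_ofReal hz
  exact ⟨(starSwap_conj _ z).symm.trans (h.starSwap_spinorSurface hz hz'),
    h.trace_spinorSurface hz hz'⟩

lemma conformal (h : IsSpinorSolution H θ u x r) (hz : z ∈ ball (x : ℂ) r) :
    ip (px (depolarize (spinorSurface u)) z) (px (depolarize (spinorSurface u)) z) =
        4 * (spinorNormSq (depolarize u z) : ℂ) ^ 2 ∧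
      ip (py (depolarize (spinorSurface u)) z) (py (depolarize (spinorSurface u)) z) =
        4 * (spinorNormSq (depolarize u z) : ℂ) ^ 2 ∧
      ip (px (depolarize (spinorSurface u)) z) (py (depolarize (spinorSurface u)) z) = 0 := by
  have he₁ : ip e1 e1 = 1 := by norm_num [ip, e1, trace_fin_two]
  have he₂ : ip e2 e2 = 1 := by norm_num [ip, e2, trace_fin_two]
  have he₁₂ : ip e1 e2 = 0 := by simp [ip, e1, e2, trace_fin_two]
  rw [h.px_depolarize_spinorSurface hz, h.py_depolarize_spinorSurface hz]
  simp only [ip_smul_smul, ip_spinorMatrix_mul_mul, he₁, he₂, he₁₂]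
  norm_num

lemma spinorFrame_mul_e1_mul_inv (h : IsSpinorSolution H θ u x r) (hz : z ∈ ball (x : ℂ) r)
    (hne : depolarize u z ≠ 0) :
    spinorFrame (depolarize u z) * e1 * (spinorFrame (depolarize u z))⁻¹ =
      (2 * spinorNormSq (depolarize u z) : ℂ)⁻¹ • px (depolarize (spinorSurface u)) z := by
  rw [spinorFrame_mul_mul_inv hne, h.px_depolarize_spinorSurface hz, smul_smul, mul_inv,
    mul_right_comm, inv_mul_cancel₀ two_ne_zero, one_mul]

lemma spinorFrame_mul_e2_mul_inv (h : IsSpinorSolution H θ u x r) (hz : z ∈ ball (x : ℂ) r)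
    (hne : depolarize u z ≠ 0) :
    spinorFrame (depolarize u z) * e2 * (spinorFrame (depolarize u z))⁻¹ =
      (2 * spinorNormSq (depolarize u z) : ℂ)⁻¹ • py (depolarize (spinorSurface u)) z := by
  rw [spinorFrame_mul_mul_inv hne, h.py_depolarize_spinorSurface hz, smul_smul, mul_inv,
    mul_right_comm, inv_mul_cancel₀ two_ne_zero, one_mul]

lemma ip_laplacian_normal (h : IsSpinorSolution H θ u x r) (hz : z ∈ ball (x : ℂ) r)
    (hne : depolarize u z ≠ 0) :
    ip (px (px (depolarize (spinorSurface u))) z + py (py (depolarize (spinorSurface u))) z)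
      (spinorFrame (depolarize u z) * e3 * (spinorFrame (depolarize u z))⁻¹) =
      8 * (spinorNormSq (depolarize u z) : ℂ) ^ 2 * H := by
  have hpos : (spinorNormSq (depolarize u z) : ℂ) ≠ 0 :=
    ofReal_ne_zero.2 (spinorNormSq_pos hne).ne'
  rw [h.laplacian_spinorSurface hz, spinorFrame_mul_e3_mul_inv hne, ip_smul_smul,
    ip_spinorProd_spinorRot_star, spinorDet_spinorRot_star]
  field_simp

lemma ip_normal_dz_dz (h : IsSpinorSolution H θ u x r) (hz : z ∈ ball (x : ℂ) r)
    (hne : depolarize u z ≠ 0) :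
    ip (spinorFrame (depolarize u z) * e3 * (spinorFrame (depolarize u z))⁻¹)
      (dz (dz (depolarize (spinorSurface u))) z) = -I * deriv θ z - 2 * H := by
  have hpos : (spinorNormSq (depolarize u z) : ℂ) ≠ 0 :=
    ofReal_ne_zero.2 (spinorNormSq_pos hne).ne'
  have hwronskian : spinorDet (depolarize u z) (deriv (u · (conj z)) z) = -I * deriv θ z / 2 - H :=
    h.spinorDet_deriv_left hz (conj_mem_ball_ofReal hz)
  rw [h.dz_dz_depolarize_spinorSurface hz, spinorFrame_mul_e3_mul_inv hne, ip_smul_smul,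
    ip_spinorProd_spinorRot_star, hwronskian]
  field_simp

lemma depolarize_ofReal (h : IsSpinorSolution H θ u x r) (hr : 0 < r) :
    depolarize u x = spinorInitial θ x := by
  rw [depolarize, conj_ofReal, h.self_eq _ (mem_ball_self hr)]

lemma py_ofReal (h : IsSpinorSolution H θ u x r) (hr : 0 < r) :
    py (depolarize (spinorSurface u)) x = (2 : ℂ) • (cos (θ x) • e2 + sin (θ x) • e3) := by
  have hx : (x : ℂ) ∈ ball (x : ℂ) r := mem_ball_self hr
  have hstar : star (depolarize u x) = (cos (θ x / 2), I * sin (θ x / 2)) := by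
    rw [depolarize, ← starSwap_conj, conj_ofReal, h.starSwap_self hx]
  have hcos : cos (θ x) = cos (θ x / 2) ^ 2 - sin (θ x / 2) ^ 2 := by
    rw [← cos_two_mul', mul_div_cancel₀ _ two_ne_zero]
  have hsin : sin (θ x) = 2 * sin (θ x / 2) * cos (θ x / 2) := by
    rw [← sin_two_mul, mul_div_cancel₀ _ two_ne_zero]
  rw [h.py_depolarize_spinorSurface hx, spinorMatrix_mul_e2_mul, star_spinorProd, hstar,
    h.depolarize_ofReal hr, spinorInitial, hcos, hsin]
  simp only [spinorProd, spinorRot]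
  linear_combination (norm := module) I_mul_I • ((-2 * cos (θ x / 2) ^ 2 -
    2 * (I * I - 1) * sin (θ x / 2) ^ 2) • e2 - (4 * cos (θ x / 2) * sin (θ x / 2)) • e3)

end IsSpinorSolution

end SpinorSurface

section SpinorDomain

open Set Filter Topology Metric
open scoped ComplexConjugate ContDiff

/-- The points near the real axis where `u` solves the spinor equation and does not vanish, so that
the surface built from `u` is immersed there. -/
def spinorDomain (H : ℝ) (θ : ℂ → ℂ) (u : ℂ → ℂ → ℂ × ℂ) : Set ℂ :=
  {z | ∃ x r : ℝ, IsSpinorSolution H θ u x r ∧ z ∈ ball (x : ℂ) r ∧ depolarize u z ≠ 0}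

/-- The exponent of the conformal factor of the surface built from `u`. Where the spinor vanishes,
the logarithm takes the junk value `0`. -/
def conformalExponent (u : ℂ → ℂ → ℂ × ℂ) (z : ℂ) : ℝ := Real.log (spinorNormSq (depolarize u z))

variable {H : ℝ} {θ : ℂ → ℂ} {u : ℂ → ℂ → ℂ × ℂ} {x r : ℝ} {z : ℂ}

lemma exp_conformalExponent (hne : depolarize u z ≠ 0) :
    Real.exp (conformalExponent u z) = spinorNormSq (depolarize u z) :=
  Real.exp_log (spinorNormSq_pos hne)

lemma exp_two_mul_conformalExponent (hne : depolarize u z ≠ 0) :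
    Real.exp (2 * conformalExponent u z) = spinorNormSq (depolarize u z) ^ 2 := by
  rw [two_mul, Real.exp_add, exp_conformalExponent hne, sq]

lemma spinorInitial_ne_zero (θ : ℂ → ℂ) (z : ℂ) : spinorInitial θ z ≠ 0 := by
  intro h
  obtain ⟨hcos, hsin⟩ : cos (θ z / 2) = 0 ∧ sin (θ z / 2) = 0 := by
    simpa [spinorInitial] using h
  simpa [hcos, hsin] using sin_sq_add_cos_sq (θ z / 2)

lemma IsSpinorSolution.ofReal_mem_spinorDomain (h : IsSpinorSolution H θ u x r) (hr : 0 < r) :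
    (x : ℂ) ∈ spinorDomain H θ u :=
  ⟨x, r, h, mem_ball_self hr, h.depolarize_ofReal hr ▸ spinorInitial_ne_zero θ x⟩

lemma contDiffAt_depolarize_of_mem_spinorDomain (hz : z ∈ spinorDomain H θ u) :
    ContDiffAt ℝ ∞ (depolarize u) z := by
  obtain ⟨x, r, h, hzr, -⟩ := hz
  exact (contDiffOn_depolarize h.separatelyHolomorphicOn).contDiffAt (isOpen_ball.mem_nhds hzr)

lemma depolarize_ne_zero_of_mem_spinorDomain (hz : z ∈ spinorDomain H θ u) :
    depolarize u z ≠ 0 := by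
  obtain ⟨_, _, _, _, hne⟩ := hz
  exact hne

lemma isOpen_spinorDomain (H : ℝ) (θ : ℂ → ℂ) (u : ℂ → ℂ → ℂ × ℂ) :
    IsOpen (spinorDomain H θ u) := by
  refine isOpen_iff_mem_nhds.2 fun z hz => ?_
  have hne := (contDiffAt_depolarize_of_mem_spinorDomain hz).continuousAt.eventually_ne
    (depolarize_ne_zero_of_mem_spinorDomain hz)
  obtain ⟨x, r, h, hzr, -⟩ := hz
  filter_upwards [hne, isOpen_ball.mem_nhds hzr] with w hw hwr using ⟨x, r, h, hwr, hw⟩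

lemma contDiffOn_depolarize_spinorSurface (H : ℝ) (θ : ℂ → ℂ) (u : ℂ → ℂ → ℂ × ℂ) :
    ContDiffOn ℝ ∞ (depolarize (spinorSurface u)) (spinorDomain H θ u) := by
  rintro z ⟨x, r, h, hzr, -⟩
  exact ((contDiffOn_depolarize h.separatelyHolomorphicOn_spinorSurface).contDiffAt
    (isOpen_ball.mem_nhds hzr)).contDiffWithinAt

lemma contDiffOn_conformalExponent (H : ℝ) (θ : ℂ → ℂ) (u : ℂ → ℂ → ℂ × ℂ) :
    ContDiffOn ℝ ∞ (conformalExponent u) (spinorDomain H θ u) := fun z hz =>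
  ((contDiff_spinorNormSq.contDiffAt.comp z (contDiffAt_depolarize_of_mem_spinorDomain hz)).log
    (spinorNormSq_pos (depolarize_ne_zero_of_mem_spinorDomain hz)).ne').contDiffWithinAt

lemma contDiffOn_spinorFrame_depolarize (H : ℝ) (θ : ℂ → ℂ) (u : ℂ → ℂ → ℂ × ℂ) :
    ContDiffOn ℝ ∞ (fun z => spinorFrame (depolarize u z)) (spinorDomain H θ u) :=
  contDiffOn_spinorFrame.comp
    (fun _ hz => (contDiffAt_depolarize_of_mem_spinorDomain hz).contDiffWithinAt)
    fun _ hz => depolarize_ne_zero_of_mem_spinorDomain hz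

lemma differentiableOn_deriv_spinorDomain (H : ℝ) (θ : ℂ → ℂ) (u : ℂ → ℂ → ℂ × ℂ) :
    DifferentiableOn ℂ (deriv θ) (spinorDomain H θ u) := by
  rintro z ⟨x, r, h, hzr, -⟩
  exact ((h.differentiableOn.deriv isOpen_ball).differentiableAt
    (isOpen_ball.mem_nhds hzr)).differentiableWithinAt

lemma depolarize_spinorSurface_ofReal (u : ℂ → ℂ → ℂ × ℂ) (x : ℝ) :
    depolarize (spinorSurface u) x = ((2 * x : ℝ) : ℂ) • e1 := by
  rw [depolarize, conj_ofReal, spinorSurface_self, ofReal_mul, ofReal_ofNat]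

lemma exists_isSpinorSolution_of_analyticOnNhd {J : Set ℝ} {θ₀ : ℝ → ℝ}
    (hθ₀ : AnalyticOnNhd ℝ θ₀ J) (H : ℝ) :
    ∃ (θ : ℂ → ℂ) (u : ℂ → ℂ → ℂ × ℂ), ∀ x ∈ J, θ x = θ₀ x ∧ deriv θ x = deriv θ₀ x ∧
      ∃ r > 0, IsSpinorSolution H θ u x r := by
  obtain ⟨θ, hθ⟩ := exists_differentiableOn_balls_eq_ofReal (f := fun t => (θ₀ t : ℂ))
    fun x hx => (ofRealCLM.analyticAt (θ₀ x)).comp (hθ₀ x hx)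
  refine ⟨θ, picardLimit (spinorRHS H) (spinorInitial θ), fun x hx => ?_⟩
  obtain ⟨R, hR, hdiff, hreal⟩ := hθ x hx
  obtain ⟨r, hr, hsol⟩ := exists_isSpinorSolution H hR hdiff
    fun z hz => conj_eq_of_eq_ofReal hR hdiff hreal hz
  exact ⟨hreal x (mem_ball_self hR), deriv_eq_of_eq_ofReal hR hdiff hreal, r, hr, hsol⟩

end SpinorDomain

theorem cmc_containing_line_existence_general {J : Set ℝ} {θ₀ : ℝ → ℝ}
    (hθ₀ : AnalyticOnNhd ℝ θ₀ J) (H : ℝ) :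
    ∃ S : Set ℂ, IsOpen S ∧ (∀ x ∈ J, (x : ℂ) ∈ S) ∧
      ∃ θx : ℂ → ℂ, DifferentiableOn ℂ θx S ∧
        (∀ x ∈ J, θx (x : ℂ) = ((deriv θ₀ x : ℝ) : ℂ)) ∧
        ∃ f : ℂ → M2, ∃ u : ℂ → ℝ, ∃ F : ℂ → M2,
          ContDiffOn ℝ (⊤ : ℕ∞) f S ∧
          ContDiffOn ℝ (⊤ : ℕ∞) u S ∧
          ContDiffOn ℝ (⊤ : ℕ∞) F S ∧
          (∀ z ∈ S, (f z)ᴴ = -(f z) ∧ (f z).trace = 0) ∧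
          (∀ z ∈ S,
            ip (px f z) (px f z) = ((4 * Real.exp (2 * u z) : ℝ) : ℂ) ∧
            ip (py f z) (py f z) = ((4 * Real.exp (2 * u z) : ℝ) : ℂ) ∧
            ip (px f z) (py f z) = 0) ∧
          (∀ z ∈ S, (F z)ᴴ * F z = 1 ∧ (F z).det = 1 ∧
            F z * e1 * (F z)⁻¹ = (((2 * Real.exp (u z))⁻¹ : ℝ) : ℂ) • px f z ∧
            F z * e2 * (F z)⁻¹ = (((2 * Real.exp (u z))⁻¹ : ℝ) : ℂ) • py f z ∧
            ip (px (px f) z + py (py f) z) (F z * e3 * (F z)⁻¹)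
              = ((8 * Real.exp (2 * u z) * H : ℝ) : ℂ)) ∧
          (∀ x ∈ J, f (x : ℂ) = ((2 * x : ℝ) : ℂ) • e1) ∧
          (∀ x ∈ J, ∃ c : ℝ, 0 < c ∧ py f (x : ℂ) =
            (c : ℂ) • (((Real.cos (θ₀ x) : ℝ) : ℂ) • e2 + ((Real.sin (θ₀ x) : ℝ) : ℂ) • e3)) ∧
          (∀ z ∈ S, ip (F z * e3 * (F z)⁻¹) (dz (dz f) z)
            = -Complex.I * θx z - 2 * (H : ℂ)) := by
  obtain ⟨θ, u, hθu⟩ := exists_isSpinorSolution_of_analyticOnNhd hθ₀ H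
  refine ⟨spinorDomain H θ u, isOpen_spinorDomain H θ u, fun x hx => ?_, deriv θ,
    differentiableOn_deriv_spinorDomain H θ u, fun x hx => (hθu x hx).2.1,
    depolarize (spinorSurface u), conformalExponent u, fun z => spinorFrame (depolarize u z),
    contDiffOn_depolarize_spinorSurface H θ u, contDiffOn_conformalExponent H θ u,
    contDiffOn_spinorFrame_depolarize H θ u, ?_, ?_, ?_,
    fun x _ => depolarize_spinorSurface_ofReal u x, fun x hx => ⟨2, two_pos, ?_⟩, ?_⟩
  · obtain ⟨-, -, r, hr, h⟩ := hθu x hx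
    exact h.ofReal_mem_spinorDomain hr
  · rintro z ⟨x, r, h, hz, -⟩
    exact h.skewHermitian_and_trace_eq_zero hz
  · rintro z ⟨x, r, h, hz, hne⟩
    simpa [exp_two_mul_conformalExponent hne] using h.conformal hz
  · rintro z ⟨x, r, h, hz, hne⟩
    rw [exp_two_mul_conformalExponent hne, exp_conformalExponent hne]
    push_cast
    exact ⟨conjTranspose_spinorFrame_mul_self hne, det_spinorFrame hne,
      h.spinorFrame_mul_e1_mul_inv hz hne, h.spinorFrame_mul_e2_mul_inv hz hne,
      h.ip_laplacian_normal hz hne⟩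
  · obtain ⟨hθx, -, r, hr, h⟩ := hθu x hx
    rw [ofReal_ofNat, h.py_ofReal hr, hθx, ofReal_cos, ofReal_sin]
  · rintro z ⟨x, r, h, hz, hne⟩
    exact h.ip_normal_dz_dz hz hne

/-- CMC surfaces containing a line segment (existence): given a real
analytic function `θ₀` on an open interval `J` with `θ₀(x₀) = 0` and `H ≠ 0`, there is a
conformal CMC `H` immersion mapping `(x,0) ↦ (2x,0,0)`, whose normalized `y`-tangent
along the segment is `cos θ₀ · e₂ + sin θ₀ · e₃`, and with Hopf differential
coefficient `Q = -i θ̌_x - 2H`. -/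
theorem cmc_containing_line_existence
    (J : Set ℝ) (hJo : IsOpen J) (hJc : J.OrdConnected)
    (x₀ : ℝ) (hx₀ : x₀ ∈ J)
    (θ₀ : ℝ → ℝ) (hθ₀ : AnalyticOnNhd ℝ θ₀ J) (hθ₀0 : θ₀ x₀ = 0)
    (H : ℝ) (hH : H ≠ 0) :
    ∃ S : Set ℂ, IsOpen S ∧ (∀ x ∈ J, (x : ℂ) ∈ S) ∧
      ∃ θx : ℂ → ℂ, DifferentiableOn ℂ θx S ∧
        (∀ x ∈ J, θx (x : ℂ) = ((deriv θ₀ x : ℝ) : ℂ)) ∧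
        ∃ f : ℂ → M2, ∃ u : ℂ → ℝ, ∃ F : ℂ → M2,
          ContDiffOn ℝ (⊤ : ℕ∞) f S ∧
          ContDiffOn ℝ (⊤ : ℕ∞) u S ∧
          ContDiffOn ℝ (⊤ : ℕ∞) F S ∧
          (∀ z ∈ S, (f z)ᴴ = -(f z) ∧ (f z).trace = 0) ∧
          (∀ z ∈ S,
            ip (px f z) (px f z) = ((4 * Real.exp (2 * u z) : ℝ) : ℂ) ∧
            ip (py f z) (py f z) = ((4 * Real.exp (2 * u z) : ℝ) : ℂ) ∧
            ip (px f z) (py f z) = 0) ∧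
          (∀ z ∈ S, (F z)ᴴ * F z = 1 ∧ (F z).det = 1 ∧
            F z * e1 * (F z)⁻¹ = (((2 * Real.exp (u z))⁻¹ : ℝ) : ℂ) • px f z ∧
            F z * e2 * (F z)⁻¹ = (((2 * Real.exp (u z))⁻¹ : ℝ) : ℂ) • py f z ∧
            ip (px (px f) z + py (py f) z) (F z * e3 * (F z)⁻¹)
              = ((8 * Real.exp (2 * u z) * H : ℝ) : ℂ)) ∧
          (∀ x ∈ J, f (x : ℂ) = ((2 * x : ℝ) : ℂ) • e1) ∧
          (∀ x ∈ J, ∃ c : ℝ, 0 < c ∧ py f (x : ℂ) =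
            (c : ℂ) • (((Real.cos (θ₀ x) : ℝ) : ℂ) • e2 + ((Real.sin (θ₀ x) : ℝ) : ℂ) • e3)) ∧
          (∀ z ∈ S, ip (F z * e3 * (F z)⁻¹) (dz (dz f) z)
            = -Complex.I * θx z - 2 * (H : ℂ)) :=
  cmc_containing_line_existence_general hθ₀ H
end
end
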